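/- arXiv:1504.00547 — 3 statements merged into one kernel-verified Lean document; each statement's English description precedes it below -/
import Mathlib

section
/- Let (d,n,r) be one of the triples (6,2,9), (4,3,8), (3,5,9). Then for a generic choice of points p₁,…,p_r ∈ ℂ^{n+1}, there exist infinitely many pairwise non-proportional nonzero vectors q ∈ ℂ^{n+1} such that every homogeneous polynomial of degree d in ℂ[x₀,…,xₙ] that is singular at all of p₁,…,p_r is also singular at q. That is, in these three exceptional cases the common singular locus of the degree-d hypersurfaces singular at the r general points is positive-dimensional (it is an elliptic normal curve), so in particular it contains infinitely many projective points. -/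
/-!
The proof determines, for generic points, all forms of the given degree that are singular at them,
and reads off a curve of common singular points.

*Counting forms.* The space of forms of degree `d` singular at the points has dimension at most
`k` (with `k = 1, 3, 2` in the three cases) as soon as some `k` coefficients determine such a form.
This is an open condition on the points, so it is enough to verify it for one configuration with
integral coordinates; the verification is an explicit left inverse, up to a scalar, of the matrix
of the vanishing derivatives, restricted to the monomials not excluded by the coordinate points
(`sextic_unique`, `quartic_unique`,
`cubic_unique`, `Generic.singular_unique`). Any `k` independent forms singular at the points then
span the space (`eq_sum_of_unique`), and every point where they are all singular belongs to the
required set.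

*Plane sextics, nine points.* A cubic `g` passes through the points, the only sextic is `g ^ 2`,
and it is singular along `g = 0`.

*Quartic surfaces, eight points.* Two quadrics `g₀, g₁` pass through the points, the quartics are
spanned by `g₀ ^ 2, g₀ g₁, g₁ ^ 2`, and they are singular along `g₀ = g₁ = 0`. Projection from one
of the eight points turns this curve into a plane cubic
(`exists_common_zeros_quadrics`).

*Cubics in five-dimensional projective space, nine points.* There is a `3 × 3` matrix `M` of linear
forms that has rank at most one at the nine points. To find it, take the first six points as a
basis, let `u, v, w` be the coordinate vectors of the others and `cᵢ = (uᵢ, vᵢ, wᵢ)`, and put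
`M x = ∑ yᵢ cᵢ bᵢᵀ` with `y` the coordinates of `x`. At the basis points `M` has rank one. At `u`,
`v`, `w` it has rank one as soon as `∑ uᵢ vᵢ bᵢ = ∑ uᵢ wᵢ bᵢ = ∑ vᵢ wᵢ bᵢ = 0`, which is solved by
Cramer's rule (`cramerRow`). The matrices `M x` form the six-dimensional
space orthogonal to three matrices `B₀, B₁, B₂` (`relation`), so the rank-one matrices among them
correspond to pairs `(a, b)` with `aᵀ B_z b = 0` for all `z`; the possible `a` are the zeros of a
determinant of degree three, an elliptic curve. Two cubics are singular at each point where `M` has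
rank one: the determinant of `M`, and `tr (N₀ N₁ N₂) - tr (N₀ N₂ N₁)` with `N_z = B_zᵀ M`, because
`N_z = (B_zᵀ a) bᵀ` has its column orthogonal to the common row `b`. They are independent, hence
span all cubics singular at the nine points (`manyCommonSingularPoints_of_pencil`). All open
conditions used are checked at one configuration of points.
-/

open MvPolynomial

noncomputable section

/-- The linear form `a₀x₀ + ⋯ + aₙxₙ` with coefficient vector `a`. -/
def linForm {n : ℕ} (a : Fin (n + 1) → ℂ) : MvPolynomial (Fin (n + 1)) ℂ :=
  ∑ i, C (a i) * X i

/-- Evaluation at the point `v`, as a linear map. -/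
def evalAt {n : ℕ} (v : Fin (n + 1) → ℂ) : MvPolynomial (Fin (n + 1)) ℂ →ₗ[ℂ] ℂ :=
  (aeval v).toLinearMap

/-- The linear map `f ↦ (∂f/∂xᵢ)(p)`. -/
def evalPDeriv {n : ℕ} (p : Fin (n + 1) → ℂ) (i : Fin (n + 1)) :
    MvPolynomial (Fin (n + 1)) ℂ →ₗ[ℂ] ℂ :=
  evalAt p ∘ₗ (pderiv i).toLinearMap

/-- `f` is singular at `p`: all partial derivatives of `f` vanish at `p`. -/
def SingularAt {n : ℕ} (f : MvPolynomial (Fin (n + 1)) ℂ) (p : Fin (n + 1) → ℂ) : Prop :=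
  ∀ i, evalPDeriv p i f = 0

/-- The space of homogeneous degree-`d` polynomials in `n+1` variables that vanish at every
point of `V` and are singular at every point of `S`. -/
def SingSpace (n : ℕ) (d : ℕ) (S V : Set (Fin (n + 1) → ℂ)) :
    Submodule ℂ (MvPolynomial (Fin (n + 1)) ℂ) :=
  homogeneousSubmodule (Fin (n + 1)) ℂ d ⊓ (⨅ v ∈ V, LinearMap.ker (evalAt v)) ⊓
    ⨅ p ∈ S, ⨅ i, LinearMap.ker (evalPDeriv p i)

/-- A property of parameters `t : ι → ℂ` holds for a generic choice of `t` if there is a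
nonzero polynomial `F` in the variables `ι` such that the property holds whenever
`F(t) ≠ 0`. -/
def Generic {ι : Type} [Fintype ι] (P : (ι → ℂ) → Prop) : Prop :=
  ∃ F : MvPolynomial ι ℂ, F ≠ 0 ∧ ∀ t : ι → ℂ, eval t F ≠ 0 → P t

end

open scoped Matrix

/-! ### Polynomial functions of the parameters and generic properties -/

/-- A complex function of the parameters `t` which is given by a polynomial. -/
def PolyFun {ι : Type} (φ : (ι → ℂ) → ℂ) : Prop :=
  ∃ F : MvPolynomial ι ℂ, ∀ t, eval t F = φ t

namespace PolyFun

variable {ι : Type}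

theorem const (c : ℂ) : PolyFun fun _ : ι → ℂ => c := ⟨C c, fun t => by simp⟩

theorem coord (i : ι) : PolyFun fun t : ι → ℂ => t i := ⟨X i, fun t => by simp⟩

theorem add {φ ψ : (ι → ℂ) → ℂ} (hφ : PolyFun φ) (hψ : PolyFun ψ) :
    PolyFun fun t => φ t + ψ t := by
  obtain ⟨F, hF⟩ := hφ
  obtain ⟨G, hG⟩ := hψ
  exact ⟨F + G, fun t => by simp [hF, hG]⟩

theorem mul {φ ψ : (ι → ℂ) → ℂ} (hφ : PolyFun φ) (hψ : PolyFun ψ) :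
    PolyFun fun t => φ t * ψ t := by
  obtain ⟨F, hF⟩ := hφ
  obtain ⟨G, hG⟩ := hψ
  exact ⟨F * G, fun t => by simp [hF, hG]⟩

theorem neg {φ : (ι → ℂ) → ℂ} (hφ : PolyFun φ) : PolyFun fun t => - φ t := by
  simpa using (const (-1)).mul hφ

theorem sub {φ ψ : (ι → ℂ) → ℂ} (hφ : PolyFun φ) (hψ : PolyFun ψ) :
    PolyFun fun t => φ t - ψ t := by
  simpa [sub_eq_add_neg] using hφ.add hψ.neg

theorem sum {α : Type} (s : Finset α) {φ : α → (ι → ℂ) → ℂ} (h : ∀ a, PolyFun (φ a)) :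
    PolyFun fun t => ∑ a ∈ s, φ a t := by
  choose F hF using h
  exact ⟨∑ a ∈ s, F a, fun t => by simp [hF]⟩

theorem prod {α : Type} (s : Finset α) {φ : α → (ι → ℂ) → ℂ} (h : ∀ a, PolyFun (φ a)) :
    PolyFun fun t => ∏ a ∈ s, φ a t := by
  choose F hF using h
  exact ⟨∏ a ∈ s, F a, fun t => by simp [hF]⟩

theorem det {α : Type} [Fintype α] [DecidableEq α] {N : (ι → ℂ) → Matrix α α ℂ}
    (h : ∀ a b, PolyFun fun t => N t a b) : PolyFun fun t => (N t).det := by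
  simp only [Matrix.det_apply']
  exact sum _ fun σ => (const _).mul (prod _ fun a => h _ _)

theorem matMul {α β γ : Type} [Fintype β] {M : (ι → ℂ) → Matrix α β ℂ}
    {N : (ι → ℂ) → Matrix β γ ℂ} (hM : ∀ a b, PolyFun fun t => M t a b)
    (hN : ∀ a b, PolyFun fun t => N t a b) (a : α) (c : γ) :
    PolyFun fun t => (M t * N t) a c := by
  simp only [Matrix.mul_apply]
  exact sum _ fun b => (hM _ _).mul (hN _ _)

theorem adjugate {α : Type} [Fintype α] [DecidableEq α] {N : (ι → ℂ) → Matrix α α ℂ}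
    (h : ∀ a b, PolyFun fun t => N t a b) (a b : α) :
    PolyFun fun t => (N t).adjugate a b := by
  simp only [Matrix.adjugate_apply]
  refine det fun c d => ?_
  by_cases hc : c = b
  · subst hc
    simpa using const _
  · simpa [Matrix.updateRow_ne hc] using h c d

/-- A fixed form evaluated at one of the parameter points. -/
theorem evalPoint {r n : ℕ} (i : Fin r) (G : MvPolynomial (Fin n) ℂ) :
    PolyFun fun t : Fin r × Fin n → ℂ => eval (fun j => t (i, j)) G :=
  ⟨rename (fun j => (i, j)) G, fun t => by rw [eval_rename]; rfl⟩

end PolyFun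

theorem Generic.of_polyFun {ι : Type} [Fintype ι] {P : (ι → ℂ) → Prop} {φ : (ι → ℂ) → ℂ}
    (hφ : PolyFun φ) (t₀ : ι → ℂ) (h₀ : φ t₀ ≠ 0) (h : ∀ t, φ t ≠ 0 → P t) : Generic P := by
  obtain ⟨F, hF⟩ := hφ
  refine ⟨F, ?_, fun t ht => h t (by rwa [← hF])⟩
  rintro rfl
  exact h₀ (by rw [← hF]; simp)

theorem Generic.and {ι : Type} [Fintype ι] {P P' : (ι → ℂ) → Prop} (h : Generic P)
    (h' : Generic P') : Generic fun t => P t ∧ P' t := by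
  obtain ⟨F, hF, hP⟩ := h
  obtain ⟨F', hF', hP'⟩ := h'
  refine ⟨F * F', mul_ne_zero hF hF', fun t ht => ?_⟩
  rw [map_mul] at ht
  exact ⟨hP t (left_ne_zero_of_mul ht), hP' t (right_ne_zero_of_mul ht)⟩

theorem Generic.mono {ι : Type} [Fintype ι] {P P' : (ι → ℂ) → Prop} (h : Generic P)
    (hPP' : ∀ t, P t → P' t) : Generic P' := by
  obtain ⟨F, hF, hP⟩ := h
  exact ⟨F, hF, fun t ht => hPP' t (hP t ht)⟩

/-- Injectivity of a matrix whose entries are polynomials in the parameters is an open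
condition: a left inverse `K` at `t₀` makes `det (K * N t)` a nonzero polynomial. -/
theorem Generic.injective {ι α β : Type} [Fintype ι] [Fintype α] [Fintype β]
    [DecidableEq β] {N : (ι → ℂ) → Matrix α β ℂ} (hN : ∀ a b, PolyFun fun t => N t a b)
    (t₀ : ι → ℂ) (h₀ : ∀ x, N t₀ *ᵥ x = 0 → x = 0) :
    Generic fun t => ∀ x, N t *ᵥ x = 0 → x = 0 := by
  classical
  obtain ⟨g, hg⟩ := LinearMap.exists_leftInverse_of_injective (N t₀).mulVecLin
    (LinearMap.ker_eq_bot'.2 h₀)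
  have hK : LinearMap.toMatrix' g * N t₀ = 1 := by
    have := congrArg LinearMap.toMatrix' hg
    rwa [LinearMap.toMatrix'_comp, LinearMap.toMatrix'_id, ← Matrix.toLin'_apply',
      LinearMap.toMatrix'_toLin'] at this
  refine Generic.of_polyFun (φ := fun t => (LinearMap.toMatrix' g * N t).det) (t₀ := t₀)
    (PolyFun.det (PolyFun.matMul (fun _ _ => PolyFun.const _) hN)) (by simp [hK]) ?_
  intro t ht x hx
  apply Matrix.eq_zero_of_mulVec_eq_zero ht
  rw [← Matrix.mulVec_mulVec, hx, Matrix.mulVec_zero]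

/-! ### Linear conditions on forms of a fixed degree -/

/-- The exponent vectors of the monomials of degree `d` in `n` variables. -/
abbrev Exps (n d : ℕ) := {m : Fin n → ℕ // m ∈ Finset.Nat.antidiagonalTuple n d}

/-- The exponent vector `m` as the finitely supported function indexing a monomial. -/
noncomputable abbrev toExp {n : ℕ} (m : Fin n → ℕ) : Fin n →₀ ℕ := Finsupp.equivFunOnFinite.symm m

/-- The form of degree `d` with prescribed coefficients. -/
noncomputable def formOf (n d : ℕ) : (Exps n d → ℂ) →ₗ[ℂ] MvPolynomial (Fin n) ℂ :=
  ∑ m : Exps n d, (monomial (toExp m.1)).comp (LinearMap.proj m)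

theorem formOf_apply {n d : ℕ} (a : Exps n d → ℂ) :
    formOf n d a = ∑ m : Exps n d, monomial (toExp m.1) (a m) := by
  simp [formOf]

theorem formOf_isHomogeneous {n d : ℕ} (a : Exps n d → ℂ) : (formOf n d a).IsHomogeneous d := by
  rw [formOf_apply]
  refine IsHomogeneous.sum _ _ _ fun m _ => isHomogeneous_monomial _ ?_
  have := Finset.Nat.mem_antidiagonalTuple.1 m.2
  simpa [Finsupp.degree_eq_sum] using this

theorem coeff_formOf {n d : ℕ} (a : Exps n d → ℂ) (m : Exps n d) :
    coeff (toExp m.1) (formOf n d a) = a m := by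
  rw [formOf_apply, coeff_sum, Finset.sum_eq_single m]
  · simp
  · intro b _ hb
    rw [coeff_monomial, if_neg]
    exact fun h => hb (Subtype.ext (Finsupp.equivFunOnFinite.symm.injective h))
  · simp

theorem eq_formOf {n d : ℕ} {f : MvPolynomial (Fin n) ℂ} (hf : f.IsHomogeneous d) :
    f = formOf n d fun m => coeff (toExp m.1) f := by
  ext m
  by_cases hm : m.degree = d
  · have hm' : (m : Fin n → ℕ) ∈ Finset.Nat.antidiagonalTuple n d := by
      rw [Finset.Nat.mem_antidiagonalTuple, ← hm, Finsupp.degree_eq_sum]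
    have := coeff_formOf (fun m : Exps n d => coeff (toExp m.1) f) ⟨m, hm'⟩
    have h2 : toExp (m : Fin n → ℕ) = m := by ext; simp
    simp only [h2] at this
    exact this.symm
  · rw [hf.coeff_eq_zero hm, (formOf_isHomogeneous _).coeff_eq_zero hm]

/-- If linear conditions depending polynomially on `t` leave no nonzero form of degree `d` for
one value of `t`, they leave none for generic `t`. -/
theorem Generic.no_form {ι α : Type} [Fintype ι] [Fintype α] {n : ℕ} (d : ℕ)
    (Φ : (ι → ℂ) → α → MvPolynomial (Fin n) ℂ →ₗ[ℂ] ℂ)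
    (hΦ : ∀ a (G : MvPolynomial (Fin n) ℂ), PolyFun fun t => Φ t a G) (t₀ : ι → ℂ)
    (h₀ : ∀ f : MvPolynomial (Fin n) ℂ, f.IsHomogeneous d → (∀ a, Φ t₀ a f = 0) → f = 0) :
    Generic fun t => ∀ f : MvPolynomial (Fin n) ℂ, f.IsHomogeneous d →
      (∀ a, Φ t a f = 0) → f = 0 := by
  let N : (ι → ℂ) → Matrix α (Exps n d) ℂ := fun t =>
    Matrix.of fun a m => Φ t a (monomial (toExp m.1) 1)
  have hN : ∀ t x a, (N t *ᵥ x) a = Φ t a (formOf n d x) := by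
    intro t x a
    rw [formOf_apply, map_sum, Matrix.mulVec, dotProduct]
    refine Finset.sum_congr rfl fun m _ => ?_
    have : (monomial (toExp m.1) (x m) : MvPolynomial (Fin n) ℂ) =
        x m • (monomial (toExp m.1) 1 : MvPolynomial (Fin n) ℂ) := by
      rw [smul_monomial, smul_eq_mul, mul_one]
    rw [this, map_smul, smul_eq_mul, mul_comm]
    rfl
  refine (Generic.injective (N := N) (fun a m => hΦ a _) t₀ ?_).mono ?_
  · intro x hx
    have h := h₀ _ (formOf_isHomogeneous x) fun a => by rw [← hN, hx]; rfl
    ext m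
    rw [← coeff_formOf x m, h]
    simp
  · intro t ht f hf h
    have := ht (fun m => coeff (toExp m.1) f) (funext fun a => by
      rw [hN, ← eq_formOf hf, h]; rfl)
    rw [eq_formOf hf, this, map_zero]

theorem evalPDeriv_apply {n : ℕ} (p : Fin (n + 1) → ℂ) (j : Fin (n + 1))
    (f : MvPolynomial (Fin (n + 1)) ℂ) : evalPDeriv p j f = eval p (pderiv j f) := by
  simp [evalPDeriv, evalAt, aeval_eq_eval]

/-- Upper semicontinuity of the dimension of the space of singular forms: the bound is
witnessed by coefficients which determine such a form. -/
theorem Generic.singular_unique {d n r k : ℕ} (e : Fin k → Fin (n + 1) →₀ ℕ)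
    (p₀ : Fin r → Fin (n + 1) → ℂ)
    (h₀ : ∀ f : MvPolynomial (Fin (n + 1)) ℂ, f.IsHomogeneous d → (∀ i, SingularAt f (p₀ i)) →
      (∀ l, coeff (e l) f = 0) → f = 0) :
    Generic fun t : Fin r × Fin (n + 1) → ℂ => ∀ f : MvPolynomial (Fin (n + 1)) ℂ,
      f.IsHomogeneous d → (∀ i, SingularAt f (fun j => t (i, j))) →
      (∀ l, coeff (e l) f = 0) → f = 0 := by
  let Φ : (Fin r × Fin (n + 1) → ℂ) → (Fin r × Fin (n + 1)) ⊕ Fin k →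
      MvPolynomial (Fin (n + 1)) ℂ →ₗ[ℂ] ℂ := fun t =>
    Sum.elim (fun ij => evalPDeriv (fun j => t (ij.1, j)) ij.2) (fun l => lcoeff ℂ (e l))
  have hΦ : ∀ a (G : MvPolynomial (Fin (n + 1)) ℂ), PolyFun fun t => Φ t a G := by
    rintro (⟨i, j⟩ | l) G
    · simp only [Φ, Sum.elim_inl, evalPDeriv_apply]
      exact PolyFun.evalPoint i _
    · exact PolyFun.const _
  refine (Generic.no_form d Φ hΦ (fun ij => p₀ ij.1 ij.2) ?_).mono ?_
  · intro f hf h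
    exact h₀ f hf (fun i j => h (Sum.inl (i, j))) fun l => h (Sum.inr l)
  · intro t ht f hf h1 h2
    refine ht f hf ?_
    rintro (⟨i, j⟩ | l)
    · exact h1 i j
    · exact h2 l

/-- If `k` coefficients determine the forms of the subspace `V`, then `k` independent
elements of `V` span it. -/
theorem mem_span_of_unique {E : Type} [AddCommGroup E] [Module ℂ E] {k : ℕ} (V : Submodule ℂ E)
    (ℓ : Fin k → E →ₗ[ℂ] ℂ) (hℓ : ∀ f ∈ V, (∀ l, ℓ l f = 0) → f = 0) (g : Fin k → E)
    (hgV : ∀ l, g l ∈ V) (hg : LinearIndependent ℂ g) {f : E} (hf : f ∈ V) :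
    ∃ a : Fin k → ℂ, f = ∑ l, a l • g l := by
  let L : (Fin k → ℂ) →ₗ[ℂ] E := Fintype.linearCombination ℂ g
  have hLV : ∀ a, L a ∈ V := fun a => by
    rw [Fintype.linearCombination_apply]
    exact V.sum_mem fun l _ => V.smul_mem _ (hgV l)
  have hinj : Function.Injective (LinearMap.pi ℓ ∘ₗ L) := by
    rw [← LinearMap.ker_eq_bot, LinearMap.ker_eq_bot']
    intro a ha
    have h0 := hℓ _ (hLV a) fun l => congrFun ha l
    rw [Fintype.linearCombination_apply] at h0
    exact funext (Fintype.linearIndependent_iff.1 hg a h0)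
  obtain ⟨a, ha⟩ := LinearMap.injective_iff_surjective.1 hinj (LinearMap.pi ℓ f)
  refine ⟨a, sub_eq_zero.1 (hℓ _ (V.sub_mem hf ?_) fun l => ?_)⟩
  · exact V.sum_mem fun l _ => V.smul_mem _ (hgV l)
  · have := congrFun ha l
    simp only [LinearMap.comp_apply, LinearMap.pi_apply] at this
    rw [map_sub, ← this, Fintype.linearCombination_apply, sub_self]

/-! ### Forms singular at explicit integral points -/

/-- The value at `p` of the `j`-th partial derivative of the monomial with exponents `m`. -/
def monDeriv {R : Type} [CommRing R] {n : ℕ} (p : Fin n → R) (j : Fin n) (m : Fin n → ℕ) : R :=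
  m j * ∏ i, p i ^ (m i - if i = j then 1 else 0)

theorem evalPDeriv_eq_sum {n d : ℕ} {f : MvPolynomial (Fin (n + 1)) ℂ} (hf : f.IsHomogeneous d)
    (p : Fin (n + 1) → ℂ) (j : Fin (n + 1)) :
    evalPDeriv p j f = ∑ m ∈ Finset.Nat.antidiagonalTuple (n + 1) d,
      coeff (toExp m) f * monDeriv p j m := by
  rw [← Finset.sum_coe_sort]
  conv_lhs => rw [eq_formOf hf, formOf_apply, evalPDeriv_apply]
  rw [map_sum, map_sum]
  refine Finset.sum_congr rfl fun m _ => ?_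
  rw [pderiv_monomial, eval_monomial, Finsupp.prod_fintype _ _ (by simp), monDeriv, ← mul_assoc]
  congr 1
  refine Finset.prod_congr rfl fun i _ => ?_
  simp [Finsupp.single_apply, eq_comm]

/-- A form of degree `d` singular at the coordinate point `eᵢ` involves no monomial divisible
by the `(d - 1)`-st power of `xᵢ`. -/
theorem coeff_eq_zero_of_singularAt_single {n d : ℕ} {f : MvPolynomial (Fin (n + 1)) ℂ}
    (hf : f.IsHomogeneous d) (i : Fin (n + 1)) (hs : SingularAt f (Pi.single i 1))
    {m : Fin (n + 1) → ℕ} (hm : m ∈ Finset.Nat.antidiagonalTuple (n + 1) d) (hd : 2 ≤ d)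
    (hmi : d < m i + 2) : coeff (toExp m) f = 0 := by
  have hsum : ∀ m' : Fin (n + 1) → ℕ, m' ∈ Finset.Nat.antidiagonalTuple (n + 1) d →
      m' i + ∑ k ∈ Finset.univ.erase i, m' k = d := fun m' hm' => by
    rw [Finset.add_sum_erase _ _ (Finset.mem_univ i)]
    exact Finset.Nat.mem_antidiagonalTuple.1 hm'
  -- the variable `j` is the cofactor of the power of `xᵢ` in the monomial
  obtain ⟨j, hj0, hjk⟩ : ∃ j, m j ≠ 0 ∧ ∀ k, k ≠ i → m k = if k = j then 1 else 0 := by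
    have h1 := hsum m hm
    by_cases h : ∃ j, j ≠ i ∧ m j ≠ 0
    · obtain ⟨j, hji, hj⟩ := h
      have h2 := Finset.add_sum_erase (Finset.univ.erase i) m
        (Finset.mem_erase.2 ⟨hji, Finset.mem_univ j⟩)
      refine ⟨j, hj, fun k hk => ?_⟩
      have h4 := Finset.single_le_sum (f := m) (fun _ _ => Nat.zero_le _)
        (Finset.mem_erase.2 ⟨hk, Finset.mem_univ k⟩)
      split_ifs with hkj
      · rw [← hkj] at hj
        omega
      · have h3 := Finset.single_le_sum (f := m) (fun _ _ => Nat.zero_le _)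
          (Finset.mem_erase.2 ⟨hkj, Finset.mem_erase.2 ⟨hk, Finset.mem_univ k⟩⟩)
        omega
    · push Not at h
      refine ⟨i, by omega, fun k hk => ?_⟩
      rw [h k hk, if_neg hk]
  have h := hs j
  rw [evalPDeriv_eq_sum hf, Finset.sum_eq_single m] at h
  · refine (mul_eq_zero.1 h).resolve_right ?_
    rw [monDeriv]
    refine mul_ne_zero (Nat.cast_ne_zero.2 hj0) (Finset.prod_ne_zero_iff.2 fun k _ => ?_)
    by_cases hk : k = i
    · subst hk; simp
    · rw [hjk k hk]; simp
  · intro m' hm' hne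
    refine mul_eq_zero_of_right _ ?_
    by_contra hcon
    rw [monDeriv] at hcon
    have hmj : m' j ≠ 0 := fun h0 => hcon (by simp [h0])
    have hall : ∀ k, k ≠ i → m' k ≤ if k = j then 1 else 0 := by
      intro k hk
      by_contra hlt
      refine right_ne_zero_of_mul hcon (Finset.prod_eq_zero (Finset.mem_univ k) ?_)
      rw [Pi.single_eq_of_ne hk, zero_pow]
      omega
    have heq : ∀ k, k ≠ i → m' k = m k := by
      intro k hk
      rw [hjk k hk]
      have := hall k hk
      split_ifs at this ⊢ with hkj
      · subst hkj; omega
      · omega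
    apply hne
    have h1 := hsum m hm
    have h2 := hsum m' hm'
    have h3 : ∑ k ∈ Finset.univ.erase i, m' k = ∑ k ∈ Finset.univ.erase i, m k :=
      Finset.sum_congr rfl fun k hk => heq k (Finset.ne_of_mem_erase hk)
    ext k
    by_cases hk : k = i
    · subst hk; omega
    · exact heq k hk
  · exact fun h => absurd hm h

/-- Certificate for the uniqueness of a form singular at the integral points `P`, which
include the coordinate points. The table `T` lists the monomials not excluded by the coordinate
points, and the rows of `K` combine the derivative conditions at the points `P (φ c)` so as to
isolate each coefficient outside `E`, up to the factor `D`. -/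
theorem form_eq_zero_of_certificate {n d r s c : ℕ} (hd : 2 ≤ d) (P : Fin r → Fin (n + 1) → ℤ)
    (T : Fin s → Fin (n + 1) → ℕ) (E : Finset (Fin s)) (φ : Fin c → Fin r)
    (K : Fin s → Fin c → Fin (n + 1) → ℤ) (D : ℤ) (hD : D ≠ 0)
    (hP : ∀ i, ∃ l, P l = Pi.single i 1)
    (hT : (Finset.Nat.antidiagonalTuple (n + 1) d).filter (fun m => ∀ i, m i + 2 ≤ d) =
      Finset.univ.image T)
    (hTi : Function.Injective T)
    (hK : ∀ l, l ∉ E → ∀ l', l' ∉ E →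
      ∑ a, ∑ j, K l a j * monDeriv (P (φ a)) j (T l') = if l = l' then D else 0)
    {f : MvPolynomial (Fin (n + 1)) ℂ} (hf : f.IsHomogeneous d)
    (hs : ∀ i, SingularAt f fun j => (P i j : ℂ)) (hE : ∀ l ∈ E, coeff (toExp (T l)) f = 0) :
    f = 0 := by
  have hout : ∀ m ∈ Finset.Nat.antidiagonalTuple (n + 1) d, m ∉ Finset.univ.image T →
      coeff (toExp m) f = 0 := by
    intro m hm hmT
    rw [← hT, Finset.mem_filter, not_and] at hmT
    have := hmT hm
    push Not at this
    obtain ⟨i, hi⟩ := this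
    obtain ⟨l, hl⟩ := hP i
    refine coeff_eq_zero_of_singularAt_single hf i ?_ hm hd hi
    have := hs l
    rw [hl] at this
    convert this using 1
    ext j
    by_cases hj : j = i
    · subst hj; simp
    · simp [Pi.single_eq_of_ne hj]
  have hsub : Finset.univ.image T ⊆ Finset.Nat.antidiagonalTuple (n + 1) d := by
    rw [← hT]; exact Finset.filter_subset _ _
  have hrow : ∀ a j, ∑ l, coeff (toExp (T l)) f * ((monDeriv (P (φ a)) j (T l) : ℤ) : ℂ) = 0 := by
    intro a j
    have h := hs (φ a) j
    rw [evalPDeriv_eq_sum hf, ← Finset.sum_subset hsub (fun m hm hmT => by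
      rw [hout m hm hmT, zero_mul]), Finset.sum_image (fun _ _ _ _ h => hTi h)] at h
    rw [← h]
    refine Finset.sum_congr rfl fun l _ => ?_
    simp [monDeriv]
  have hcoef : ∀ l, coeff (toExp (T l)) f = 0 := by
    intro l
    by_cases hl : l ∈ E
    · exact hE l hl
    have h0 : ∑ a, ∑ j, (K l a j : ℂ) *
        ∑ l', coeff (toExp (T l')) f * ((monDeriv (P (φ a)) j (T l') : ℤ) : ℂ) = 0 := by
      simp [hrow]
    have h1 : ∑ a, ∑ j, (K l a j : ℂ) *
        ∑ l', coeff (toExp (T l')) f * ((monDeriv (P (φ a)) j (T l') : ℤ) : ℂ) =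
        ∑ l', coeff (toExp (T l')) f *
          ((∑ a, ∑ j, K l a j * monDeriv (P (φ a)) j (T l') : ℤ) : ℂ) := by
      push_cast
      simp only [Finset.mul_sum]
      calc _ = _ := Finset.sum_congr rfl fun a _ => Finset.sum_comm
        _ = _ := Finset.sum_comm
        _ = _ := Finset.sum_congr rfl fun l' _ => Finset.sum_congr rfl fun a _ =>
          Finset.sum_congr rfl fun j _ => by ring
    rw [h1, Finset.sum_eq_single l] at h0
    · rw [hK l hl l hl, if_pos rfl] at h0
      exact (mul_eq_zero.1 h0).resolve_right (by exact_mod_cast hD)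
    · intro l' _ hne
      by_cases hl' : l' ∈ E
      · rw [hE l' hl', zero_mul]
      · rw [hK l hl l' hl', if_neg (Ne.symm hne)]; simp
    · simp
  rw [eq_formOf hf, show (fun m : Exps (n + 1) d => coeff (toExp m.1) f) = 0 from ?_, map_zero]
  funext m
  by_cases hm : m.1 ∈ Finset.univ.image T
  · obtain ⟨l, _, hl⟩ := Finset.mem_image.1 hm
    rw [← hl]
    exact hcoef l
  · exact hout _ m.2 hm

/-! ### Explicit point configurations -/

/-- Points at which the singular plane sextics are determined by the coefficients of the monomials
in `sexticFree`. -/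
def sexticPoints : Fin 9 → Fin 3 → ℤ :=
  ![![1, 0, 0], ![0, 1, 0], ![0, 0, 1], ![1, 1, 1], ![2, 1, 1], ![-2, 1, -1], ![1, 0, 1], ![0, 2,
    -1], ![-1, -1, 0]]

/-- The monomials of degree 6 not divisible by any `(d - 1)`-st power of a variable. -/
def sexticMonomials : Fin 19 → Fin 3 → ℕ :=
  ![![4, 2, 0], ![4, 1, 1], ![4, 0, 2], ![3, 3, 0], ![3, 2, 1], ![3, 1, 2], ![3, 0, 3], ![2, 4,
    0], ![2, 3, 1], ![2, 2, 2], ![2, 1, 3], ![2, 0, 4], ![1, 4, 1], ![1, 3, 2], ![1, 2, 3], ![1,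
    1, 4], ![0, 4, 2], ![0, 3, 3], ![0, 2, 4]]

/-- Indices of the monomials whose coefficients are prescribed. -/
def sexticFree : Fin 1 → Fin 19 :=
  ![18]

/-- 384 times a left inverse of the matrix of derivative conditions at the points other than the
coordinate points. -/
def sexticInverse : Fin 19 → Fin 6 → Fin 3 → ℤ :=
  ![![![192, -32, 64], ![2, 3, -51], ![2, 5, 13], ![320, -96, -64], ![-8, 8, 5], ![128, 32, 192]],
    ![![192, 64, 0], ![12, -70, -10], ![12, 6, -10], ![-192, 0, 0], ![16, 8, 8], ![-320, 64,
    -320]], ![![64, 32, 0], ![18, -13, -19], ![-14, -11, -3], ![-128, 96, 64], ![-8, -2, -2],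
    ![192, -96, 128]], ![![-384, 64, -128], ![-4, -6, 102], ![-4, -10, -26], ![-640, 192, 128],
    ![16, -16, -10], ![-512, 64, -384]], ![![-1088, 64, -256], ![-12, 6, 282], ![-12, -6, -38],
    ![-1472, 0, 256], ![48, -40, -28], ![-1088, 64, -1216]], ![![-576, -320, 128], ![-12, 326,
    -70], ![-12, -6, 58], ![1600, 0, -128], ![-80, -32, -32], ![1984, -320, 1856]], ![![-128, -64,
    0], ![-36, 26, 38], ![28, 22, 6], ![512, -192, -256], ![16, 4, 4], ![-384, 192, -256]],
    ![![192, -32, 64], ![2, 3, -51], ![2, 5, 13], ![320, -96, -64], ![-8, 8, 5], ![320, -160,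
    192]], ![![1152, -256, 384], ![0, 64, -320], ![0, 0, 64], ![1920, -384, -384], ![-64, 64, 40],
    ![1664, -256, 1280]], ![![1536, 0, 192], ![12, -6, -378], ![12, 6, 6], ![1536, 768, -192],
    ![-48, 72, 60], ![1536, 0, 1728]], ![![384, 512, -384], ![0, -512, 304], ![0, 0, -80],
    ![-3456, -384, 384], ![128, 40, 40], ![-3712, 512, -3328]], ![![64, 32, 0], ![18, -13, -19],
    ![-14, -11, -3], ![-320, 96, 256], ![-8, -2, -2], ![192, -96, 128]], ![![-256, 128, -128],
    ![0, 0, 48], ![0, 0, -16], ![-256, 384, 128], ![0, -32, -20], ![-256, 128, -128]], ![![-768,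
    256, -256], ![0, -64, 224], ![0, 0, -32], ![-1280, 0, 256], ![64, -80, -56], ![-1280, 256,
    -1024]], ![![-512, -128, 128], ![0, 0, 144], ![0, 0, 16], ![-512, -1152, -128], ![0, -40,
    -40], ![-512, -128, -640]], ![![0, -256, 256], ![0, 256, -224], ![0, 0, 32], ![2048, 768,
    -256], ![-64, -16, -16], ![2048, -256, 1792]], ![![0, 0, 0], ![0, 0, 0], ![0, 0, 0], ![0, 0,
    0], ![0, 24, 12], ![0, 0, 0]], ![![0, 0, 0], ![0, 0, 0], ![0, 0, 0], ![0, 0, 0], ![0, 32, 32],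
    ![0, 0, 0]], ![![0, 0, 0], ![0, 0, 0], ![0, 0, 0], ![0, 0, 0], ![0, 0, 0], ![0, 0, 0]]]

theorem sextic_unique (f : MvPolynomial (Fin 3) ℂ) (hf : f.IsHomogeneous 6)
    (hs : ∀ i, SingularAt f fun j => (sexticPoints i j : ℂ))
    (hE : ∀ l, coeff (toExp (sexticMonomials (sexticFree l))) f = 0) : f = 0 := by
  refine form_eq_zero_of_certificate (by norm_num) sexticPoints sexticMonomials
    (Finset.univ.image sexticFree) (Fin.natAdd 3) sexticInverse 384 (by norm_num)
    ?_ ?_ ?_ ?_ hf hs ?_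
  · decide +kernel
  · decide +kernel
  · decide +kernel
  · decide +kernel
  · intro l hl
    obtain ⟨k, _, rfl⟩ := Finset.mem_image.1 hl
    exact hE k

/-- Points at which the singular quartic surfaces are determined by the coefficients of the monomials
in `quarticFree`. -/
def quarticPoints : Fin 8 → Fin 4 → ℤ :=
  ![![1, 0, 0, 0], ![0, 1, 0, 0], ![0, 0, 1, 0], ![0, 0, 0, 1], ![1, 1, 1, 1], ![0, 1, 2, 1],
    ![-1, -1, 1, 0], ![-1, 0, 1, 1]]

/-- The monomials of degree 4 not divisible by any `(d - 1)`-st power of a variable. -/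
def quarticMonomials : Fin 19 → Fin 4 → ℕ :=
  ![![2, 2, 0, 0], ![2, 1, 1, 0], ![2, 1, 0, 1], ![2, 0, 2, 0], ![2, 0, 1, 1], ![2, 0, 0, 2], ![1,
    2, 1, 0], ![1, 2, 0, 1], ![1, 1, 2, 0], ![1, 1, 1, 1], ![1, 1, 0, 2], ![1, 0, 2, 1], ![1, 0,
    1, 2], ![0, 2, 2, 0], ![0, 2, 1, 1], ![0, 2, 0, 2], ![0, 1, 2, 1], ![0, 1, 1, 2], ![0, 0, 2,
    2]]

/-- Indices of the monomials whose coefficients are prescribed. -/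
def quarticFree : Fin 3 → Fin 19 :=
  ![15, 17, 18]

/-- 16 times a left inverse of the matrix of derivative conditions at the points other than the
coordinate points. -/
def quarticInverse : Fin 19 → Fin 4 → Fin 4 → ℤ :=
  ![![![8, 0, -8, -8], ![0, 1, 2, 5], ![0, 0, 0, 0], ![-8, -8, -8, -8]], ![![4, 4, 4, -4], ![-8,
    -4, 0, 4], ![8, 0, 8, 0], ![-4, -8, -12, -4]], ![![0, -8, 0, 8], ![8, 6, -4, -6], ![-8, 0, -8,
    0], ![24, 16, 24, 16]], ![![-4, 4, 12, 4], ![-8, -4, 0, -4], ![-4, 4, 4, 0], ![4, 0, -4, 4]],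
    ![![4, -12, -12, -4], ![16, 12, -8, 4], ![4, -12, -20, -8], ![-8, 0, 24, -8]], ![![0, 8, 0,
    0], ![-8, -8, 8, 0], ![0, 8, 16, 8], ![-8, 0, -24, 0]], ![![12, -4, -20, -12], ![8, 6, 4, 6],
    ![0, 8, 0, 0], ![-12, -8, -4, -12]], ![![-24, 16, 24, 16], ![-8, -12, 0, -12], ![0, -8, 0, 0],
    ![0, 16, 0, 8]], ![![12, -4, -20, -12], ![8, 4, 0, 12], ![8, 0, 8, 0], ![-12, -8, -4, -12]],
    ![![-32, 16, 48, 32], ![-16, -20, 8, -28], ![-16, 0, 0, 16], ![40, 32, 8, 40]], ![![24, -16,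
    -24, -16], ![8, 16, -8, 16], ![8, 0, -8, -16], ![-8, -32, 8, -16]], ![![-4, -4, 12, 4], ![0,
    4, -8, -4], ![-4, -4, -12, -8], ![8, 0, 8, 8]], ![![4, 4, -12, -4], ![0, -4, 8, 4], ![4, 4,
    12, 8], ![-16, 0, -16, -16]], ![![0, 0, 0, 0], ![0, 1, 2, -3], ![0, 0, 0, 0], ![0, 0, 0, 0]],
    ![![0, 0, 0, 0], ![0, 4, -8, 4], ![0, 0, 0, 0], ![0, 0, 0, 0]], ![![0, 0, 0, 0], ![0, 0, 0,
    0], ![0, 0, 0, 0], ![0, 0, 0, 0]], ![![0, 0, 0, 0], ![0, -2, 4, 2], ![0, 0, 0, 0], ![0, 0, 0,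
    0]], ![![0, 0, 0, 0], ![0, 0, 0, 0], ![0, 0, 0, 0], ![0, 0, 0, 0]], ![![0, 0, 0, 0], ![0, 0,
    0, 0], ![0, 0, 0, 0], ![0, 0, 0, 0]]]

theorem quartic_unique (f : MvPolynomial (Fin 4) ℂ) (hf : f.IsHomogeneous 4)
    (hs : ∀ i, SingularAt f fun j => (quarticPoints i j : ℂ))
    (hE : ∀ l, coeff (toExp (quarticMonomials (quarticFree l))) f = 0) : f = 0 := by
  refine form_eq_zero_of_certificate (by norm_num) quarticPoints quarticMonomials
    (Finset.univ.image quarticFree) (Fin.natAdd 4) quarticInverse 16 (by norm_num)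
    ?_ ?_ ?_ ?_ hf hs ?_
  · decide +kernel
  · decide +kernel
  · decide +kernel
  · decide +kernel
  · intro l hl
    obtain ⟨k, _, rfl⟩ := Finset.mem_image.1 hl
    exact hE k

/-- Points at which the singular cubic fourfolds are determined by the coefficients of the monomials
in `cubicFree`. -/
def cubicPoints : Fin 9 → Fin 6 → ℤ :=
  ![![1, 0, 0, 0, 0, 0], ![0, 1, 0, 0, 0, 0], ![0, 0, 1, 0, 0, 0], ![0, 0, 0, 1, 0, 0], ![0, 0, 0,
    0, 1, 0], ![0, 0, 0, 0, 0, 1], ![1, 1, 1, 1, 1, 1], ![-1, -1, 0, 0, 1, 1], ![1, 0, 1, -1, 0,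
    -1]]

/-- The monomials of degree 3 not divisible by any `(d - 1)`-st power of a variable. -/
def cubicMonomials : Fin 20 → Fin 6 → ℕ :=
  ![![1, 1, 1, 0, 0, 0], ![1, 1, 0, 1, 0, 0], ![1, 1, 0, 0, 1, 0], ![1, 1, 0, 0, 0, 1], ![1, 0, 1,
    1, 0, 0], ![1, 0, 1, 0, 1, 0], ![1, 0, 1, 0, 0, 1], ![1, 0, 0, 1, 1, 0], ![1, 0, 0, 1, 0, 1],
    ![1, 0, 0, 0, 1, 1], ![0, 1, 1, 1, 0, 0], ![0, 1, 1, 0, 1, 0], ![0, 1, 1, 0, 0, 1], ![0, 1, 0,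
    1, 1, 0], ![0, 1, 0, 1, 0, 1], ![0, 1, 0, 0, 1, 1], ![0, 0, 1, 1, 1, 0], ![0, 0, 1, 1, 0, 1],
    ![0, 0, 1, 0, 1, 1], ![0, 0, 0, 1, 1, 1]]

/-- Indices of the monomials whose coefficients are prescribed. -/
def cubicFree : Fin 2 → Fin 20 :=
  ![18, 19]

/-- 6 times a left inverse of the matrix of derivative conditions at the points other than the
coordinate points. -/
def cubicInverse : Fin 20 → Fin 3 → Fin 6 → ℤ :=
  ![![![1, 1, 1, -2, 1, 1], ![3, 3, 3, 0, 3, 3], ![0, 0, 0, 0, 0, 0]], ![![1, 1, -2, 1, 1, 1],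
    ![3, 3, 0, 3, 3, 3], ![0, 0, 0, 0, 0, 0]], ![![0, 0, 0, 0, 0, 0], ![-2, -2, 0, 0, 2, -4], ![0,
    0, 0, 0, 0, 0]], ![![0, 0, 0, 0, 0, 0], ![-2, -2, 0, 0, -4, 2], ![0, 0, 0, 0, 0, 0]], ![![0,
    0, 0, 0, 0, 0], ![0, 0, 0, 0, 0, 0], ![-2, 0, -2, 2, 0, -4]], ![![1, -2, 1, 1, 1, 1], ![0, 0,
    0, 0, 0, 0], ![3, 0, 3, 3, 3, 3]], ![![0, 0, 0, 0, 0, 0], ![0, 0, 0, 0, 0, 0], ![-2, 0, -2,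
    -4, 0, 2]], ![![3, 0, 0, 0, -3, -3], ![-4, 2, -3, -3, -2, -2], ![-1, 0, 5, 1, -3, 1]], ![![0,
    0, 0, 0, 0, 0], ![0, 0, 0, 0, 0, 0], ![2, 0, -4, -2, 0, -2]], ![![0, 0, 0, 0, 0, 0], ![2, -4,
    0, 0, -2, -2], ![0, 0, 0, 0, 0, 0]], ![![0, 0, 3, 3, -6, -6], ![-8, -8, -3, -3, -10, -10],
    ![2, 0, 2, -2, 0, 4]], ![![0, 3, 0, 0, -3, -6], ![-4, -4, -6, 0, -8, -2], ![-2, 3, -2, -4, -3,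
    -4]], ![![0, 0, 0, -3, 3, 6], ![7, 7, 3, 0, 11, 5], ![1, -3, 1, 5, 0, -1]], ![![-2, 1, -2, -2,
    7, 4], ![10, 4, 6, 0, 8, 8], ![-4, -3, -4, -2, 3, -2]], ![![0, 0, 0, 3, -3, 0], ![-3, -3, -3,
    0, -3, -3], ![3, 3, 3, 3, 0, 3]], ![![0, 0, 0, 0, 0, 0], ![-4, 2, 0, 0, -2, -2], ![0, 0, 0, 0,
    0, 0]], ![![-2, -2, 1, 1, 4, 4], ![2, 2, 3, 3, 4, 4], ![4, 0, -2, 2, 0, 2]], ![![0, 0, 0, 0,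
    0, 0], ![0, 0, 0, 0, 0, 0], ![-4, 0, 2, -2, 0, -2]], ![![0, 0, 0, 0, 0, 0], ![0, 0, 0, 0, 0,
    0], ![0, 0, 0, 0, 0, 0]], ![![0, 0, 0, 0, 0, 0], ![0, 0, 0, 0, 0, 0], ![0, 0, 0, 0, 0, 0]]]

theorem cubic_unique (f : MvPolynomial (Fin 6) ℂ) (hf : f.IsHomogeneous 3)
    (hs : ∀ i, SingularAt f fun j => (cubicPoints i j : ℂ))
    (hE : ∀ l, coeff (toExp (cubicMonomials (cubicFree l))) f = 0) : f = 0 := by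
  refine form_eq_zero_of_certificate (by norm_num) cubicPoints cubicMonomials
    (Finset.univ.image cubicFree) (Fin.natAdd 6) cubicInverse 6 (by norm_num)
    ?_ ?_ ?_ ?_ hf hs ?_
  · decide +kernel
  · decide +kernel
  · decide +kernel
  · decide +kernel
  · intro l hl
    obtain ⟨k, _, rfl⟩ := Finset.mem_image.1 hl
    exact hE k

/-! ### Singular points of products and zeros of plane curves -/

theorem singularAt_mul {n : ℕ} {A B : MvPolynomial (Fin (n + 1)) ℂ} {q : Fin (n + 1) → ℂ}
    (hA : eval q A = 0) (hB : eval q B = 0) : SingularAt (A * B) q := by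
  intro i
  rw [evalPDeriv_apply, Derivation.leibniz]
  simp [hA, hB]

theorem singularAt_sum_smul {n k : ℕ} {g : Fin k → MvPolynomial (Fin (n + 1)) ℂ}
    {q : Fin (n + 1) → ℂ} (hg : ∀ l, SingularAt (g l) q) (a : Fin k → ℂ) :
    SingularAt (∑ l, a l • g l) q := fun i => by
  rw [map_sum]
  exact Finset.sum_eq_zero fun l _ => by rw [map_smul, hg l i, smul_zero]

/-- Infinitely many projective points, presented as an injective family. -/
theorem exists_infinite_of_family {n : ℕ} {P : (Fin n → ℂ) → Prop} (S : Set ℂ)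
    (hS : S.Infinite) (q : ℂ → Fin n → ℂ) (h0 : ∀ t ∈ S, q t ≠ 0 ∧ P (q t))
    (hq : ∀ t ∈ S, ∀ t' ∈ S, t ≠ t' → ∀ c : ℂ, q t' ≠ c • q t) :
    ∃ Q : Set (Fin n → ℂ), Q.Infinite ∧ (∀ v ∈ Q, v ≠ 0 ∧ P v) ∧
      (∀ v ∈ Q, ∀ v' ∈ Q, v ≠ v' → ∀ c : ℂ, v' ≠ c • v) := by
  refine ⟨q '' S, hS.image ?_, ?_, ?_⟩
  · intro t ht t' ht' h
    by_contra hne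
    exact hq t ht t' ht' hne 1 (by rw [one_smul, h])
  · rintro _ ⟨t, ht, rfl⟩
    exact h0 t ht
  · rintro _ ⟨t, ht, rfl⟩ _ ⟨t', ht', rfl⟩ hne
    exact hq t ht t' ht' (fun h => hne (by rw [h]))

theorem eval_smul_of_isHomogeneous {n d : ℕ} {G : MvPolynomial (Fin n) ℂ}
    (hG : G.IsHomogeneous d) (c : ℂ) (v : Fin n → ℂ) : eval (c • v) G = c ^ d * eval v G := by
  rw [eval_eq', eval_eq', Finset.mul_sum]
  refine Finset.sum_congr rfl fun m hm => ?_
  have hdeg : ∑ i, m i = d := by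
    rw [← Finsupp.degree_eq_sum]
    by_contra hne
    exact mem_support_iff.1 hm (hG.coeff_eq_zero hne)
  simp only [Pi.smul_apply, smul_eq_mul, mul_pow, Finset.prod_mul_distrib, Finset.prod_pow_eq_pow_sum,
    hdeg]
  ring

/-- The restriction of a polynomial to a parametrised line. -/
theorem exists_polynomial_on_line {n : ℕ} (G : MvPolynomial (Fin n) ℂ) (u s : Fin n → ℂ) :
    ∃ H : Polynomial ℂ, ∀ z, H.eval z = eval (z • u + s) G := by
  refine ⟨aeval (fun i => Polynomial.C (u i) * Polynomial.X + Polynomial.C (s i)) G, fun z => ?_⟩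
  induction G using MvPolynomial.induction_on with
  | C a => simp
  | add p q hp hq => simp only [map_add, Polynomial.eval_add, hp, hq]
  | mul_X p i hp =>
    rw [map_mul, Polynomial.eval_mul, hp, map_mul, aeval_X, eval_X]
    simp only [Polynomial.eval_add, Polynomial.eval_mul, Polynomial.eval_C, Polynomial.eval_X,
      Pi.add_apply, Pi.smul_apply, smul_eq_mul, mul_comm (u i) z]

/-- A line through a point `u` where the form `G` does not vanish contains a zero of `G`. -/
theorem exists_zero_on_line {n d : ℕ} (hd : 0 < d) {G : MvPolynomial (Fin n) ℂ}
    (hG : G.IsHomogeneous d) {u : Fin n → ℂ} (hu : eval u G ≠ 0) (s : Fin n → ℂ) :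
    ∃ z : ℂ, eval (z • u + s) G = 0 := by
  obtain ⟨H, hH⟩ := exists_polynomial_on_line G u s
  obtain ⟨R, hR⟩ := exists_polynomial_on_line G s u
  by_cases hdeg : H.degree = 0
  · -- `H` is a constant `κ`, so `G (u + y s) = κ y ^ d` for `y ≠ 0`, hence also for `y = 0`
    exfalso
    obtain ⟨κ, hκ⟩ : ∃ κ, H = Polynomial.C κ := ⟨_, Polynomial.eq_C_of_degree_eq_zero hdeg⟩
    have hfun : R = Polynomial.C κ * Polynomial.X ^ d := by
      refine Polynomial.eq_of_infinite_eval_eq _ _ ((Set.finite_singleton (0 : ℂ)).infinite_compl.mono ?_)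
      intro y hy
      have hy : y ≠ 0 := hy
      have h1 : y • s + u = y • (y⁻¹ • u + s) := by
        rw [smul_add, smul_smul, mul_inv_cancel₀ hy, one_smul, add_comm]
      have h2 := hH y⁻¹
      rw [hκ, Polynomial.eval_C] at h2
      show R.eval y = _
      rw [hR, h1, eval_smul_of_isHomogeneous hG, ← h2, mul_comm]
      simp only [Polynomial.eval_mul, Polynomial.eval_C, Polynomial.eval_pow, Polynomial.eval_X]
    have := hR 0
    rw [hfun] at this
    apply hu
    simpa [hd.ne'] using this.symm
  · obtain ⟨z, hz⟩ := IsAlgClosed.exists_root H hdeg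
    exact ⟨z, by rw [← hH]; exact hz⟩

/-- A plane projective curve has infinitely many points. -/
theorem exists_zeros_plane {d : ℕ} (hd : 0 < d) {G : MvPolynomial (Fin 3) ℂ}
    (hG : G.IsHomogeneous d) :
    ∃ a : ℂ → Fin 3 → ℂ, (∀ t, a t ≠ 0 ∧ eval (a t) G = 0) ∧
      ∀ t t', t ≠ t' → ∀ c : ℂ, a t' ≠ c • a t := by
  by_cases h0 : ∀ u, eval u G = 0
  · refine ⟨fun t => ![1, t, 0], fun t => ⟨fun h => ?_, h0 _⟩, fun t t' hne c h => hne ?_⟩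
    · simpa using congrFun h 0
    · have h1 := congrFun h 0
      have h2 := congrFun h 1
      simp at h1 h2
      rw [h2, ← h1, one_mul]
  push Not at h0
  obtain ⟨u, hu⟩ := h0
  obtain ⟨v, w, hvw⟩ : ∃ v w : Fin 3 → ℂ, ∀ x y z : ℂ, x • u + y • v + z • w = 0 →
      y = 0 ∧ z = 0 := by
    have hu0 : u ≠ 0 := by
      rintro rfl
      apply hu
      have := eval_smul_of_isHomogeneous hG 0 0
      simpa [hd.ne'] using this
    obtain ⟨i, hi⟩ := Function.ne_iff.1 hu0
    simp only [Pi.zero_apply] at hi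
    refine ⟨Pi.single (i + 1) 1, Pi.single (i + 2) 1, fun x y z h => ?_⟩
    have e0 := congrFun h i
    have e1 := congrFun h (i + 1)
    have e2 := congrFun h (i + 2)
    fin_cases i <;> simp at e0 e1 e2 hi <;> simp_all
  choose z hz using fun t : ℂ => exists_zero_on_line hd hG hu (v + t • w)
  refine ⟨fun t => z t • u + (v + t • w), fun t => ⟨fun h => ?_, hz t⟩, fun t t' hne c h => hne ?_⟩
  · have := (hvw (z t) 1 t (by rw [one_smul, add_assoc]; exact h)).1
    exact one_ne_zero this
  · have := hvw (z t' - c * z t) (1 - c) (t' - c * t) (by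
      simp only at h
      rw [← sub_eq_zero] at h
      rw [← h]
      module)
    have hc : c = 1 := by linear_combination -this.1
    rw [hc, one_mul] at this
    exact (sub_eq_zero.1 this.2).symm

/-! ### Forms through given points -/

/-- The forms of degree `d` singular at the points `p` have infinitely many common singular
points. -/
def ManyCommonSingularPoints {r n : ℕ} (d : ℕ) (p : Fin r → Fin (n + 1) → ℂ) : Prop :=
  ∃ Q : Set (Fin (n + 1) → ℂ), Q.Infinite ∧
    (∀ q ∈ Q, q ≠ 0 ∧
      ∀ f : MvPolynomial (Fin (n + 1)) ℂ, f.IsHomogeneous d →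
        (∀ i, SingularAt f (p i)) → SingularAt f q) ∧
    (∀ q ∈ Q, ∀ q' ∈ Q, q ≠ q' → ∀ c : ℂ, q' ≠ c • q)

theorem formOf_injective (n d : ℕ) : Function.Injective (formOf n d) := fun a b h => by
  funext m
  rw [← coeff_formOf a m, h, coeff_formOf]

theorem exists_forms_vanishing {n d r k : ℕ} (p : Fin r → Fin n → ℂ)
    (h : r + k ≤ Fintype.card (Exps n d)) :
    ∃ g : Fin k → MvPolynomial (Fin n) ℂ, LinearIndependent ℂ g ∧
      ∀ l, (g l).IsHomogeneous d ∧ ∀ i, eval (p i) (g l) = 0 := by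
  let Φ : (Exps n d → ℂ) →ₗ[ℂ] (Fin r → ℂ) :=
    LinearMap.pi fun i => (aeval (p i)).toLinearMap ∘ₗ formOf n d
  have hrank : k ≤ Module.finrank ℂ (LinearMap.ker Φ) := by
    have h1 := LinearMap.finrank_range_add_finrank_ker Φ
    have h2 := Submodule.finrank_le (LinearMap.range Φ)
    simp only [Module.finrank_fintype_fun_eq_card, Fintype.card_fin] at h1 h2
    omega
  obtain ⟨g, hg⟩ := exists_linearIndependent_of_le_finrank hrank
  refine ⟨fun l => formOf n d (g l), ?_, fun l => ⟨formOf_isHomogeneous _, fun i => ?_⟩⟩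
  · have h1 := hg.map' (LinearMap.ker Φ).subtype (Submodule.ker_subtype _)
    exact h1.map' (formOf n d) (LinearMap.ker_eq_bot.2 (formOf_injective n d))
  · have := congrFun (LinearMap.mem_ker.1 (g l).2) i
    simpa [Φ, aeval_eq_eval] using this

/-- A form determined by vanishing of `k` coefficients is a combination of any `k` independent
forms of the same kind. -/
theorem eq_sum_of_unique {n d r k : ℕ} {p : Fin r → Fin (n + 1) → ℂ}
    {e : Fin k → Fin (n + 1) →₀ ℕ}
    (hu : ∀ f : MvPolynomial (Fin (n + 1)) ℂ, f.IsHomogeneous d → (∀ i, SingularAt f (p i)) →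
      (∀ l, coeff (e l) f = 0) → f = 0)
    {g : Fin k → MvPolynomial (Fin (n + 1)) ℂ} (hg : LinearIndependent ℂ g)
    (hgd : ∀ l, (g l).IsHomogeneous d) (hgs : ∀ l i, SingularAt (g l) (p i))
    {f : MvPolynomial (Fin (n + 1)) ℂ} (hf : f.IsHomogeneous d)
    (hs : ∀ i, SingularAt f (p i)) : ∃ a : Fin k → ℂ, f = ∑ l, a l • g l := by
  let V : Submodule ℂ (MvPolynomial (Fin (n + 1)) ℂ) :=
    homogeneousSubmodule (Fin (n + 1)) ℂ d ⊓ ⨅ i, ⨅ j, LinearMap.ker (evalPDeriv (p i) j)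
  have hV : ∀ f, f ∈ V ↔ f.IsHomogeneous d ∧ ∀ i, SingularAt f (p i) := fun f => by
    simp [V, SingularAt]
  refine mem_span_of_unique V (fun l => lcoeff ℂ (e l)) (fun f hf h => ?_) g
    (fun l => (hV _).2 ⟨hgd l, hgs l⟩) hg ((hV f).2 ⟨hf, hs⟩)
  exact hu f ((hV f).1 hf).1 ((hV f).1 hf).2 h

/-! ### Plane sextics with nine double points -/

theorem sextic_case : Generic fun t : Fin 9 × Fin 3 → ℂ =>
    ManyCommonSingularPoints (n := 2) 6 fun i j => t (i, j) := by
  refine (Generic.singular_unique _ _ sextic_unique).mono fun t ht => ?_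
  obtain ⟨g, hg, hg0⟩ := exists_forms_vanishing (n := 3) (d := 3) (k := 1)
    (fun (i : Fin 9) (j : Fin 3) => t (i, j)) (by decide)
  have hne : g 0 ≠ 0 := hg.ne_zero 0
  obtain ⟨a, ha, ha'⟩ := exists_zeros_plane (by norm_num) (hg0 0).1
  refine exists_infinite_of_family Set.univ Set.infinite_univ a
    (fun s _ => ⟨(ha s).1, fun f hf hs => ?_⟩) fun s _ s' _ => ha' s s'
  obtain ⟨κ, rfl⟩ := eq_sum_of_unique ht (g := fun _ => g 0 * g 0)
    (linearIndependent_unique_iff.2 (mul_ne_zero hne hne))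
    (fun _ => (hg0 0).1.mul (hg0 0).1)
    (fun _ i => singularAt_mul ((hg0 0).2 i) ((hg0 0).2 i)) hf hs
  exact singularAt_sum_smul (fun _ => singularAt_mul (ha s).2 (ha s).2) κ

/-! ### Quartic surfaces with eight double points -/

theorem pderiv_pderiv_comm {n : ℕ} (i j : Fin n) (f : MvPolynomial (Fin n) ℂ) :
    pderiv i (pderiv j f) = pderiv j (pderiv i f) := by
  have h : ⁅(pderiv i : Derivation ℂ (MvPolynomial (Fin n) ℂ) (MvPolynomial (Fin n) ℂ)),
      (pderiv j : Derivation ℂ (MvPolynomial (Fin n) ℂ) (MvPolynomial (Fin n) ℂ))⁆ = 0 := by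
    refine derivation_ext fun k => ?_
    rw [Derivation.commutator_apply]
    simp [pderiv_X, Pi.single_apply, apply_ite]
  have := congrArg (fun D => D f) h
  rw [Derivation.commutator_apply] at this
  exact sub_eq_zero.1 this

theorem exists_quadric_coeffs {n : ℕ} {Q : MvPolynomial (Fin (n + 1)) ℂ}
    (hQ : Q.IsHomogeneous 2) : ∃ c : Fin (n + 1) → Fin (n + 1) → ℂ, (∀ i j, c i j = c j i) ∧
      (∀ x i, evalPDeriv x i Q = 2 * ∑ j, c i j * x j) ∧
      ∀ x, eval x Q = ∑ i, x i * ∑ j, c i j * x j := by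
  have hd2 : ∀ i j, ∃ c, pderiv j (pderiv i Q) = C c := fun i j => by
    have h : (pderiv j (pderiv i Q)).totalDegree = 0 := by
      have := ((hQ.pderiv (i := i)).pderiv (i := j)).totalDegree_le
      simpa using this
    exact ⟨_, (totalDegree_eq_zero_iff_eq_C.1 h)⟩
  choose c hc using hd2
  have hE : ∀ {m : ℕ} {f : MvPolynomial (Fin (n + 1)) ℂ}, f.IsHomogeneous m → ∀ x,
      ∑ i, x i * eval x (pderiv i f) = m * eval x f := fun {m f} hf x => by
    have := congrArg (eval x) hf.sum_X_mul_pderiv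
    simpa using this
  have h1 : ∀ x i, evalPDeriv x i Q = ∑ j, c i j * x j := fun x i => by
    have := hE (hQ.pderiv (i := i)) x
    rw [evalPDeriv_apply]
    simp only [hc, eval_C, Nat.add_one_sub_one, Nat.cast_one, one_mul] at this
    rw [← this]
    exact Finset.sum_congr rfl fun j _ => mul_comm _ _
  refine ⟨fun i j => c i j / 2, fun i j => ?_, fun x i => ?_, fun x => ?_⟩
  · have : (C (c i j) : MvPolynomial (Fin (n + 1)) ℂ) = C (c j i) := by
      rw [← hc, ← hc, pderiv_pderiv_comm]
    simp only [C_injective _ _ this]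
  · rw [h1, Finset.mul_sum]
    exact Finset.sum_congr rfl fun j _ => by ring
  · have := hE hQ x
    simp only [← evalPDeriv_apply, h1] at this
    have h2 : eval x Q = (∑ i, x i * ∑ j, c i j * x j) / 2 := by
      rw [this]; push_cast; ring
    rw [h2, Finset.sum_div]
    refine Finset.sum_congr rfl fun i _ => ?_
    rw [mul_div_assoc, Finset.sum_div]
    congr 1
    exact Finset.sum_congr rfl fun j _ => by ring

theorem quadric_eval_add {n : ℕ} {Q : MvPolynomial (Fin (n + 1)) ℂ} (hQ : Q.IsHomogeneous 2)
    (a : ℂ) (x y : Fin (n + 1) → ℂ) : eval (a • x + y) Q =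
      a ^ 2 * eval x Q + a * (∑ j, evalPDeriv x j Q * y j) + eval y Q := by
  obtain ⟨c, hc, h1, h2⟩ := exists_quadric_coeffs hQ
  simp only [h1, h2]
  have h3 : ∑ i, x i * ∑ j, c i j * y j = ∑ j, (∑ i, c j i * x i) * y j := by
    simp only [Finset.mul_sum, Finset.sum_mul]
    rw [Finset.sum_comm]
    exact Finset.sum_congr rfl fun j _ => Finset.sum_congr rfl fun i _ => by rw [hc i j]; ring
  have h4 : ∀ i, (a • x + y) i * ∑ j, c i j * (a • x + y) j =
      a ^ 2 * (x i * ∑ j, c i j * x j) + a * (x i * ∑ j, c i j * y j) +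
        a * ((∑ j, c i j * x j) * y i) + y i * ∑ j, c i j * y j := fun i => by
    have : ∑ j, c i j * (a • x + y) j = a * ∑ j, c i j * x j + ∑ j, c i j * y j := by
      rw [Finset.mul_sum, ← Finset.sum_add_distrib]
      exact Finset.sum_congr rfl fun j _ => by simp; ring
    rw [this]
    simp only [Pi.add_apply, Pi.smul_apply, smul_eq_mul]
    ring
  simp only [h4, Finset.sum_add_distrib, ← Finset.mul_sum, h3, mul_assoc]
  ring

theorem linearIndependent_products {n : ℕ} {g : Fin 2 → MvPolynomial (Fin n) ℂ}
    (hg : LinearIndependent ℂ g) :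
    LinearIndependent ℂ ![g 0 * g 0, g 0 * g 1, g 1 * g 1] := by
  rw [Fintype.linearIndependent_iff]
  intro a ha
  have hg' : ∀ α β : ℂ, C α * g 0 + C β * g 1 = 0 → α = 0 ∧ β = 0 := fun α β h => by
    have := Fintype.linearIndependent_iff.1 hg ![α, β] (by
      simpa [C_mul', Fin.sum_univ_two] using h)
    exact ⟨this 0, this 1⟩
  simp only [Fin.sum_univ_three, Matrix.cons_val_zero, Matrix.cons_val_one, Matrix.cons_val,
    ← C_mul'] at ha
  obtain ⟨δ, hδ⟩ := IsAlgClosed.exists_eq_mul_self (a 1 ^ 2 - 4 * a 0 * a 2)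
  have hC := congrArg (C (σ := Fin n)) hδ
  simp only [map_sub, map_mul, map_pow] at hC
  -- the binary quadratic form splits into linear factors after multiplication by `4 a₀`
  have hfac : (C (2 * a 0) * g 0 + C (a 1 - δ) * g 1) *
      (C (2 * a 0) * g 0 + C (a 1 + δ) * g 1) = 0 := by
    simp only [map_sub, map_mul, map_add]
    have h2 : (C 2 : MvPolynomial (Fin n) ℂ) = 2 := map_ofNat _ _
    have h4 : (C 4 : MvPolynomial (Fin n) ℂ) = 4 := map_ofNat _ _
    rw [h4] at hC
    rw [h2]
    linear_combination 4 * C (a 0) * ha + g 1 * g 1 * hC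
  have ha0 : a 0 = 0 := by
    rcases mul_eq_zero.1 hfac with h | h <;> simpa using (hg' _ _ h).1
  rw [ha0, map_zero, zero_mul, zero_add] at ha
  have h12 : g 1 * (C (a 1) * g 0 + C (a 2) * g 1) = 0 := by linear_combination ha
  have := hg' _ _ ((mul_eq_zero.1 h12).resolve_left (hg.ne_zero 1))
  intro i
  fin_cases i
  exacts [ha0, this.1, this.2]

/-- Two linear forms on the plane sharing two projective zeros are proportional. -/
theorem exists_relation_of_common_zeros {l m v w : Fin 3 → ℂ} (hv : v ≠ 0)
    (hw : ∀ c : ℂ, w ≠ c • v) (hlv : l ⬝ᵥ v = 0) (hmv : m ⬝ᵥ v = 0) (hlw : l ⬝ᵥ w = 0)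
    (hmw : m ⬝ᵥ w = 0) : ∃ α β : ℂ, (α ≠ 0 ∨ β ≠ 0) ∧ α • l + β • m = 0 := by
  by_contra hcon
  push Not at hcon
  have hind : LinearIndependent ℂ ![l, m] := LinearIndependent.pair_iff.2 fun α β h => by
    by_contra h'
    refine hcon α β ?_ h
    tauto
  have hind' : LinearIndependent ℂ ![v, w] :=
    (LinearIndependent.pair_iff' hv).2 fun c h => hw c h.symm
  let Φ : (Fin 3 → ℂ) →ₗ[ℂ] (Fin 2 → ℂ) := (Matrix.of ![l, m]).mulVecLin
  have h1 : 2 ≤ Module.finrank ℂ (LinearMap.ker Φ) := by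
    have hk : ∀ i, ![v, w] i ∈ LinearMap.ker Φ := fun i => by
      rw [LinearMap.mem_ker]
      ext j
      fin_cases i <;> fin_cases j <;> simpa [Φ, Matrix.mulVec]
    have : LinearIndependent ℂ fun i => (⟨![v, w] i, hk i⟩ : LinearMap.ker Φ) :=
      LinearIndependent.of_comp (LinearMap.ker Φ).subtype hind'
    simpa using this.fintype_card_le_finrank
  have h2 : (Matrix.of ![l, m]).rank = 2 := by
    simpa using LinearIndependent.rank_matrix (M := Matrix.of ![l, m]) hind
  have h3 := LinearMap.finrank_range_add_finrank_ker Φ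
  have h4 : Module.finrank ℂ (LinearMap.range Φ) = 2 := h2
  simp only [Module.finrank_fintype_fun_eq_card, Fintype.card_fin] at h3
  omega

theorem eval_aeval_eq {n k : ℕ} (g : Fin n → MvPolynomial (Fin k) ℂ)
    (F : MvPolynomial (Fin n) ℂ) (v : Fin k → ℂ) :
    eval v (aeval g F) = eval (fun i => eval v (g i)) F := by
  induction F using MvPolynomial.induction_on with
  | C a => simp
  | add p q hp hq => simp only [map_add, hp, hq]
  | mul_X p i hp => simp only [map_mul, hp, aeval_X, eval_X]

/-- Two independent quadrics through `x` have infinitely many common points, provided no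
quadric of the pencil is singular at `x`. Projection from `x` turns the common points into the
points of a plane cubic. -/
theorem exists_common_zeros_quadrics {g : Fin 2 → MvPolynomial (Fin 4) ℂ}
    (hg : ∀ l, (g l).IsHomogeneous 2) {x : Fin 4 → ℂ} (hx0 : x 0 ≠ 0)
    (hx : ∀ l, eval x (g l) = 0)
    (hsing : ∀ α β : ℂ, SingularAt (α • g 0 + β • g 1) x → α = 0 ∧ β = 0)
    {P : (Fin 4 → ℂ) → Prop} (hP : ∀ q, (∀ l, eval q (g l) = 0) → P q) :
    ∃ Q : Set (Fin 4 → ℂ), Q.Infinite ∧ (∀ q ∈ Q, q ≠ 0 ∧ P q) ∧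
      (∀ q ∈ Q, ∀ q' ∈ Q, q ≠ q' → ∀ c : ℂ, q' ≠ c • q) := by
  let L : Fin 2 → Fin 3 → ℂ := fun l j => evalPDeriv x j.succ (g l)
  -- the inclusion of the plane `x₀ = 0`, and the restrictions of the quadrics to it
  let ι : (Fin 3 → ℂ) → Fin 4 → ℂ := fun v => Fin.cons 0 v
  let R : Fin 2 → MvPolynomial (Fin 3) ℂ := fun l => aeval (Fin.cons 0 X) (g l)
  let M : Fin 2 → MvPolynomial (Fin 3) ℂ := fun l => ∑ j, C (L l j) * X j
  have hR : ∀ l v, eval v (R l) = eval (ι v) (g l) := fun l v => by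
    rw [eval_aeval_eq]
    congr 2
    ext i
    refine Fin.cases ?_ (fun j => ?_) i <;> simp [ι]
  have hRh : ∀ l, (R l).IsHomogeneous 2 := fun l => by
    have := (hg l).aeval (Fin.cons 0 X : Fin 4 → MvPolynomial (Fin 3) ℂ) (n := 1) (fun i => by
      refine Fin.cases ?_ (fun j => ?_) i
      · exact isHomogeneous_zero _ _ _
      · exact isHomogeneous_X _ _)
    simpa only [one_mul] using this
  have hM : ∀ l v, eval v (M l) = L l ⬝ᵥ v := fun l v => by simp [M, dotProduct]
  have hMh : ∀ l, (M l).IsHomogeneous 1 := fun l =>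
    IsHomogeneous.sum _ _ _ fun j _ => by
      simpa using (isHomogeneous_C (Fin 3) (L l j)).mul (isHomogeneous_X ℂ j)
  have hline : ∀ l a v, eval (a • x + ι v) (g l) = a * (L l ⬝ᵥ v) + eval (ι v) (g l) :=
    fun l a v => by
      rw [quadric_eval_add (hg l), hx l, Fin.sum_univ_succ]
      simp [ι, L, dotProduct]
  obtain ⟨v, hv, hv'⟩ := exists_zeros_plane (G := M 0 * R 1 - M 1 * R 0) (d := 3) (by norm_num)
    (((hMh 0).mul (hRh 1)).sub ((hMh 1).mul (hRh 0)))
  have hcub : ∀ t, (L 0 ⬝ᵥ v t) * eval (ι (v t)) (g 1) = (L 1 ⬝ᵥ v t) * eval (ι (v t)) (g 0) :=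
    fun t => by
      have := (hv t).2
      simp only [map_sub, map_mul, hM, hR] at this
      exact sub_eq_zero.1 this
  let S : Set ℂ := {t | L 0 ⬝ᵥ v t ≠ 0 ∨ L 1 ⬝ᵥ v t ≠ 0}
  have hS : S.Infinite := by
    have hsub : Sᶜ.Subsingleton := by
      intro t ht t' ht'
      by_contra hne
      simp only [S, Set.mem_compl_iff, Set.mem_ofPred_eq, not_or, not_not] at ht ht'
      obtain ⟨α, β, hαβ, hrel⟩ := exists_relation_of_common_zeros (hv t).1 (hv' t t' hne)
        ht.1 ht.2 ht'.1 ht'.2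
      have hsg : SingularAt (α • g 0 + β • g 1) x := by
        have hsucc : ∀ j : Fin 3, evalPDeriv x j.succ (α • g 0 + β • g 1) = 0 := fun j => by
          have := congrFun hrel j
          simpa [L] using this
        -- Euler's relation takes care of the remaining derivative
        have heul := congrArg (eval x) ((((homogeneousSubmodule (Fin 4) ℂ 2).add_mem
          ((homogeneousSubmodule (Fin 4) ℂ 2).smul_mem α (hg 0))
          ((homogeneousSubmodule (Fin 4) ℂ 2).smul_mem β (hg 1)) :
            (α • g 0 + β • g 1).IsHomogeneous 2)).sum_X_mul_pderiv)
        simp only [map_sum, map_mul, eval_X, ← evalPDeriv_apply] at heul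
        rw [Fin.sum_univ_succ, Finset.sum_eq_zero (fun j _ => by rw [hsucc, mul_zero])] at heul
        have h0 : eval x (α • g 0 + β • g 1) = 0 := by simp [hx]
        rw [map_nsmul, h0, smul_zero, add_zero] at heul
        intro i
        refine Fin.cases ?_ hsucc i
        exact (mul_eq_zero.1 heul).resolve_left hx0
      have := hsing α β hsg
      tauto
    have := hsub.finite.infinite_compl
    rwa [compl_compl] at this
  have hex : ∀ t, ∃ a : ℂ, t ∈ S → ∀ l, eval (a • x + ι (v t)) (g l) = 0 := by
    intro t
    by_cases h0 : L 0 ⬝ᵥ v t = 0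
    · refine ⟨-eval (ι (v t)) (g 1) / (L 1 ⬝ᵥ v t), fun ht l => ?_⟩
      have h1 : L 1 ⬝ᵥ v t ≠ 0 := ht.resolve_left (not_not.2 h0)
      have hc := hcub t
      rw [h0, zero_mul] at hc
      have hc' := (mul_eq_zero.1 hc.symm).resolve_left h1
      rw [hline]
      fin_cases l
      · simp [h0, hc']
      · simp only [Fin.mk_one]
        field_simp
        ring
    · refine ⟨-eval (ι (v t)) (g 0) / (L 0 ⬝ᵥ v t), fun ht l => ?_⟩
      have hc := hcub t
      rw [hline]
      fin_cases l
      · simp only [Fin.zero_eta]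
        field_simp
        ring
      · simp only [Fin.mk_one]
        field_simp
        linear_combination hc
  choose a ha using hex
  refine exists_infinite_of_family S hS (fun t => a t • x + ι (v t))
    (fun t ht => ⟨fun h => (hv t).1 ?_, hP _ (ha t ht)⟩) fun t ht t' ht' hne c h =>
      hv' t t' hne c ?_
  · have h0 : a t = 0 := by simpa [ι, hx0] using congrFun h 0
    ext j
    simpa [ι, h0] using congrFun h j.succ
  · have h0 : a t' = c * a t := by
      have := congrFun h 0
      simp only [ι, Pi.add_apply, Pi.smul_apply, smul_eq_mul, Fin.cons_zero, add_zero,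
        ← mul_assoc] at this
      exact mul_right_cancel₀ hx0 this
    ext j
    have := congrFun h j.succ
    simp only [ι, Pi.add_apply, Pi.smul_apply, smul_eq_mul, Fin.cons_succ, h0] at this ⊢
    linear_combination this

theorem quadric_eq_zero_of_quarticPoints (f : MvPolynomial (Fin 4) ℂ) (hf : f.IsHomogeneous 2)
    (hs : ∀ j, evalPDeriv (fun j => (quarticPoints 0 j : ℂ)) j f = 0)
    (hv : ∀ i, eval (fun j => (quarticPoints i j : ℂ)) f = 0) : f = 0 := by
  obtain ⟨c, hc, h1, h2⟩ : ∃ c : Fin 4 → Fin 4 → ℂ, (∀ i j, c i j = c j i) ∧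
      (∀ (x : Fin 4 → ℂ) (i : Fin 4), evalPDeriv (n := 3) x i f = 2 * ∑ j : Fin 4, c i j * x j) ∧
      ∀ x : Fin 4 → ℂ, eval x f = ∑ i : Fin 4, x i * ∑ j : Fin 4, c i j * x j :=
    exists_quadric_coeffs (n := 3) hf
  have hz : ∀ j, c j 0 = 0 := fun j => by
    have := hs j
    rw [h1, Fin.sum_univ_four] at this
    simpa [quarticPoints] using this
  simp only [h2, Fin.sum_univ_four, hz, hc 0] at hv
  have e1 := hv 1
  have e2 := hv 2
  have e3 := hv 3
  have e4 := hv 4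
  have e5 := hv 5
  have e6 := hv 6
  have e7 := hv 7
  simp [quarticPoints, hc 2 1, hc 3 1, hc 3 2] at e1 e2 e3 e4 e5 e6 e7
  rw [e1, e2, e3] at e4
  refine MvPolynomial.funext fun x => ?_
  have a1 : c 1 2 = 0 := by linear_combination (-1 / 2) * e6 + (1 / 2) * e1 + (1 / 2) * e2
  have a2 : c 2 3 = 0 := by linear_combination (1 / 2) * e7 - (1 / 2) * e2 - (1 / 2) * e3
  have a3 : c 1 3 = 0 := by rw [a1, a2] at e4; linear_combination (1 / 2) * e4
  simp [h2, Fin.sum_univ_four, hz, hc 0, hc 2 1, hc 3 1, hc 3 2, e1, e2, e3, a1, a2, a3]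

theorem quartic_case : Generic fun t : Fin 8 × Fin 4 → ℂ =>
    ManyCommonSingularPoints (n := 3) 4 fun i j => t (i, j) := by
  let Φ : (Fin 8 × Fin 4 → ℂ) → Fin 4 ⊕ Fin 8 → MvPolynomial (Fin 4) ℂ →ₗ[ℂ] ℂ := fun t =>
    Sum.elim (fun j => evalPDeriv (n := 3) (fun j => t (0, j)) j)
      (fun i => evalAt (n := 3) fun j => t (i, j))
  have hΦ : ∀ a (G : MvPolynomial (Fin 4) ℂ), PolyFun fun t => Φ t a G := by
    rintro (j | i) G
    · simp only [Φ, Sum.elim_inl, evalPDeriv_apply]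
      exact PolyFun.evalPoint 0 _
    · simp only [Φ, Sum.elim_inr, evalAt, AlgHom.toLinearMap_apply, aeval_eq_eval]
      exact PolyFun.evalPoint i _
  have hB := Generic.no_form 2 Φ hΦ (fun ij => (quarticPoints ij.1 ij.2 : ℂ)) (fun f hf h =>
    quadric_eq_zero_of_quarticPoints f hf (fun j => h (Sum.inl j)) fun i => by
      have := h (Sum.inr i)
      simpa [Φ, evalAt, aeval_eq_eval] using this)
  have hC : Generic fun t : Fin 8 × Fin 4 → ℂ => t (0, 0) ≠ 0 :=
    Generic.of_polyFun (PolyFun.coord (0, 0)) (fun ij => (quarticPoints ij.1 ij.2 : ℂ))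
      (by simp [quarticPoints]) fun t ht => ht
  refine ((Generic.singular_unique _ _ quartic_unique).and (hB.and hC)).mono ?_
  rintro t ⟨ht, hB, hC⟩
  obtain ⟨g, hg, hg0⟩ := exists_forms_vanishing (n := 4) (d := 2) (k := 2)
    (fun (i : Fin 8) (j : Fin 4) => t (i, j)) (by decide)
  refine exists_common_zeros_quadrics (fun l => (hg0 l).1) (x := fun j => t (0, j)) hC
    (fun l => (hg0 l).2 0) ?_ ?_
  · intro α β hs
    have h0 : α • g 0 + β • g 1 = 0 := by
      refine hB _ ((homogeneousSubmodule (Fin 4) ℂ 2).add_mem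
          ((homogeneousSubmodule (Fin 4) ℂ 2).smul_mem α (hg0 0).1)
          ((homogeneousSubmodule (Fin 4) ℂ 2).smul_mem β (hg0 1).1)) ?_
      rintro (j | i)
      · exact hs j
      · simp [Φ, evalAt, aeval_eq_eval, (hg0 0).2 i, (hg0 1).2 i]
    have := Fintype.linearIndependent_iff.1 hg ![α, β] (by simpa [Fin.sum_univ_two] using h0)
    exact ⟨this 0, this 1⟩
  · intro q hq f hf hs
    obtain ⟨κ, rfl⟩ := eq_sum_of_unique ht (linearIndependent_products hg)
      (fun l => by
        fin_cases l
        exacts [(hg0 0).1.mul (hg0 0).1, (hg0 0).1.mul (hg0 1).1, (hg0 1).1.mul (hg0 1).1])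
      (fun l i => by
        fin_cases l
        exacts [singularAt_mul ((hg0 0).2 i) ((hg0 0).2 i),
          singularAt_mul ((hg0 0).2 i) ((hg0 1).2 i),
          singularAt_mul ((hg0 1).2 i) ((hg0 1).2 i)]) hf hs
    refine singularAt_sum_smul (fun l => ?_) κ
    fin_cases l
    exacts [singularAt_mul (hq 0) (hq 0), singularAt_mul (hq 0) (hq 1),
      singularAt_mul (hq 1) (hq 1)]

/-! ### Nets of bilinear relations on a linear system of matrices -/

/-- The `3 × 3` matrix of linear forms `∑ xⱼ μⱼ` in six variables. -/
noncomputable def pencil (μ : Fin 6 → Matrix (Fin 3) (Fin 3) ℂ) :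
    Matrix (Fin 3) (Fin 3) (MvPolynomial (Fin 6) ℂ) :=
  Matrix.of fun i k => ∑ j, C (μ j i k) * X j

/-- The value of `pencil μ` at the vector `x`. -/
noncomputable def pencilAt (μ : Fin 6 → Matrix (Fin 3) (Fin 3) ℂ) (x : Fin 6 → ℂ) : Matrix (Fin 3) (Fin 3) ℂ :=
  Matrix.of fun i k => ∑ j, μ j i k * x j

/-- With `Nₗ = Bₗᵀ M`, the alternating trace `tr (N₀ N₁ N₂) - tr (N₀ N₂ N₁)`. -/
def alternatingTrace {R : Type} [CommRing R] (B : Fin 3 → Matrix (Fin 3) (Fin 3) R)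
    (M : Matrix (Fin 3) (Fin 3) R) : R :=
  Matrix.trace ((B 0)ᵀ * M * ((B 1)ᵀ * M) * ((B 2)ᵀ * M)) -
    Matrix.trace ((B 0)ᵀ * M * ((B 2)ᵀ * M) * ((B 1)ᵀ * M))

theorem eval_pencil (μ : Fin 6 → Matrix (Fin 3) (Fin 3) ℂ) (x : Fin 6 → ℂ) (i k : Fin 3) :
    eval x (pencil μ i k) = pencilAt μ x i k := by
  simp [pencil, pencilAt]

theorem eval_det_eq {n : ℕ} (N : Matrix (Fin 3) (Fin 3) (MvPolynomial (Fin n) ℂ))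
    (x : Fin n → ℂ) : eval x N.det = (Matrix.of fun i k => eval x (N i k)).det := by
  rw [RingHom.map_det]
  rfl

theorem eval_alternatingTrace (B : Fin 3 → Matrix (Fin 3) (Fin 3) ℂ)
    (μ : Fin 6 → Matrix (Fin 3) (Fin 3) ℂ) (x : Fin 6 → ℂ) :
    eval x (alternatingTrace (fun z => (B z).map C) (pencil μ)) =
      alternatingTrace B (pencilAt μ x) := by
  simp only [alternatingTrace, Matrix.trace, Matrix.diag, Matrix.mul_apply, map_sub, map_sum,
    map_mul, eval_pencil, Matrix.transpose_apply, Matrix.map_apply, eval_C]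

theorem isHomogeneous_det {n : ℕ} {N : Matrix (Fin 3) (Fin 3) (MvPolynomial (Fin n) ℂ)}
    (hN : ∀ i k, (N i k).IsHomogeneous 1) : N.det.IsHomogeneous 3 := by
  rw [Matrix.det_fin_three]
  have h : ∀ a b c d e f, (N a b * N c d * N e f).IsHomogeneous 3 := fun a b c d e f =>
    ((hN a b).mul (hN c d)).mul (hN e f)
  exact (((((h _ _ _ _ _ _).sub (h _ _ _ _ _ _)).sub (h _ _ _ _ _ _)).add
    (h _ _ _ _ _ _)).add (h _ _ _ _ _ _)).sub (h _ _ _ _ _ _)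

theorem isHomogeneous_trace {n : ℕ} {N N' N'' : Matrix (Fin 3) (Fin 3) (MvPolynomial (Fin n) ℂ)}
    (hN : ∀ i k, (N i k).IsHomogeneous 1) (hN' : ∀ i k, (N' i k).IsHomogeneous 1)
    (hN'' : ∀ i k, (N'' i k).IsHomogeneous 1) :
    (Matrix.trace (N * N' * N'')).IsHomogeneous 3 := by
  simp only [Matrix.trace, Matrix.diag, Matrix.mul_apply, Finset.sum_mul]
  exact IsHomogeneous.sum _ _ _ fun i _ => IsHomogeneous.sum _ _ _ fun k _ =>
    IsHomogeneous.sum _ _ _ fun l _ => ((hN _ _).mul (hN' _ _)).mul (hN'' _ _)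

theorem isHomogeneous_linear {n : ℕ} (a : Fin n → ℂ) :
    (∑ j, C (a j) * X j : MvPolynomial (Fin n) ℂ).IsHomogeneous 1 :=
  IsHomogeneous.sum _ _ _ fun j _ => by
    simpa using (isHomogeneous_C (Fin n) (a j)).mul (isHomogeneous_X ℂ j)

theorem isHomogeneous_twist (A : Matrix (Fin 3) (Fin 3) ℂ)
    (μ : Fin 6 → Matrix (Fin 3) (Fin 3) ℂ) (i k : Fin 3) :
    (((A.map C)ᵀ * pencil μ : Matrix (Fin 3) (Fin 3) (MvPolynomial (Fin 6) ℂ)) i k).IsHomogeneous 1 := by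
  rw [Matrix.mul_apply]
  exact IsHomogeneous.sum _ _ _ fun l _ => by
    have h := (isHomogeneous_C (Fin 6) (A l i)).mul (isHomogeneous_linear fun j => μ j l k)
    rw [zero_add] at h
    exact h

theorem isHomogeneous_alternatingTrace (B : Fin 3 → Matrix (Fin 3) (Fin 3) ℂ)
    (μ : Fin 6 → Matrix (Fin 3) (Fin 3) ℂ) :
    (alternatingTrace (fun z => (B z).map C) (pencil μ)).IsHomogeneous 3 :=
  (isHomogeneous_trace (isHomogeneous_twist _ μ) (isHomogeneous_twist _ μ)
    (isHomogeneous_twist _ μ)).sub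
  (isHomogeneous_trace (isHomogeneous_twist _ μ) (isHomogeneous_twist _ μ)
    (isHomogeneous_twist _ μ))

theorem evalPDeriv_mul {n : ℕ} (q : Fin (n + 1) → ℂ) (j : Fin (n + 1))
    (F G : MvPolynomial (Fin (n + 1)) ℂ) : evalPDeriv q j (F * G) =
      eval q F * evalPDeriv q j G + eval q G * evalPDeriv q j F := by
  simp only [evalPDeriv_apply, Derivation.leibniz, smul_eq_mul, map_add, map_mul]

/-- A determinant is singular where the matrix has rank at most one. -/
theorem singularAt_det {n : ℕ} {N : Matrix (Fin 3) (Fin 3) (MvPolynomial (Fin (n + 1)) ℂ)}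
    {q : Fin (n + 1) → ℂ} {a b : Fin 3 → ℂ} (hN : ∀ i k, eval q (N i k) = a i * b k) :
    SingularAt N.det q := by
  intro j
  rw [Matrix.det_fin_three]
  simp only [map_add, map_sub, evalPDeriv_mul, map_mul, hN]
  ring

/-- A trace of three factors is singular where the factors become rank-one matrices whose
row and column are orthogonal, since then all products of two factors vanish. -/
theorem singularAt_trace {n : ℕ}
    {N N' N'' : Matrix (Fin 3) (Fin 3) (MvPolynomial (Fin (n + 1)) ℂ)}
    {q : Fin (n + 1) → ℂ} {a a' a'' b : Fin 3 → ℂ} (hN : ∀ i k, eval q (N i k) = a i * b k)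
    (hN' : ∀ i k, eval q (N' i k) = a' i * b k) (hN'' : ∀ i k, eval q (N'' i k) = a'' i * b k)
    (h : ∑ i, a i * b i = 0) (h' : ∑ i, a' i * b i = 0) (h'' : ∑ i, a'' i * b i = 0) :
    SingularAt (Matrix.trace (N * N' * N'')) q := by
  intro j
  have e : (∑ i, ∑ k, evalPDeriv q j (N i k) * a' k * b i) * (∑ i, a'' i * b i) +
      (∑ i, ∑ k, evalPDeriv q j (N' i k) * a'' k * b i) * (∑ i, a i * b i) +
      (∑ i, ∑ k, evalPDeriv q j (N'' i k) * a k * b i) * (∑ i, a' i * b i) = 0 := by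
    rw [h, h', h'']
    ring
  simp only [Fin.sum_univ_three] at e
  simp only [Matrix.trace_fin_three, Matrix.mul_apply, Fin.sum_univ_three, map_add,
    evalPDeriv_mul, map_mul, hN, hN', hN'']
  linear_combination e

theorem singularAt_alternatingTrace {B : Fin 3 → Matrix (Fin 3) (Fin 3) ℂ}
    {μ : Fin 6 → Matrix (Fin 3) (Fin 3) ℂ} (hB : ∀ z j, ∑ i, ∑ k, B z i k * μ j i k = 0)
    {q : Fin 6 → ℂ} {a b : Fin 3 → ℂ} (hq : ∀ i k, pencilAt μ q i k = a i * b k) :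
    SingularAt (n := 5) (alternatingTrace (fun z => (B z).map C) (pencil μ)) q := by
  have h1 : ∀ z i k, eval q
      ((((B z).map C)ᵀ * pencil μ : Matrix (Fin 3) (Fin 3) (MvPolynomial (Fin 6) ℂ)) i k) =
      (∑ l, B z l i * a l) * b k :=
    fun z i k => by
      rw [Matrix.mul_apply, map_sum, Finset.sum_mul]
      refine Finset.sum_congr rfl fun l _ => ?_
      rw [map_mul, eval_pencil, hq]
      simp [mul_assoc]
  have h2 : ∀ z, ∑ i, (∑ l, B z l i * a l) * b i = 0 := fun z => by
    have h3 : ∑ j, (∑ i, ∑ k, B z i k * μ j i k) * q j = ∑ i, ∑ k, B z i k * pencilAt μ q i k := by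
      simp only [pencilAt, Matrix.of_apply, Finset.sum_mul, Finset.mul_sum]
      rw [Finset.sum_comm]
      refine Finset.sum_congr rfl fun i _ => ?_
      rw [Finset.sum_comm]
      exact Finset.sum_congr rfl fun k _ => Finset.sum_congr rfl fun j _ => by ring
    simp only [hB, zero_mul, Finset.sum_const_zero, hq] at h3
    rw [h3, Finset.sum_comm]
    refine Finset.sum_congr rfl fun i _ => ?_
    rw [Finset.sum_mul]
    exact Finset.sum_congr rfl fun k _ => by ring
  intro j
  rw [alternatingTrace, map_sub,
    singularAt_trace (h1 0) (h1 1) (h1 2) (h2 0) (h2 1) (h2 2) j,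
    singularAt_trace (h1 0) (h1 2) (h1 1) (h2 0) (h2 2) (h2 1) j, sub_zero]

/-- Three independent bilinear relations cut out the six-dimensional space of matrices
`pencilAt μ x`. -/
theorem exists_pencilAt_eq {B : Fin 3 → Matrix (Fin 3) (Fin 3) ℂ}
    {μ : Fin 6 → Matrix (Fin 3) (Fin 3) ℂ} (hμ : ∀ x, (∀ i k, pencilAt μ x i k = 0) → x = 0)
    (hBi : ∀ y : Fin 3 → ℂ, (∀ i k, ∑ z, B z i k * y z = 0) → y = 0)
    (hB : ∀ z j, ∑ i, ∑ k, B z i k * μ j i k = 0) (N : Matrix (Fin 3) (Fin 3) ℂ)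
    (hN : ∀ z, ∑ i, ∑ k, B z i k * N i k = 0) : ∃ x, pencilAt μ x = N := by
  let β : Matrix (Fin 3) (Fin 3 × Fin 3) ℂ := Matrix.of fun z ik => B z ik.1 ik.2
  let m : Matrix (Fin 3 × Fin 3) (Fin 6) ℂ := Matrix.of fun ik j => μ j ik.1 ik.2
  have hm : ∀ x ik, (m *ᵥ x) ik = pencilAt μ x ik.1 ik.2 := fun x ik => rfl
  have hβ : ∀ v z, (β *ᵥ v) z = ∑ i, ∑ k, B z i k * v (i, k) := fun v z => by
    rw [Matrix.mulVec, dotProduct, Fintype.sum_prod_type]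
    rfl
  have hrβ : β.rank = 3 := by
    rw [← Matrix.rank_transpose, Matrix.rank, LinearMap.finrank_range_of_inj]
    · simp
    · rw [← LinearMap.ker_eq_bot]
      exact LinearMap.ker_eq_bot'.2 fun y hy => hBi y fun i k => congrFun hy (i, k)
  have hrm : Module.finrank ℂ (LinearMap.range m.mulVecLin) = 6 := by
    rw [LinearMap.finrank_range_of_inj]
    · simp
    · rw [← LinearMap.ker_eq_bot]
      exact LinearMap.ker_eq_bot'.2 fun x hx => hμ x fun i k => by
        rw [← hm x (i, k)]
        exact congrFun hx (i, k)
  have hle : LinearMap.range m.mulVecLin ≤ LinearMap.ker β.mulVecLin := by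
    rintro _ ⟨x, rfl⟩
    rw [LinearMap.mem_ker]
    funext z
    rw [Matrix.mulVecLin_apply, Matrix.mulVecLin_apply, Matrix.mulVec_mulVec]
    have : β * m = 0 := by
      ext z j
      rw [Matrix.mul_apply]
      rw [Fintype.sum_prod_type]
      exact hB z j
    rw [this, Matrix.zero_mulVec]
  have hker := LinearMap.finrank_range_add_finrank_ker β.mulVecLin
  have hrβ' : Module.finrank ℂ (LinearMap.range β.mulVecLin) = 3 := hrβ
  simp only [Module.finrank_fintype_fun_eq_card, Fintype.card_prod, Fintype.card_fin] at hker
  have heq := Submodule.eq_of_le_of_finrank_eq hle (by omega)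
  have hmem : (fun ik : Fin 3 × Fin 3 => N ik.1 ik.2) ∈ LinearMap.ker β.mulVecLin := by
    rw [LinearMap.mem_ker]
    funext z
    rw [Matrix.mulVecLin_apply, hβ]
    exact hN z
  rw [← heq] at hmem
  obtain ⟨x, hx⟩ := hmem
  exact ⟨x, by ext i k; exact congrFun hx (i, k)⟩

/-- Cubics singular at nine points where a linear matrix drops to rank one. They are spanned by
the determinant and the alternating trace, so they are singular at every point where the matrix
has rank one, and such points are parametrised by a plane cubic curve. -/
theorem manyCommonSingularPoints_of_pencil {p : Fin 9 → Fin 6 → ℂ}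
    {B : Fin 3 → Matrix (Fin 3) (Fin 3) ℂ} {μ : Fin 6 → Matrix (Fin 3) (Fin 3) ℂ}
    {e : Fin 2 → Fin 6 →₀ ℕ}
    (hu : ∀ f : MvPolynomial (Fin 6) ℂ, f.IsHomogeneous 3 →
      (∀ i, SingularAt (n := 5) f (p i)) → (∀ l, coeff (e l) f = 0) → f = 0)
    (hμ : ∀ x, (∀ i k, pencilAt μ x i k = 0) → x = 0)
    (hBi : ∀ y : Fin 3 → ℂ, (∀ i k, ∑ z, B z i k * y z = 0) → y = 0)
    (hB : ∀ z j, ∑ i, ∑ k, B z i k * μ j i k = 0)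
    (hp : ∀ s, ∃ a b : Fin 3 → ℂ, ∀ i k, pencilAt μ (p s) i k = a i * b k)
    (x₀ x₁ : Fin 6 → ℂ)
    (hx : (pencilAt μ x₀).det * alternatingTrace B (pencilAt μ x₁) -
      (pencilAt μ x₁).det * alternatingTrace B (pencilAt μ x₀) ≠ 0) :
    ManyCommonSingularPoints (n := 5) 3 p := by
  let g : Fin 2 → MvPolynomial (Fin 6) ℂ :=
    ![(pencil μ).det, alternatingTrace (fun z => (B z).map C) (pencil μ)]
  have hsing : ∀ (q : Fin 6 → ℂ) (a b : Fin 3 → ℂ), (∀ i k, pencilAt μ q i k = a i * b k) →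
      ∀ l, SingularAt (n := 5) (g l) q := by
    intro q a b hq l
    fin_cases l
    · exact singularAt_det (n := 5) (fun i k => by rw [eval_pencil, hq])
    · exact singularAt_alternatingTrace hB hq
  have hgi : LinearIndependent ℂ g := by
    rw [Fintype.linearIndependent_iff]
    intro c hc
    have hev : ∀ x, c 0 * (pencilAt μ x).det + c 1 * alternatingTrace B (pencilAt μ x) = 0 := by
      intro x
      have h1 : eval x (pencil μ).det = (pencilAt μ x).det := by
        rw [eval_det_eq]
        simp only [eval_pencil]
        rfl
      have := congrArg (eval x) hc
      rw [Fin.sum_univ_two, map_add, smul_eval, smul_eval, map_zero] at this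
      simpa only [g, Matrix.cons_val_zero, Matrix.cons_val_one, h1, eval_alternatingTrace]
        using this
    have e0 := hev x₀
    have e1 := hev x₁
    intro l
    fin_cases l
    · exact (mul_eq_zero.1 (show c 0 * _ = 0 by
        linear_combination alternatingTrace B (pencilAt μ x₁) * e0 -
          alternatingTrace B (pencilAt μ x₀) * e1)).resolve_right hx
    · exact (mul_eq_zero.1 (show c 1 * _ = 0 by
        linear_combination (pencilAt μ x₀).det * e1 - (pencilAt μ x₁).det * e0)).resolve_right hx
  have hgd : ∀ l, (g l).IsHomogeneous 3 := by
    intro l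
    fin_cases l
    · exact isHomogeneous_det fun i k => isHomogeneous_linear _
    · exact isHomogeneous_alternatingTrace B μ
  obtain ⟨a, ha, ha'⟩ := exists_zeros_plane (by norm_num)
    (isHomogeneous_det (N := Matrix.of fun z k => ∑ i, C (B z i k) * X i)
      fun z k => isHomogeneous_linear _)
  have hb : ∀ t, ∃ b : Fin 3 → ℂ, b ≠ 0 ∧ ∃ q, ∀ i k, pencilAt μ q i k = a t i * b k := by
    intro t
    have hdet := (ha t).2
    rw [eval_det_eq] at hdet
    obtain ⟨b, hb0, hb⟩ := Matrix.exists_mulVec_eq_zero_iff.2 hdet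
    obtain ⟨q, hq⟩ := exists_pencilAt_eq hμ hBi hB (Matrix.of fun i k => a t i * b k) fun z => by
      have := congrFun hb z
      simp only [Matrix.mulVec, dotProduct, Matrix.of_apply, map_sum, map_mul, eval_C, eval_X,
        Finset.sum_mul, Pi.zero_apply] at this
      rw [← this, Finset.sum_comm]
      exact Finset.sum_congr rfl fun i _ => Finset.sum_congr rfl fun k _ => by
        rw [Matrix.of_apply, mul_assoc]
    exact ⟨b, hb0, q, fun i k => by rw [hq]; rfl⟩
  choose b hb0 q hq using hb
  refine exists_infinite_of_family Set.univ Set.infinite_univ q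
    (fun t _ => ⟨fun h0 => ?_, fun f hf hs => ?_⟩) fun t _ t' _ hne c hc => ?_
  · obtain ⟨i, hi⟩ := Function.ne_iff.1 (ha t).1
    obtain ⟨k, hk⟩ := Function.ne_iff.1 (hb0 t)
    have := hq t i k
    rw [h0] at this
    exact mul_ne_zero hi hk (by rw [← this]; simp [pencilAt])
  · obtain ⟨κ, rfl⟩ := eq_sum_of_unique (n := 5) hu hgi hgd
      (fun l s => by
        obtain ⟨a, b, h⟩ := hp s
        exact hsing _ a b h l) hf hs
    exact singularAt_sum_smul (hsing _ _ _ (hq t)) κ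
  · obtain ⟨k, hk⟩ := Function.ne_iff.1 (hb0 t')
    have hk : b t' k ≠ 0 := hk
    refine ha' t t' hne (c * b t k / b t' k) ?_
    ext i
    have h1 := hq t' i k
    have h2 : pencilAt μ (q t') i k = c * pencilAt μ (q t) i k := by
      rw [hc]
      simp only [pencilAt, Matrix.of_apply, Pi.smul_apply, smul_eq_mul, Finset.mul_sum]
      exact Finset.sum_congr rfl fun j _ => by ring
    rw [h1, hq] at h2
    simp only [Pi.smul_apply, smul_eq_mul]
    field_simp
    linear_combination h2

/-! ### Nine points of five-dimensional projective space -/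

/-- The first half of the six indices. -/
def lo : Fin 3 → Fin 6 := ![0, 1, 2]

/-- The second half of the six indices. -/
def hi : Fin 3 → Fin 6 := ![3, 4, 5]

theorem sum_lo_hi (φ : Fin 6 → ℂ) : ∑ i, φ i = ∑ i, φ (lo i) + ∑ i, φ (hi i) := by
  simp only [Fin.sum_univ_six, Fin.sum_univ_three, lo, hi, Matrix.cons_val_zero,
    Matrix.cons_val_one, Matrix.cons_val]
  ring

theorem eq_lo_or_hi (i : Fin 6) : (∃ k, i = lo k) ∨ ∃ k, i = hi k := by
  revert i
  decide

/-- Half of the matrix of coordinatewise products of two of the three vectors `c z`. -/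
def products (c : Fin 3 → Fin 6 → ℂ) (h : Fin 3 → Fin 6) : Matrix (Fin 3) (Fin 3) ℂ :=
  Matrix.of fun z k => c (z + 1) (h k) * c (z + 2) (h k)

/-- Three vectors in the kernel of the `3 × 6` matrix of coordinatewise products, given
by Cramer's rule and independent when the second half of that matrix is invertible;
`cramerRow c i` is the row of their `i`-th coordinates. -/
noncomputable def cramerRow (c : Fin 3 → Fin 6 → ℂ) : Fin 6 → Fin 3 → ℂ :=
  let Δ := (products c hi).det
  let G := (products c hi).adjugate * products c lo
  ![![Δ, 0, 0], ![0, Δ, 0], ![0, 0, Δ], -G 0, -G 1, -G 2]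

theorem cramerRow_lo (c : Fin 3 → Fin 6 → ℂ) (i k : Fin 3) :
    cramerRow c (lo i) k = if i = k then (products c hi).det else 0 := by
  fin_cases i <;> fin_cases k <;> rfl

theorem cramerRow_hi (c : Fin 3 → Fin 6 → ℂ) (i k : Fin 3) :
    cramerRow c (hi i) k = -((products c hi).adjugate * products c lo) i k := by
  fin_cases i <;> rfl

theorem sum_hi_cramerRow (c : Fin 3 → Fin 6 → ℂ) (z k : Fin 3) :
    ∑ i, c (z + 1) (hi i) * c (z + 2) (hi i) * cramerRow c (hi i) k =
      -((products c hi).det * (c (z + 1) (lo k) * c (z + 2) (lo k))) := by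
  have h : (products c hi * ((products c hi).adjugate * products c lo)) z k =
      (products c hi).det * (c (z + 1) (lo k) * c (z + 2) (lo k)) := by
    rw [← Matrix.mul_assoc, Matrix.mul_adjugate, Matrix.smul_mul, Matrix.one_mul]
    rfl
  rw [← h, Matrix.mul_apply, ← Finset.sum_neg_distrib]
  refine Finset.sum_congr rfl fun i _ => ?_
  rw [cramerRow_hi, mul_neg]
  rfl

theorem sum_cramerRow (c : Fin 3 → Fin 6 → ℂ) (z k : Fin 3) :
    ∑ i, c (z + 1) i * c (z + 2) i * cramerRow c i k = 0 := by
  rw [sum_lo_hi, sum_hi_cramerRow]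
  simp only [cramerRow_lo, mul_ite, mul_zero, Finset.sum_ite_eq', Finset.mem_univ, if_true]
  ring

/-- The coefficients of the linear conditions that orthogonality to the last three of the six
rank-one matrices `(column i of c) ⊗ (cramerRow c i)` imposes on the vector `θ`, when the `z`-th
relation is sought in the form with rows `-θₖ c (z + 2) k` and `θₖ c (z + 1) k`; orthogonality
to the first three is automatic for this form. -/
noncomputable def conditions (c : Fin 3 → Fin 6 → ℂ) (z i k : Fin 3) : ℂ :=
  cramerRow c (hi i) k * (c (z + 1) (lo k) * c (z + 2) (hi i) - c (z + 1) (hi i) * c (z + 2) (lo k))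

/-- The cross product of the first two rows of `conditions c z`, a vector `θ` satisfying these
conditions. -/
noncomputable def solution (c : Fin 3 → Fin 6 → ℂ) (z k : Fin 3) : ℂ :=
  conditions c z 0 (k + 1) * conditions c z 1 (k + 2) -
    conditions c z 0 (k + 2) * conditions c z 1 (k + 1)

/-- The `z`-th bilinear relation, in which the `z`-th coordinate of the left factor does not
occur. -/
noncomputable def relation (c : Fin 3 → Fin 6 → ℂ) (z : Fin 3) : Matrix (Fin 3) (Fin 3) ℂ :=
  Matrix.of fun a k => (if a = z + 1 then - c (z + 2) (lo k) * solution c z k else 0) +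
    if a = z + 2 then c (z + 1) (lo k) * solution c z k else 0

/-- The three rows of `conditions c z` are dependent, so `solution c z` is orthogonal to the
last row too. -/
theorem conditions_solution {c : Fin 3 → Fin 6 → ℂ} (hc : ∀ z, c z 5 ≠ 0) (z i : Fin 3) :
    ∑ k, conditions c z i k * solution c z k = 0 := by
  have hdep : ∀ k, ∑ i, c z (hi i) * conditions c z i k = 0 := fun k => by
    have h1 := sum_hi_cramerRow c (z + 1) k
    have h2 := sum_hi_cramerRow c (z + 2) k
    have e1 : z + 1 + 1 = z + 2 := by fin_cases z <;> rfl
    have e2 : z + 1 + 2 = z := by fin_cases z <;> rfl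
    have e3 : z + 2 + 1 = z := by fin_cases z <;> rfl
    have e4 : z + 2 + 2 = z + 1 := by fin_cases z <;> rfl
    rw [e1, e2] at h1
    rw [e3, e4] at h2
    simp only [Fin.sum_univ_three, conditions] at h1 h2 ⊢
    linear_combination c (z + 1) (lo k) * h1 - c (z + 2) (lo k) * h2
  have h5 : hi 2 = 5 := rfl
  have d0 := hdep 0
  have d1 := hdep 1
  have d2 := hdep 2
  simp only [Fin.sum_univ_three, h5] at d0 d1 d2
  have a1 : (1 : Fin 3) + 1 = 2 := rfl
  have a2 : (1 : Fin 3) + 2 = 0 := rfl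
  have a3 : (2 : Fin 3) + 1 = 0 := rfl
  have a4 : (2 : Fin 3) + 2 = 1 := rfl
  simp only [Fin.sum_univ_three, solution, zero_add, a1, a2, a3, a4]
  fin_cases i
  · simp only [Fin.zero_eta]
    ring
  · simp only [Fin.mk_one]
    ring
  · simp only [Fin.reduceFinMk]
    refine (mul_eq_zero.1 (?_ : c z 5 * _ = 0)).resolve_left (hc z)
    linear_combination
      (conditions c z 0 1 * conditions c z 1 2 - conditions c z 0 2 * conditions c z 1 1) * d0 +
      (conditions c z 0 2 * conditions c z 1 0 - conditions c z 0 0 * conditions c z 1 2) * d1 +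
      (conditions c z 0 0 * conditions c z 1 1 - conditions c z 0 1 * conditions c z 1 0) * d2

theorem sum_relation (c : Fin 3 → Fin 6 → ℂ) (z : Fin 3) (x y : Fin 3 → ℂ) :
    ∑ a, ∑ k, relation c z a k * (x a * y k) = ∑ k, y k *
      (c (z + 1) (lo k) * x (z + 2) - x (z + 1) * c (z + 2) (lo k)) * solution c z k := by
  rw [Finset.sum_comm]
  refine Finset.sum_congr rfl fun k _ => ?_
  simp only [relation, Matrix.of_apply, add_mul, ite_mul, zero_mul, Finset.sum_add_distrib,
    Finset.sum_ite_eq', Finset.mem_univ, if_true]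
  ring

theorem relation_column {c : Fin 3 → Fin 6 → ℂ} (hc : ∀ z, c z 5 ≠ 0) (z : Fin 3) (i : Fin 6) :
    ∑ a, ∑ k, relation c z a k * (c a i * cramerRow c i k) = 0 := by
  rw [sum_relation c z (fun a => c a i)]
  obtain ⟨j, rfl⟩ | ⟨j, rfl⟩ := eq_lo_or_hi i
  · refine Finset.sum_eq_zero fun k _ => ?_
    rw [cramerRow_lo]
    split_ifs with h
    · subst h
      ring
    · ring
  · exact conditions_solution hc z j

/-- The linear system of matrices that takes at the `j`-th coordinate vector the value
`∑ Y i j • (column i of c) ⊗ (cramerRow c i)`. -/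
noncomputable def system (Y : Matrix (Fin 6) (Fin 6) ℂ) (c : Fin 3 → Fin 6 → ℂ) (j : Fin 6) :
    Matrix (Fin 3) (Fin 3) ℂ :=
  Matrix.of fun a k => ∑ i, Y i j * (c a i * cramerRow c i k)

theorem pencilAt_system (Y : Matrix (Fin 6) (Fin 6) ℂ) (c : Fin 3 → Fin 6 → ℂ) (x : Fin 6 → ℂ)
    (a k : Fin 3) : pencilAt (system Y c) x a k = ∑ i, (Y *ᵥ x) i * (c a i * cramerRow c i k) := by
  simp only [pencilAt, system, Matrix.of_apply, Matrix.mulVec, dotProduct, Finset.sum_mul]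
  rw [Finset.sum_comm]
  exact Finset.sum_congr rfl fun i _ => Finset.sum_congr rfl fun j _ => by ring

theorem relation_system {c : Fin 3 → Fin 6 → ℂ} (hc : ∀ z, c z 5 ≠ 0)
    (Y : Matrix (Fin 6) (Fin 6) ℂ) (z : Fin 3) (j : Fin 6) :
    ∑ a, ∑ k, relation c z a k * system Y c j a k = 0 := by
  have h : ∑ i, Y i j * ∑ a, ∑ k, relation c z a k * (c a i * cramerRow c i k) = 0 :=
    Finset.sum_eq_zero fun i _ => by rw [relation_column hc, mul_zero]
  rw [← h]
  simp only [system, Matrix.of_apply, Finset.mul_sum]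
  simp only [Fin.sum_univ_three, Fin.sum_univ_six]
  ring

/-- At the three vectors `c z` themselves only one row of the matrix survives. -/
theorem pencilAt_system_self (Y : Matrix (Fin 6) (Fin 6) ℂ) (c : Fin 3 → Fin 6 → ℂ)
    (x : Fin 6 → ℂ) (z : Fin 3) (hx : Y *ᵥ x = c z) (a k : Fin 3) :
    pencilAt (system Y c) x a k =
      (if a = z then 1 else 0) * ∑ i, c z i * (c z i * cramerRow c i k) := by
  rw [pencilAt_system, hx]
  split_ifs with h
  · rw [h, one_mul]
  · rw [zero_mul]
    obtain ⟨y, h⟩ : ∃ y : Fin 3, (y + 1 = z ∧ y + 2 = a) ∨ (y + 1 = a ∧ y + 2 = z) :=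
      (by decide : ∀ a z : Fin 3, a ≠ z →
        ∃ y : Fin 3, (y + 1 = z ∧ y + 2 = a) ∨ (y + 1 = a ∧ y + 2 = z)) a z h
    rw [← sum_cramerRow c y k]
    obtain ⟨rfl, rfl⟩ | ⟨rfl, rfl⟩ := h <;>
      exact Finset.sum_congr rfl fun i _ => by ring

/-- The matrix whose columns are the first six points. -/
def frame (t : Fin 9 × Fin 6 → ℂ) : Matrix (Fin 6) (Fin 6) ℂ :=
  Matrix.of fun k i => t (Fin.castAdd 3 i, k)

/-- The coordinates of the last three points with respect to the first six, up to the common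
factor `det (frame t)`. -/
noncomputable def coords (t : Fin 9 × Fin 6 → ℂ) : Fin 3 → Fin 6 → ℂ :=
  fun z => (frame t).adjugate *ᵥ fun k => t (Fin.natAdd 6 z, k)

theorem exists_rank_one (t : Fin 9 × Fin 6 → ℂ) (s : Fin 9) : ∃ a b : Fin 3 → ℂ, ∀ i k,
    pencilAt (system (frame t).adjugate (coords t)) (fun j => t (s, j)) i k = a i * b k := by
  refine Fin.addCases (m := 6) (n := 3) (motive := fun s => ∃ a b : Fin 3 → ℂ, ∀ i k,
    pencilAt (system (frame t).adjugate (coords t)) (fun j => t (s, j)) i k = a i * b k)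
    (fun s => ?_) (fun z => ?_) s
  · refine ⟨fun a => (frame t).det * coords t a s, cramerRow (coords t) s, fun a k => ?_⟩
    have h : ∀ i, ((frame t).adjugate *ᵥ fun j => t (Fin.castAdd 3 s, j)) i =
        if i = s then (frame t).det else 0 := fun i => by
      have := congrFun (congrFun (Matrix.adjugate_mul (frame t)) i) s
      rw [Matrix.smul_apply, Matrix.one_apply, smul_eq_mul, mul_ite, mul_one, mul_zero] at this
      exact this
    rw [pencilAt_system]
    simp only [h, ite_mul, zero_mul, Finset.sum_ite_eq', Finset.mem_univ, if_true]
    ring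
  · exact ⟨_, _, fun a k => pencilAt_system_self _ _ _ z rfl a k⟩

theorem polyFun_frame (k i : Fin 6) : PolyFun fun t => frame t k i := PolyFun.coord _

theorem polyFun_coords (z : Fin 3) (i : Fin 6) : PolyFun fun t => coords t z i := by
  simp only [coords, Matrix.mulVec, dotProduct]
  exact PolyFun.sum _ fun _ => (PolyFun.adjugate polyFun_frame _ _).mul (PolyFun.coord _)

theorem polyFun_products (h : Fin 3 → Fin 6) (z k : Fin 3) :
    PolyFun fun t => products (coords t) h z k := (polyFun_coords _ _).mul (polyFun_coords _ _)

theorem polyFun_cramerRow (i : Fin 6) (k : Fin 3) :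
    PolyFun fun t => cramerRow (coords t) i k := by
  obtain ⟨j, rfl⟩ | ⟨j, rfl⟩ := eq_lo_or_hi i
  · simp only [cramerRow_lo]
    split_ifs
    · exact PolyFun.det (polyFun_products _)
    · exact PolyFun.const 0
  · simp only [cramerRow_hi]
    exact (PolyFun.matMul (PolyFun.adjugate (polyFun_products _)) (polyFun_products _) _ _).neg

theorem polyFun_conditions (z i k : Fin 3) : PolyFun fun t => conditions (coords t) z i k :=
  (polyFun_cramerRow _ _).mul (((polyFun_coords _ _).mul (polyFun_coords _ _)).sub
    ((polyFun_coords _ _).mul (polyFun_coords _ _)))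

theorem polyFun_solution (z k : Fin 3) : PolyFun fun t => solution (coords t) z k :=
  ((polyFun_conditions _ _ _).mul (polyFun_conditions _ _ _)).sub
    ((polyFun_conditions _ _ _).mul (polyFun_conditions _ _ _))

theorem polyFun_relation (z a k : Fin 3) : PolyFun fun t => relation (coords t) z a k := by
  simp only [relation, Matrix.of_apply]
  refine PolyFun.add ?_ ?_ <;> split_ifs
  exacts [(polyFun_coords _ _).neg.mul (polyFun_solution _ _), PolyFun.const 0,
    (polyFun_coords _ _).mul (polyFun_solution _ _), PolyFun.const 0]

theorem polyFun_system (j : Fin 6) (a k : Fin 3) :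
    PolyFun fun t => system (frame t).adjugate (coords t) j a k := by
  simp only [system, Matrix.of_apply]
  exact PolyFun.sum _ fun _ => (PolyFun.adjugate polyFun_frame _ _).mul
    ((polyFun_coords _ _).mul (polyFun_cramerRow _ _))

theorem polyFun_pencilAt (x : Fin 6 → ℂ) (a k : Fin 3) :
    PolyFun fun t => pencilAt (system (frame t).adjugate (coords t)) x a k := by
  simp only [pencilAt, Matrix.of_apply]
  exact PolyFun.sum _ fun _ => (polyFun_system _ _ _).mul (PolyFun.const _)

theorem polyFun_trace {ι : Type} {N N' N'' : (ι → ℂ) → Matrix (Fin 3) (Fin 3) ℂ}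
    (hN : ∀ i k, PolyFun fun t => N t i k) (hN' : ∀ i k, PolyFun fun t => N' t i k)
    (hN'' : ∀ i k, PolyFun fun t => N'' t i k) :
    PolyFun fun t => Matrix.trace (N t * N' t * N'' t) :=
  PolyFun.sum _ fun _ => PolyFun.matMul (PolyFun.matMul hN hN') hN'' _ _

theorem polyFun_alternatingTrace (x : Fin 6 → ℂ) : PolyFun fun t =>
    alternatingTrace (relation (coords t))
      (pencilAt (system (frame t).adjugate (coords t)) x) := by
  have h : ∀ z i k, PolyFun fun t => ((relation (coords t) z)ᵀ *
      pencilAt (system (frame t).adjugate (coords t)) x) i k := fun z =>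
    PolyFun.matMul (fun a b => polyFun_relation z b a) (polyFun_pencilAt x)
  exact (polyFun_trace (h 0) (h 1) (h 2)).sub (polyFun_trace (h 0) (h 2) (h 1))

/-- Nine points at which the open conditions on the linear system of matrices hold; the first
six are the coordinate vectors. -/
def framedPoints : Fin 9 → Fin 6 → ℤ :=
  ![![1, 0, 0, 0, 0, 0], ![0, 1, 0, 0, 0, 0], ![0, 0, 1, 0, 0, 0], ![0, 0, 0, 1, 0, 0],
    ![0, 0, 0, 0, 1, 0], ![0, 0, 0, 0, 0, 1], ![1, 1, 0, 1, -1, -1], ![0, 1, -1, 1, -1, 1],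
    ![1, 0, 1, -1, -1, -1]]

/-- The parameters of `framedPoints`. -/
def base : Fin 9 × Fin 6 → ℂ := fun ij => (framedPoints ij.1 ij.2 : ℂ)

theorem frame_base : frame base = 1 := by
  ext i k
  have h : framedPoints (Fin.castAdd 3 k) i = if i = k then 1 else 0 := by
    revert i k
    decide
  rw [frame, Matrix.of_apply, Matrix.one_apply, base, h]
  split_ifs <;> simp

theorem adjugate_frame_base : (frame base).adjugate = 1 := by
  rw [frame_base, Matrix.adjugate_one]

theorem coords_base : coords base =
    ![![1, 1, 0, 1, -1, -1], ![0, 1, -1, 1, -1, 1], ![1, 0, 1, -1, -1, -1]] := by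
  ext z i
  rw [coords, adjugate_frame_base, Matrix.one_mulVec]
  fin_cases z <;> fin_cases i <;> simp [base, framedPoints, Fin.natAdd]

theorem products_base_lo : products (coords base) lo = !![0, 0, -1; 1, 0, 0; 0, 1, 0] := by
  rw [coords_base]
  ext z k
  fin_cases z <;> fin_cases k <;> simp [products, lo]

theorem products_base_hi :
    products (coords base) hi = !![-1, 1, -1; -1, 1, 1; 1, 1, -1] := by
  rw [coords_base]
  ext z k
  fin_cases z <;> fin_cases k <;> simp [products, hi]

theorem cramerRow_base : cramerRow (coords base) =
    ![![4, 0, 0], ![0, 4, 0], ![0, 0, 4], ![0, -2, -2], ![-2, -2, 0], ![-2, 0, -2]] := by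
  have hdet : (products (coords base) hi).det = 4 := by
    rw [products_base_hi, Matrix.det_fin_three]
    simp
    norm_num
  have hG : (products (coords base) hi).adjugate * products (coords base) lo =
      !![0, 2, 2; 2, 2, 0; 2, 0, 2] := by
    rw [products_base_hi, products_base_lo, Matrix.adjugate_fin_three]
    ext i k
    fin_cases i <;> fin_cases k <;> simp [Matrix.mul_apply, Fin.sum_univ_three] <;> norm_num
  ext i k
  obtain ⟨j, rfl⟩ | ⟨j, rfl⟩ := eq_lo_or_hi i
  · rw [cramerRow_lo, hdet]
    fin_cases j <;> fin_cases k <;> simp [lo]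
  · rw [cramerRow_hi, hG]
    fin_cases j <;> fin_cases k <;> simp [hi]

theorem relation_base : relation (coords base) =
    ![!![0, 0, 0; 0, 0, -4; 0, 0, -4], !![-4, 0, 0; 0, 0, 0; 4, 0, 0],
      !![0, 4, 0; 0, -4, 0; 0, 0, 0]] := by
  ext z i k
  simp only [relation, solution, conditions, cramerRow_base]
  simp only [coords_base]
  fin_cases z <;> fin_cases i <;> fin_cases k <;> simp [lo, hi] <;> norm_num

theorem pencilAt_base (x : Fin 6 → ℂ) :
    pencilAt (system (frame base).adjugate (coords base)) x =
      !![4 * x 0 + 2 * x 4 + 2 * x 5, 4 * x 1 - 2 * x 3 + 2 * x 4, 2 * x 5 - 2 * x 3;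
        2 * x 4 - 2 * x 5, 4 * x 1 - 2 * x 3 + 2 * x 4, -4 * x 2 - 2 * x 3 - 2 * x 5;
        4 * x 0 + 2 * x 4 + 2 * x 5, 2 * x 3 + 2 * x 4, 4 * x 2 + 2 * x 3 + 2 * x 5] := by
  ext a k
  rw [pencilAt_system, adjugate_frame_base, Matrix.one_mulVec, cramerRow_base, coords_base]
  fin_cases a <;> fin_cases k <;> simp [Fin.sum_univ_six] <;> ring

theorem cubic_case : Generic fun t : Fin 9 × Fin 6 → ℂ =>
    ManyCommonSingularPoints (n := 5) 3 fun i j => t (i, j) := by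
  have h5 : Generic fun t : Fin 9 × Fin 6 → ℂ => coords t 0 5 * coords t 1 5 * coords t 2 5 ≠ 0 :=
    Generic.of_polyFun (((polyFun_coords _ _).mul (polyFun_coords _ _)).mul (polyFun_coords _ _))
      base (by simp [coords_base]) fun t ht => ht
  have hμ := Generic.injective (α := Fin 3 × Fin 3) (β := Fin 6)
    (N := fun t => Matrix.of fun ik j => system (frame t).adjugate (coords t) j ik.1 ik.2)
    (fun _ _ => polyFun_system _ _ _) base (fun x hx => by
      have h : ∀ i k, pencilAt (system (frame base).adjugate (coords base)) x i k = 0 :=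
        fun i k => congrFun hx (i, k)
      rw [pencilAt_base] at h
      have h1 := h 0 0
      have h2 := h 0 1
      have h3 := h 0 2
      have h4 := h 1 0
      have h6 := h 2 1
      have h7 := h 2 2
      simp at h1 h2 h3 h4 h6 h7
      have x3 : x 3 = 0 := by linear_combination (1 / 4) * (h6 - h4 - h3)
      have x4 : x 4 = 0 := by linear_combination (1 / 2) * h6 - x3
      have x5 : x 5 = 0 := by linear_combination (1 / 2) * h3 + x3
      have x0 : x 0 = 0 := by linear_combination (1 / 4) * h1 - (1 / 2) * x4 - (1 / 2) * x5
      have x1 : x 1 = 0 := by linear_combination (1 / 4) * h2 + (1 / 2) * x3 - (1 / 2) * x4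
      have x2 : x 2 = 0 := by linear_combination (1 / 4) * h7 - (1 / 2) * x3 - (1 / 2) * x5
      ext i
      fin_cases i
      exacts [x0, x1, x2, x3, x4, x5])
  have hBi := Generic.injective (α := Fin 3 × Fin 3) (β := Fin 3)
    (N := fun t => Matrix.of fun ik z => relation (coords t) z ik.1 ik.2)
    (fun _ _ => polyFun_relation _ _ _) base (fun y hy => by
      have h : ∀ i k, ∑ z, relation (coords base) z i k * y z = 0 := fun i k => congrFun hy (i, k)
      rw [relation_base] at h
      have h0 := h 1 2
      have h1 := h 0 0
      have h2 := h 0 1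
      simp [Fin.sum_univ_three] at h0 h1 h2
      ext i
      fin_cases i
      exacts [h0, h1, h2])
  have hx : Generic fun t : Fin 9 × Fin 6 → ℂ =>
      (pencilAt (system (frame t).adjugate (coords t)) ![1, 1, 0, 1, 0, 0]).det *
        alternatingTrace (relation (coords t))
          (pencilAt (system (frame t).adjugate (coords t)) ![1, 1, 1, 0, 0, 0]) -
      (pencilAt (system (frame t).adjugate (coords t)) ![1, 1, 1, 0, 0, 0]).det *
        alternatingTrace (relation (coords t))
          (pencilAt (system (frame t).adjugate (coords t)) ![1, 1, 0, 1, 0, 0]) ≠ 0 :=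
    Generic.of_polyFun (((PolyFun.det (polyFun_pencilAt _)).mul (polyFun_alternatingTrace _)).sub
      ((PolyFun.det (polyFun_pencilAt _)).mul (polyFun_alternatingTrace _))) base (by
        simp only [pencilAt_base, relation_base, alternatingTrace, Matrix.trace_fin_three,
          Matrix.mul_apply, Fin.sum_univ_three, Matrix.det_fin_three, Matrix.transpose_apply]
        simp
        norm_num) fun t ht => ht
  refine ((Generic.singular_unique _ _ cubic_unique).and (h5.and (hμ.and (hBi.and hx)))).mono ?_
  rintro t ⟨hu, h5, hμ, hBi, hx⟩
  have hc : ∀ z, coords t z 5 ≠ 0 := by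
    intro z
    fin_cases z
    exacts [left_ne_zero_of_mul (left_ne_zero_of_mul h5),
      right_ne_zero_of_mul (left_ne_zero_of_mul h5), right_ne_zero_of_mul h5]
  exact manyCommonSingularPoints_of_pencil (B := relation (coords t))
    (μ := system (frame t).adjugate (coords t)) hu
    (fun x h => hμ x (_root_.funext fun ik => h ik.1 ik.2))
    (fun y h => hBi y (_root_.funext fun ik => h ik.1 ik.2))
    (relation_system hc _) (exists_rank_one t) _ _ hx

theorem common_singular_locus_exceptional (d n r : ℕ)
    (h : (d, n, r) = (6, 2, 9) ∨ (d, n, r) = (4, 3, 8) ∨ (d, n, r) = (3, 5, 9)) :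
    Generic (ι := Fin r × Fin (n + 1)) fun t =>
      let p : Fin r → Fin (n + 1) → ℂ := fun i j => t (i, j)
      ∃ Q : Set (Fin (n + 1) → ℂ), Q.Infinite ∧
        (∀ q ∈ Q, q ≠ 0 ∧
          ∀ f : MvPolynomial (Fin (n + 1)) ℂ, f.IsHomogeneous d →
            (∀ i, SingularAt f (p i)) → SingularAt f q) ∧
        (∀ q ∈ Q, ∀ q' ∈ Q, q ≠ q' → ∀ c : ℂ, q' ≠ c • q) := by
  rcases h with h | h | h <;> obtain ⟨rfl, rfl, rfl⟩ := by simpa only [Prod.mk.injEq] using h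
  · exact sextic_case
  · exact quartic_case
  · exact cubic_case
end

section
/- For a generic choice of 8 points p₁,…,p₈ ∈ ℂ⁴, the ℂ-vector space of homogeneous polynomials of degree 4 in ℂ[x₀,…,x₃] that are singular at all of p₁,…,p₈ is 3-dimensional, and every element of this space is a product q₁·q₂ of two homogeneous quadratic polynomials, each of which vanishes at all eight points. In other words, the net of quartic surfaces singular at 8 general points consists of pairs of quadrics. -/
open MvPolynomial

/-!
Being singular at eight points imposes `32` linear conditions on the `35`-dimensional space of
quartics, and vanishing at them imposes `8` conditions on the `10`-dimensional space of quadrics.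
So through any eight points there pass two independent quadrics `A`, `B`, and `A²`, `AB`, `B²` are
three independent quartics singular at all eight points (a product of two polynomials vanishing at
a point is singular there). Once the space of singular quartics is known to have dimension at most
`3`, it is spanned by these three products, and a binary quadratic form in `A`, `B` over `ℂ` splits
into two linear factors, each of which is a quadric through the points.

The bound `≤ 3` is an open condition: it suffices that the `32` gradient functionals together with
three fixed coefficient functionals are injective on quartics, and a linear map with polynomial
dependence on parameters that is injective at one parameter value is injective generically
(`generic_injective`). The value used is the four coordinate points together with the four points
`(0,1,1,1)`, …, `(1,1,1,0)` (`eq_zero_of_basePoint`). Write `c_ij` for the coefficient of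
`xᵢ²xⱼ²`. Singularity at the coordinate points kills all monomials `xᵢ⁴`, `xᵢ³xⱼ`. Singularity at
the point with zeroth coordinate `0`, in the directions of the plane `x₀ = 0`, expresses the
coefficients of `x₁²x₂x₃`, `x₁x₂²x₃`, `x₁x₂x₃²` through `c₁₂, c₁₃, c₂₃`, and the remaining
derivative `∂₀` then says that the coefficient of `x₀x₁x₂x₃` is `2 (c₁₂ + c₁₃ + c₂₃)`; similarly for
the other planes. If `c₀₁ = c₀₂ = c₀₃ = 0`, the four resulting equations force everything to vanish.
-/

/-- Injectivity of a linear map depending polynomially on parameters is a generic property as soon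
as it holds for one parameter value `t₀`: with `G` a left inverse of `L t₀`, the polynomial
`det (G ∘ L t)` in `t` takes the value `1` at `t₀`, and `L t` is injective where it is nonzero. -/
lemma generic_injective {ι R V : Type} [Fintype ι] [Fintype R] [AddCommGroup V] [Module ℂ V]
    [FiniteDimensional ℂ V] (L : (ι → ℂ) → V →ₗ[ℂ] (R → ℂ))
    (hL : ∀ v r, ∃ P : MvPolynomial ι ℂ, ∀ t, L t v r = eval t P)
    (t₀ : ι → ℂ) (h₀ : Function.Injective (L t₀)) :
    Generic fun t => Function.Injective (L t) := by
  classical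
  obtain ⟨G, hG⟩ := (L t₀).exists_leftInverse_of_injective (LinearMap.ker_eq_bot.2 h₀)
  let b := Module.finBasis ℂ V
  choose P hP using hL
  let N : Matrix _ _ ℂ := LinearMap.toMatrix (Pi.basisFun ℂ R) b G
  let M : Matrix R (Fin (Module.finrank ℂ V)) (MvPolynomial ι ℂ) := Matrix.of fun r j => P (b j) r
  let Q : Matrix (Fin (Module.finrank ℂ V)) (Fin (Module.finrank ℂ V)) (MvPolynomial ι ℂ) :=
    (N.map (C : ℂ →+* MvPolynomial ι ℂ) : Matrix _ _ (MvPolynomial ι ℂ)) * M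
  have key : ∀ t, eval t Q.det = LinearMap.det (G ∘ₗ L t) := by
    intro t
    rw [← LinearMap.det_toMatrix b, LinearMap.toMatrix_comp b (Pi.basisFun ℂ R) b,
      RingHom.map_det, RingHom.mapMatrix_apply]
    congr 1
    ext i j
    simp [Q, N, M, Matrix.mul_apply, LinearMap.toMatrix_apply, hP]
  refine ⟨Q.det, fun h => ?_, fun t ht => ?_⟩
  · have := key t₀
    rw [h, hG] at this
    simp at this
  · rw [key] at ht
    have := (LinearMap.equivOfDetNeZero (G ∘ₗ L t) ht).injective
    exact Function.Injective.of_comp (f := G) this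

lemma polynomial_evalPDeriv {κ : Type} {n : ℕ} (f : MvPolynomial (Fin (n + 1)) ℂ) (k : κ)
    (l : Fin (n + 1)) : ∃ P : MvPolynomial (κ × Fin (n + 1)) ℂ, ∀ t,
      evalPDeriv (fun j => t (k, j)) l f = eval t P := by
  refine ⟨rename (fun j => (k, j)) (pderiv l f), fun t => ?_⟩
  rw [eval_rename]
  simp [evalPDeriv, evalAt, aeval_eq_eval, Function.comp_def]

/-- The exponent vector of `x₀ᵃ x₁ᵇ x₂ᶜ x₃ᵈ`. -/
noncomputable abbrev mon (a b c d : ℕ) : Fin 4 →₀ ℕ := Finsupp.equivFunOnFinite.symm ![a, b, c, d]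

/-- Expansion of `(∂f/∂xₗ)(p)` over the monomials of degree four. The truncated subtraction in the
exponent `e l - 1` is harmless, as the factor `e l` vanishes when `e l = 0`. -/
lemma evalPDeriv_eq_sum_s5 {f : MvPolynomial (Fin 4) ℂ} (hf : f.IsHomogeneous 4) (p : Fin 4 → ℂ)
    (l : Fin 4) : evalPDeriv p l f = ∑ e ∈ Finset.Nat.antidiagonalTuple 4 4,
      coeff (Finsupp.equivFunOnFinite.symm e) f *
        (e l * ∏ s, p s ^ (e s - if s = l then 1 else 0)) := by
  have hsum : f = ∑ e ∈ Finset.Nat.antidiagonalTuple 4 4,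
      monomial (Finsupp.equivFunOnFinite.symm e) (coeff (Finsupp.equivFunOnFinite.symm e) f) := by
    ext m
    rw [coeff_sum]
    simp only [coeff_monomial]
    by_cases hm : m.degree = 4
    · rw [Finset.sum_eq_single (⇑m)]
      · simp
      · intro e _ he
        rw [if_neg]
        rintro rfl
        exact he rfl
      · intro h
        refine absurd ?_ h
        rw [Finset.Nat.mem_antidiagonalTuple, ← Finsupp.degree_eq_sum, hm]
    · rw [hf.coeff_eq_zero hm, Finset.sum_eq_zero]
      intro e he
      rw [if_neg]
      rintro rfl
      apply hm
      rw [Finset.Nat.mem_antidiagonalTuple] at he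
      exact (Finsupp.degree_eq_sum _).trans he
  conv_lhs => rw [hsum]
  rw [map_sum]
  refine Finset.sum_congr rfl fun e _ => ?_
  simp only [evalPDeriv, evalAt, LinearMap.comp_apply, AlgHom.toLinearMap_apply,
    Derivation.coeFn_coe, pderiv_monomial,
    aeval_monomial, mul_assoc, Algebra.algebraMap_self, RingHom.id_apply]
  rw [Finsupp.prod_fintype _ _ (by simp)]
  simp [Finsupp.single_apply, eq_comm]

/-- The four coordinate points and the four points with one coordinate `0` and the others `1`. -/
def basePoint : Fin 8 → Fin 4 → ℂ :=
  ![![1, 0, 0, 0], ![0, 1, 0, 0], ![0, 0, 1, 0], ![0, 0, 0, 1],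
    ![0, 1, 1, 1], ![1, 0, 1, 1], ![1, 1, 0, 1], ![1, 1, 1, 0]]

lemma antidiagonalTuple_four_four : Finset.Nat.antidiagonalTuple 4 4 =
   {![4, 0, 0, 0], ![0, 4, 0, 0], ![0, 0, 4, 0], ![0, 0, 0, 4],
    ![3, 1, 0, 0], ![3, 0, 1, 0], ![3, 0, 0, 1], ![1, 3, 0, 0], ![0, 3, 1, 0], ![0, 3, 0, 1],
    ![1, 0, 3, 0], ![0, 1, 3, 0], ![0, 0, 3, 1], ![1, 0, 0, 3], ![0, 1, 0, 3], ![0, 0, 1, 3],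
    ![2, 2, 0, 0], ![2, 0, 2, 0], ![2, 0, 0, 2], ![0, 2, 2, 0], ![0, 2, 0, 2], ![0, 0, 2, 2],
    ![2, 1, 1, 0], ![2, 1, 0, 1], ![2, 0, 1, 1], ![1, 2, 1, 0], ![1, 2, 0, 1], ![0, 2, 1, 1],
    ![1, 1, 2, 0], ![1, 0, 2, 1], ![0, 1, 2, 1], ![1, 1, 0, 2], ![1, 0, 1, 2], ![0, 1, 1, 2],
    ![1, 1, 1, 1]} := by
  decide +kernel

set_option maxHeartbeats 4000000 in
/-- The linear system of `eq_zero_of_basePoint`, for the coefficients `c e` of a quartic. -/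
lemma coeff_eq_zero_of_basePoint (c : (Fin 4 → ℕ) → ℂ)
    (hs : ∀ k l, ∑ e ∈ Finset.Nat.antidiagonalTuple 4 4, c e *
      (e l * ∏ s, basePoint k s ^ (e s - if s = l then 1 else 0)) = 0)
    (h₁ : c ![2, 2, 0, 0] = 0) (h₂ : c ![2, 0, 2, 0] = 0) (h₃ : c ![2, 0, 0, 2] = 0) :
    ∀ e ∈ Finset.Nat.antidiagonalTuple 4 4, c e = 0 := by
  have expand : ∀ k l, _ := fun k l => by
    have := hs k l
    rw [antidiagonalTuple_four_four] at this
    repeat rw [Finset.sum_insert (by decide)] at this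
    rw [Finset.sum_singleton] at this
    exact this
  clear hs
  have H0 := fun k => expand k 0
  simp [Fin.prod_univ_four] at H0
  have H1 := fun k => expand k 1
  simp [Fin.prod_univ_four] at H1
  have H2 := fun k => expand k 2
  simp [Fin.prod_univ_four] at H2
  have H3 := fun k => expand k 3
  simp [Fin.prod_univ_four] at H3
  -- `Hkl` is the vanishing of the derivative with index `l` at the base point with index `k`.
  have H00 := H0 0
  have H01 := H1 0
  have H02 := H2 0
  have H03 := H3 0
  have H10 := H0 1
  have H11 := H1 1
  have H12 := H2 1
  have H13 := H3 1
  have H20 := H0 2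
  have H21 := H1 2
  have H22 := H2 2
  have H23 := H3 2
  have H30 := H0 3
  have H31 := H1 3
  have H32 := H2 3
  have H33 := H3 3
  have H40 := H0 4
  have H41 := H1 4
  have H42 := H2 4
  have H43 := H3 4
  have H50 := H0 5
  have H51 := H1 5
  have H52 := H2 5
  have H53 := H3 5
  have H60 := H0 6
  have H61 := H1 6
  have H62 := H2 6
  have H63 := H3 6
  have H70 := H0 7
  have H71 := H1 7
  have H72 := H2 7
  have H73 := H3 7
  simp [basePoint] at H00 H01 H02 H03 H10 H11 H12 H13 H20 H21 H22 H23 H30 H31 H32 H33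
  simp [basePoint] at H40 H41 H42 H43 H50 H51 H52 H53 H60 H61 H62 H63 H70 H71 H72 H73
  rw [antidiagonalTuple_four_four]
  simp only [Finset.forall_mem_insert, Finset.mem_singleton, forall_eq]
  simp only [H00, H01, H02, H03, H10, H11, H12, H13, H20, H21, H22, H23, H30, H31, H32, H33,
    zero_mul, zero_add] at H40 H41 H42 H43 H50 H51 H52 H53 H60 H61 H62 H63 H70 H71 H72 H73
  clear expand H0 H1 H2 H3
  -- `Goa` solves the equations of the plane `xₒ = 0` for the coefficient of `xₐ² x_b x_c`,
  -- where `{o, a, b, c} = {0, 1, 2, 3}`.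
  have G01 : c ![0, 2, 1, 1] = c ![0, 0, 2, 2] - c ![0, 2, 2, 0] - c ![0, 2, 0, 2] := by
    linear_combination (3 * H41 - H42 - H43) / 4
  have G02 : c ![0, 1, 2, 1] = c ![0, 2, 0, 2] - c ![0, 2, 2, 0] - c ![0, 0, 2, 2] := by
    linear_combination (3 * H42 - H41 - H43) / 4
  have G03 : c ![0, 1, 1, 2] = c ![0, 2, 2, 0] - c ![0, 2, 0, 2] - c ![0, 0, 2, 2] := by
    linear_combination (3 * H43 - H41 - H42) / 4
  have G10 : c ![2, 0, 1, 1] = c ![0, 0, 2, 2] - c ![2, 0, 2, 0] - c ![2, 0, 0, 2] := by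
    linear_combination (3 * H50 - H52 - H53) / 4
  have G12 : c ![1, 0, 2, 1] = c ![2, 0, 0, 2] - c ![2, 0, 2, 0] - c ![0, 0, 2, 2] := by
    linear_combination (3 * H52 - H50 - H53) / 4
  have G13 : c ![1, 0, 1, 2] = c ![2, 0, 2, 0] - c ![2, 0, 0, 2] - c ![0, 0, 2, 2] := by
    linear_combination (3 * H53 - H50 - H52) / 4
  have G20 : c ![2, 1, 0, 1] = c ![0, 2, 0, 2] - c ![2, 2, 0, 0] - c ![2, 0, 0, 2] := by
    linear_combination (3 * H60 - H61 - H63) / 4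
  have G21 : c ![1, 2, 0, 1] = c ![2, 0, 0, 2] - c ![2, 2, 0, 0] - c ![0, 2, 0, 2] := by
    linear_combination (3 * H61 - H60 - H63) / 4
  have G23 : c ![1, 1, 0, 2] = c ![2, 2, 0, 0] - c ![2, 0, 0, 2] - c ![0, 2, 0, 2] := by
    linear_combination (3 * H63 - H60 - H61) / 4
  have G30 : c ![2, 1, 1, 0] = c ![0, 2, 2, 0] - c ![2, 2, 0, 0] - c ![2, 0, 2, 0] := by
    linear_combination (3 * H70 - H71 - H72) / 4
  have G31 : c ![1, 2, 1, 0] = c ![2, 0, 2, 0] - c ![2, 2, 0, 0] - c ![0, 2, 2, 0] := by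
    linear_combination (3 * H71 - H70 - H72) / 4
  have G32 : c ![1, 1, 2, 0] = c ![2, 2, 0, 0] - c ![2, 0, 2, 0] - c ![0, 2, 2, 0] := by
    linear_combination (3 * H72 - H70 - H71) / 4
  -- `Do` is the derivative transversal to the plane `xₒ = 0`.
  have D0 : c ![1, 1, 1, 1] = 2 * (c ![0, 2, 2, 0] + c ![0, 2, 0, 2] + c ![0, 0, 2, 2]) := by
    linear_combination H40 - G12 - G13 - G21 - G23 - G31 - G32
  have D1 : c ![1, 1, 1, 1] = 2 * (c ![2, 0, 2, 0] + c ![2, 0, 0, 2] + c ![0, 0, 2, 2]) := by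
    linear_combination H51 - G02 - G03 - G20 - G23 - G30 - G32
  have D2 : c ![1, 1, 1, 1] = 2 * (c ![2, 2, 0, 0] + c ![2, 0, 0, 2] + c ![0, 2, 0, 2]) := by
    linear_combination H62 - G01 - G03 - G10 - G13 - G30 - G31
  have D3 : c ![1, 1, 1, 1] = 2 * (c ![2, 2, 0, 0] + c ![2, 0, 2, 0] + c ![0, 2, 2, 0]) := by
    linear_combination H73 - G01 - G02 - G10 - G12 - G20 - G21
  -- By `h₁`, `h₂`, `h₃`, the right-hand side of `D0` is the sum of those of `D1`, `D2`, `D3`.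
  have hd : c ![1, 1, 1, 1] = 0 := by
    linear_combination (D0 - D1 - D2 - D3) / (-2) + 2 * (h₁ + h₂ + h₃)
  have h₄ : c ![0, 0, 2, 2] = 0 := by linear_combination (hd - D1) / 2 - h₂ - h₃
  have h₅ : c ![0, 2, 0, 2] = 0 := by linear_combination (hd - D2) / 2 - h₁ - h₃
  have h₆ : c ![0, 2, 2, 0] = 0 := by linear_combination (hd - D3) / 2 - h₁ - h₂
  simp [hd, h₁, h₂, h₃, h₄, h₅, h₆, H00, H01, H02, H03, H10, H11, H12, H13, H20, H21, H22,
    H23, H30, H31, H32, H33, G01, G02, G03, G10, G12, G13, G20, G21, G23, G30, G31, G32]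

lemma eq_zero_of_basePoint {f : MvPolynomial (Fin 4) ℂ} (hf : f.IsHomogeneous 4)
    (hs : ∀ k l, evalPDeriv (basePoint k) l f = 0) (h₁ : coeff (mon 2 2 0 0) f = 0)
    (h₂ : coeff (mon 2 0 2 0) f = 0) (h₃ : coeff (mon 2 0 0 2) f = 0) : f = 0 := by
  have h := coeff_eq_zero_of_basePoint (fun e => coeff (Finsupp.equivFunOnFinite.symm e) f)
    (fun k l => (evalPDeriv_eq_sum_s5 hf (basePoint k) l).symm.trans (hs k l)) h₁ h₂ h₃
  ext m
  rw [coeff_zero]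
  by_cases hm : m.degree = 4
  · simpa using h m (by rw [Finset.Nat.mem_antidiagonalTuple, ← Finsupp.degree_eq_sum, hm])
  · exact hf.coeff_eq_zero hm

lemma mem_singSpace {p : Fin 8 → Fin 4 → ℂ} {f : MvPolynomial (Fin 4) ℂ} :
    f ∈ SingSpace 3 4 (Set.range p) ∅ ↔
      f.IsHomogeneous 4 ∧ ∀ k l, evalPDeriv (p k) l f = 0 := by
  simp [SingSpace, mem_homogeneousSubmodule]

lemma ten_le_finrank_quadrics :
    10 ≤ Module.finrank ℂ (homogeneousSubmodule (Fin 4) ℂ 2) := by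
  have : Module.Finite ℂ (homogeneousSubmodule (Fin 4) ℂ 2) :=
    Module.Finite.iff_fg.2 (homogeneousSubmodule_fg _ _ _)
  let v : Finset.Nat.antidiagonalTuple 4 2 → homogeneousSubmodule (Fin 4) ℂ 2 := fun e =>
    ⟨monomial (Finsupp.equivFunOnFinite.symm e.1) 1, isHomogeneous_monomial _
      ((Finsupp.degree_eq_sum _).trans (Finset.Nat.mem_antidiagonalTuple.1 e.2))⟩
  have hv : LinearIndependent ℂ v := by
    apply LinearIndependent.of_comp (Submodule.subtype _)
    have := (basisMonomials (Fin 4) ℂ).linearIndependent.comp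
      (fun e : Finset.Nat.antidiagonalTuple 4 2 => Finsupp.equivFunOnFinite.symm e.1)
      (Finsupp.equivFunOnFinite.symm.injective.comp Subtype.val_injective)
    convert this using 1
    ext1 e
    simp [v]
  have hcard : (Finset.Nat.antidiagonalTuple 4 2).card = 10 := by decide +kernel
  simpa only [Fintype.card_coe, hcard] using hv.fintype_card_le_finrank

lemma exists_independent_pair_ker {V N : Type} [AddCommGroup V] [Module ℂ V] [AddCommGroup N]
    [Module ℂ N] [FiniteDimensional ℂ V] [FiniteDimensional ℂ N] (ev : V →ₗ[ℂ] N)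
    (h : Module.finrank ℂ N + 2 ≤ Module.finrank ℂ V) :
    ∃ x y : V, ev x = 0 ∧ ev y = 0 ∧ ∀ a b : ℂ, a • x + b • y = 0 → a = 0 ∧ b = 0 := by
  have hker : 2 ≤ Module.finrank ℂ (LinearMap.ker ev) := by
    have h1 := ev.finrank_range_add_finrank_ker
    have h2 := Submodule.finrank_le (LinearMap.range ev)
    omega
  obtain ⟨g, hg⟩ := exists_linearIndependent_of_le_finrank hker
  refine ⟨g 0, g 1, (g 0).2, (g 1).2, fun a b hab => ?_⟩
  have := Fintype.linearIndependent_iff.1 hg ![a, b] (Subtype.ext (by simpa using hab))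
  exact ⟨this 0, this 1⟩

lemma exists_quadrics (p : Fin 8 → Fin 4 → ℂ) :
    ∃ A B : MvPolynomial (Fin 4) ℂ, A.IsHomogeneous 2 ∧ B.IsHomogeneous 2 ∧
      (∀ k, evalAt (p k) A = 0) ∧ (∀ k, evalAt (p k) B = 0) ∧
      ∀ a b : ℂ, a • A + b • B = 0 → a = 0 ∧ b = 0 := by
  have : Module.Finite ℂ (homogeneousSubmodule (Fin 4) ℂ 2) :=
    Module.Finite.iff_fg.2 (homogeneousSubmodule_fg _ _ _)
  obtain ⟨A, B, hA, hB, hAB⟩ := exists_independent_pair_ker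
    (LinearMap.pi fun k : Fin 8 => evalAt (p k) ∘ₗ (homogeneousSubmodule (Fin 4) ℂ 2).subtype)
    (by rw [Module.finrank_fin_fun]; exact ten_le_finrank_quadrics)
  exact ⟨A, B, A.2, B.2, fun k => congrFun hA k, fun k => congrFun hB k,
    fun a b hab => hAB a b (Subtype.ext hab)⟩

/-- Binary quadratic forms over `ℂ` split into linear factors. -/
lemma exists_binary_factors (a b c : ℂ) :
    ∃ r s u w : ℂ, r * u = a ∧ r * w + s * u = b ∧ s * w = c := by
  by_cases ha : a = 0
  · exact ⟨0, 1, b, c, by simp [ha]⟩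
  · obtain ⟨d, hd⟩ := IsAlgClosed.exists_eq_mul_self (discrim a b c)
    obtain ⟨x, hx⟩ := exists_quadratic_eq_zero ha ⟨d, hd⟩
    exact ⟨1, -x, a, b + a * x, by ring, by ring, by linear_combination -hx⟩

/-- A binary quadratic form evaluated at `A`, `B` is a product of two linear combinations of `A`
and `B`, so it can only be zero if one of these is trivial. -/
lemma linearIndependent_products_s5 {A B : MvPolynomial (Fin 4) ℂ}
    (h : ∀ a b : ℂ, a • A + b • B = 0 → a = 0 ∧ b = 0) :
    LinearIndependent ℂ ![A * A, A * B, B * B] := by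
  rw [Fintype.linearIndependent_iff]
  intro g hg
  obtain ⟨r, s, u, w, h0, h1, h2⟩ := exists_binary_factors (g 0) (g 1) (g 2)
  have hfac : (r • A + s • B) * (u • A + w • B) = 0 := by
    rw [← hg]
    simp only [Fin.sum_univ_three, ← h0, ← h1, ← h2, Matrix.cons_val, smul_eq_C_mul, C_mul, C_add]
    ring
  have : g 0 = 0 ∧ g 1 = 0 ∧ g 2 = 0 := by
    rcases mul_eq_zero.1 hfac with h3 | h3
    · obtain ⟨rfl, rfl⟩ := h _ _ h3
      simp [← h0, ← h1, ← h2]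
    · obtain ⟨rfl, rfl⟩ := h _ _ h3
      simp [← h0, ← h1, ← h2]
  intro i
  fin_cases i
  exacts [this.1, this.2.1, this.2.2]

lemma mul_mem_singSpace {p : Fin 8 → Fin 4 → ℂ} {A B : MvPolynomial (Fin 4) ℂ}
    (hA : A.IsHomogeneous 2) (hB : B.IsHomogeneous 2) (hA₀ : ∀ k, evalAt (p k) A = 0)
    (hB₀ : ∀ k, evalAt (p k) B = 0) : A * B ∈ SingSpace 3 4 (Set.range p) ∅ := by
  refine mem_singSpace.2 ⟨hA.mul hB, fun k l => ?_⟩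
  have h1 := hA₀ k
  have h2 := hB₀ k
  simp only [evalAt, AlgHom.toLinearMap_apply, aeval_eq_eval] at h1 h2
  simp [evalPDeriv, evalAt, aeval_eq_eval, h1, h2]

/-- The functionals on quartics used to detect genericity of eight points: all first partial
derivatives at the points, and the coefficients of `x₀²x₁²`, `x₀²x₂²`, `x₀²x₃²`. -/
noncomputable def probe (t : Fin 8 × Fin 4 → ℂ) :
    homogeneousSubmodule (Fin 4) ℂ 4 →ₗ[ℂ] ((Fin 8 × Fin 4) ⊕ Fin 3 → ℂ) :=
  LinearMap.pi (Sum.elim (fun kl => evalPDeriv (fun j => t (kl.1, j)) kl.2)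
    fun r => lcoeff ℂ (![mon 2 2 0 0, mon 2 0 2 0, mon 2 0 0 2] r)) ∘ₗ Submodule.subtype _

lemma generic_injective_probe : Generic fun t => Function.Injective (probe t) := by
  have : Module.Finite ℂ (homogeneousSubmodule (Fin 4) ℂ 4) :=
    Module.Finite.iff_fg.2 (homogeneousSubmodule_fg _ _ _)
  refine generic_injective probe ?_ (fun kl => basePoint kl.1 kl.2) ?_
  · rintro f (⟨k, l⟩ | r)
    · exact polynomial_evalPDeriv f.1 k l
    · exact ⟨C (lcoeff ℂ (![mon 2 2 0 0, mon 2 0 2 0, mon 2 0 0 2] r) f.1), fun t => by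
        rw [eval_C]; rfl⟩
  · rw [← LinearMap.ker_eq_bot, LinearMap.ker_eq_bot']
    intro f hf
    exact Subtype.ext (eq_zero_of_basePoint f.2 (fun k l => congrFun hf (.inl (k, l)))
      (congrFun hf (.inr 0)) (congrFun hf (.inr 1)) (congrFun hf (.inr 2)))

theorem quartics_singular_at_eight_points :
    Generic (ι := Fin 8 × Fin 4) fun t =>
      let p : Fin 8 → Fin 4 → ℂ := fun i j => t (i, j)
      Module.finrank ℂ (SingSpace 3 4 (Set.range p) ∅) = 3 ∧
      ∀ f ∈ SingSpace 3 4 (Set.range p) ∅,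
        ∃ q₁ q₂ : MvPolynomial (Fin 4) ℂ, q₁.IsHomogeneous 2 ∧ q₂.IsHomogeneous 2 ∧
          (∀ i, evalAt (p i) q₁ = 0) ∧ (∀ i, evalAt (p i) q₂ = 0) ∧ f = q₁ * q₂ := by
  obtain ⟨F, hF, hinj⟩ := generic_injective_probe
  refine ⟨F, hF, fun t ht => ?_⟩
  beta_reduce
  intro p
  obtain ⟨A, B, hA, hB, hA₀, hB₀, hAB⟩ := exists_quadrics p
  let W := SingSpace 3 4 (Set.range p) ∅
  -- The three coefficients in `probe` are injective on `W`, so `W` has dimension at most three.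
  let K : W →ₗ[ℂ] (Fin 3 → ℂ) :=
    LinearMap.pi (fun r => lcoeff ℂ (![mon 2 2 0 0, mon 2 0 2 0, mon 2 0 0 2] r)) ∘ₗ W.subtype
  have hK : Function.Injective K := by
    rw [← LinearMap.ker_eq_bot, LinearMap.ker_eq_bot']
    intro f hf
    obtain ⟨hf4, hfs⟩ := mem_singSpace.1 f.2
    have h0 : (⟨f.1, hf4⟩ : homogeneousSubmodule (Fin 4) ℂ 4) = 0 := by
      refine LinearMap.ker_eq_bot'.1 (LinearMap.ker_eq_bot.2 (hinj t ht)) _ ?_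
      ext (⟨k, l⟩ | r)
      · exact hfs k l
      · exact congrFun hf r
    exact Subtype.ext (congrArg (Submodule.subtype _) h0)
  have : Module.Finite ℂ W := Module.Finite.of_injective K hK
  have hle : Module.finrank ℂ W ≤ 3 := by
    simpa using LinearMap.finrank_le_finrank_of_injective hK
  let v : Fin 3 → W := ![⟨A * A, mul_mem_singSpace hA hA hA₀ hA₀⟩,
    ⟨A * B, mul_mem_singSpace hA hB hA₀ hB₀⟩, ⟨B * B, mul_mem_singSpace hB hB hB₀ hB₀⟩]
  have hv : LinearIndependent ℂ v := by
    apply LinearIndependent.of_comp W.subtype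
    convert linearIndependent_products_s5 hAB using 1
    ext1 i
    fin_cases i <;> rfl
  have h3 : Module.finrank ℂ W = 3 :=
    le_antisymm hle (by simpa using hv.fintype_card_le_finrank)
  refine ⟨h3, fun f hf => ?_⟩
  have hspan := hv.span_eq_top_of_card_eq_finrank (by simp [h3])
  have hmem : (⟨f, hf⟩ : W) ∈ Submodule.span ℂ (Set.range v) := hspan ▸ Submodule.mem_top
  obtain ⟨g, hg⟩ := (Submodule.mem_span_range_iff_exists_fun ℂ).1 hmem
  have hg' : g 0 • (A * A) + g 1 • (A * B) + g 2 • (B * B) = f := by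
    simpa [Fin.sum_univ_three, v] using congrArg Subtype.val hg
  obtain ⟨r, s, u, w, h0, h1, h2⟩ := exists_binary_factors (g 0) (g 1) (g 2)
  refine ⟨r • A + s • B, u • A + w • B, ?_, ?_, fun i => ?_, fun i => ?_, ?_⟩
  · exact (homogeneousSubmodule (Fin 4) ℂ 2).add_mem (Submodule.smul_mem _ r hA)
      (Submodule.smul_mem _ s hB)
  · exact (homogeneousSubmodule (Fin 4) ℂ 2).add_mem (Submodule.smul_mem _ u hA)
      (Submodule.smul_mem _ w hB)
  · rw [map_add, map_smul, map_smul, hA₀, hB₀, smul_zero, smul_zero, add_zero]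
  · rw [map_add, map_smul, map_smul, hA₀, hB₀, smul_zero, smul_zero, add_zero]
  · rw [← hg', ← h0, ← h1, ← h2]
    simp only [smul_eq_C_mul, C_mul, C_add]
    ring
end

section
/- Let n ≥ 1 and set kₙ = ⌈C(n+3,3)/(n+1)⌉. For a generic choice of kₙ − 1 points p₁,…,p_{kₙ−1} ∈ ℂ^{n+1}, the ℂ-vector space of homogeneous cubic polynomials in ℂ[x₀,…,xₙ] that are singular at all of these points has dimension n+1 if n ≢ 2 (mod 3), and dimension (n+1)/3 if n ≡ 2 (mod 3). -/
/-!
By apolarity (Terracini), a family of vectors `p_q` imposes independent singularity conditions on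
cubics exactly when the only relation `∑ q, p_q² · m_q = 0` between linear forms is `m = 0`; this
is `Indep`, with cubics recorded through their polarised coefficients. For such a family the
singular cubics have codimension `s (n + 1)` (`finrank_singSpace`), and `s = kₙ - 1` gives the
asserted dimension. Independence is the injectivity of a matrix whose entries are polynomials in
the points, so it holds generically as soon as one independent family exists
(`generic_injective`, `generic_indep`).

The independent family is built from blocks. Write `n + 1 = 3M + r` with `r ∈ {2, 3, 4}` and split
`ℂ^{n+1}` as `A₀ ⊕ ⋯ ⊕ A_M` with `dim A_i = 3` for `i < M` and `dim A_M = r`. Take, for every pair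
`i < j`, `dim A_j` points of `A_i ⊕ A_j`, and the coordinate vectors of each `A_i` (only one of
them if `dim A_i = 2`). There are `kₙ - 1` of these. Given a relation `∑ q, p_q² · m_q = 0`:

* its component in `A_i ⊗ A_j ⊗ A_l`, `i < j < l`, involves only the points of the three pairs
  inside `{i, j, l}`, and the component of `m` in the third block. These form a square linear
  system (`TripleNondeg`) of size `9 r`, `r` being the size of the last block; if it is
  nondegenerate, `m_q` has no component outside the two blocks of `q`;
* the components in `A_i² ⊗ A_j` and `A_i ⊗ A_j²` then involve only the points of the pair `(i, j)`
  and the coordinate points of the two blocks. Discarding the monomials divisible by the square of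
  a coordinate whose coordinate vector was chosen leaves a system (`PairNondeg`) for the points of
  the pair alone;
* finally the relation `∑ e_s² · m_s = 0` between coordinate vectors is trivial.

Both systems depend only on a triple, respectively a pair, of blocks of sizes `3` and `r`, so their
nondegeneracy for generic parameters reduces to six explicit numerical examples
(`exists_tripleNondeg`, `exists_pairNondeg`). Since finitely many generic conditions can be met
simultaneously, an independent family exists (`exists_indep`).
-/

open MvPolynomial

namespace CubicAH

/-! ### Generic properties -/

theorem Generic.mono {ι : Type} [Fintype ι] {P Q : (ι → ℂ) → Prop} (h : Generic P)
    (hPQ : ∀ t, P t → Q t) : Generic Q :=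
  let ⟨F, hF, hP⟩ := h
  ⟨F, hF, fun t ht => hPQ t (hP t ht)⟩

theorem Generic.exists {ι : Type} [Fintype ι] {P : (ι → ℂ) → Prop} (h : Generic P) :
    ∃ t, P t := by
  obtain ⟨F, hF, hP⟩ := h
  by_contra! hne
  refine hF (MvPolynomial.funext fun t => ?_)
  by_contra ht
  exact hne t (hP t (by simpa using ht))

theorem Generic.and {ι : Type} [Fintype ι] {P Q : (ι → ℂ) → Prop} (hP : Generic P)
    (hQ : Generic Q) : Generic fun t => P t ∧ Q t := by
  obtain ⟨F, hF, hP⟩ := hP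
  obtain ⟨G, hG, hQ⟩ := hQ
  refine ⟨F * G, mul_ne_zero hF hG, fun t ht => ?_⟩
  rw [map_mul] at ht
  exact ⟨hP t (left_ne_zero_of_mul ht), hQ t (right_ne_zero_of_mul ht)⟩

theorem Generic.all {ι : Type} [Fintype ι] {α : Sort*} [Finite α] {P : α → (ι → ℂ) → Prop}
    (h : ∀ a, Generic (P a)) : Generic fun t => ∀ a, P a t := by
  have := Fintype.ofFinite (PLift α)
  choose F hF hP using h
  refine ⟨∏ a : PLift α, F a.down, Finset.prod_ne_zero_iff.2 fun a _ => hF _, fun t ht a => ?_⟩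
  rw [map_prod] at ht
  exact hP a t (Finset.prod_ne_zero_iff.1 ht ⟨a⟩ (Finset.mem_univ _))

/-- `f` is a polynomial function of the parameters. -/
def IsPoly {τ : Type} (f : (τ → ℂ) → ℂ) : Prop :=
  ∃ q : MvPolynomial τ ℂ, ∀ t, eval t q = f t

namespace IsPoly

variable {τ : Type} {f g : (τ → ℂ) → ℂ}

theorem const (c : ℂ) : IsPoly fun _ : τ → ℂ => c := ⟨C c, by simp⟩

theorem coord (a : τ) : IsPoly fun t => t a := ⟨X a, by simp⟩

theorem add (hf : IsPoly f) (hg : IsPoly g) : IsPoly fun t => f t + g t :=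
  let ⟨p, hp⟩ := hf
  let ⟨q, hq⟩ := hg
  ⟨p + q, by simp [hp, hq]⟩

theorem mul (hf : IsPoly f) (hg : IsPoly g) : IsPoly fun t => f t * g t :=
  let ⟨p, hp⟩ := hf
  let ⟨q, hq⟩ := hg
  ⟨p * q, by simp [hp, hq]⟩

theorem sum {α : Type*} {s : Finset α} {f : α → (τ → ℂ) → ℂ} (hf : ∀ a, IsPoly (f a)) :
    IsPoly fun t => ∑ a ∈ s, f a t := by
  choose p hp using hf
  exact ⟨∑ a ∈ s, p a, by simp [hp]⟩

end IsPoly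

/-- A linear map depending polynomially on parameters is injective for generic parameters if it is
injective for one: composing with a left inverse `G` at `t₀`, the determinant of `G ∘ L t` is a
polynomial in `t` that equals `1` at `t₀`. -/
theorem generic_injective {τ : Type} [Fintype τ] {V : Type*} [AddCommGroup V] [Module ℂ V]
    [FiniteDimensional ℂ V] {κ : Type*} [Fintype κ] (L : (τ → ℂ) → V → κ → ℂ)
    (hlin : ∀ t, IsLinearMap ℂ (L t)) (hpoly : ∀ x k, IsPoly fun t => L t x k)
    (h₀ : ∃ t₀, ∀ x, L t₀ x = 0 → x = 0) : Generic fun t => ∀ x, L t x = 0 → x = 0 := by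
  classical
  obtain ⟨t₀, h₀⟩ := h₀
  let Λ : (τ → ℂ) → V →ₗ[ℂ] κ → ℂ := fun t => (hlin t).mk' (L t)
  obtain ⟨G, hG⟩ := (Λ t₀).exists_leftInverse_of_injective (LinearMap.ker_eq_bot'.2 h₀)
  let b := Module.finBasis ℂ V
  have hentry : ∀ i j, IsPoly fun t => LinearMap.toMatrix b b (G ∘ₗ Λ t) i j := by
    intro i j
    have : (fun t => LinearMap.toMatrix b b (G ∘ₗ Λ t) i j) =
        fun t => ∑ k, L t (b j) k * b.repr (G fun l => if k = l then 1 else 0) i := by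
      funext t
      rw [LinearMap.toMatrix_apply, LinearMap.comp_apply, LinearMap.pi_apply_eq_sum_univ G]
      simp [Λ]
    rw [this]
    exact IsPoly.sum fun k => (hpoly _ _).mul (IsPoly.const _)
  choose M hM using hentry
  have hdet : ∀ t, eval t (Matrix.det (Matrix.of M)) = LinearMap.det (G ∘ₗ Λ t) := by
    intro t
    rw [RingHom.map_det, ← LinearMap.det_toMatrix b]
    congr 1
    ext i j
    simp [hM]
  refine ⟨Matrix.det (Matrix.of M), fun h => ?_, fun t ht x hx => ?_⟩
  · have := hdet t₀
    rw [h, hG] at this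
    simp at this
  · rw [hdet] at ht
    have hinj : LinearMap.ker (G ∘ₗ Λ t) = ⊥ := by
      by_contra hne
      exact ht (LinearMap.det_eq_zero_iff_ker_ne_bot.2 hne)
    refine LinearMap.ker_eq_bot'.1 hinj x ?_
    have : Λ t x = 0 := hx
    simp [this]

/-! ### Independence and the dimension of the space of singular cubics -/

/-- The double points supported at the `p q` impose independent conditions on cubics: the only
relation `∑ q, (p q)² · m q = 0` in the third symmetric power is the trivial one. The relation is
written out as the vanishing of all coefficients of the polarised symmetric tensor; equivalently,
the functional `f ↦ ∑ q, ∂_{m q} f (p q)` kills every monomial `x_a x_b x_c`. -/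
def Indep {P σ : Type*} [Fintype P] (p : P → σ → ℂ) : Prop :=
  ∀ m : P → σ → ℂ,
    (∀ a b c, ∑ q, (m q a * p q b * p q c + p q a * m q b * p q c + p q a * p q b * m q c) = 0) →
      m = 0

theorem Indep.reindex {P σ P' σ' : Type*} [Fintype P] [Fintype P'] {p : P → σ → ℂ}
    (h : Indep p) (e : P' ≃ P) (f : σ' ≃ σ) : Indep fun q s => p (e q) (f s) := by
  intro m hm
  have := h (fun q s => m (e.symm q) (f.symm s)) fun a b c => by
    rw [← e.sum_comp]
    simpa using hm (f.symm a) (f.symm b) (f.symm c)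
  funext q s
  simpa using congrFun (congrFun this (e q)) (f s)

theorem generic_indep {P σ : Type} [Fintype P] [Fintype σ] (h : ∃ p : P → σ → ℂ, Indep p) :
    Generic (ι := P × σ) fun t => Indep fun q s => t (q, s) := by
  obtain ⟨p, hp⟩ := h
  refine Generic.mono (generic_injective (τ := P × σ) (V := P → σ → ℂ) (κ := σ × σ × σ)
    (fun t m k => ∑ q, (m q k.1 * t (q, k.2.1) * t (q, k.2.2) +
      t (q, k.1) * m q k.2.1 * t (q, k.2.2) + t (q, k.1) * t (q, k.2.1) * m q k.2.2))
    ?_ ?_ ⟨fun s => p s.1 s.2, ?_⟩) ?_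
  · refine fun t => ⟨fun x y => ?_, fun c x => ?_⟩
    · funext k
      simp only [Pi.add_apply, ← Finset.sum_add_distrib]
      exact Finset.sum_congr rfl fun q _ => by ring
    · funext k
      simp only [Pi.smul_apply, smul_eq_mul, Finset.mul_sum]
      exact Finset.sum_congr rfl fun q _ => by ring
  · intro x k
    exact IsPoly.sum fun q =>
      ((((IsPoly.const _).mul (.coord _)).mul (.coord _)).add
        (((IsPoly.coord _).mul (.const _)).mul (.coord _))).add
        (((IsPoly.coord _).mul (.coord _)).mul (.const _))
  · exact fun x hx => hp x fun a b c => congrFun hx (a, b, c)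
  · exact fun t ht m hm => ht m (funext fun k => hm k.1 k.2.1 k.2.2)

theorem finrank_cubics (n : ℕ) :
    Module.finrank ℂ (homogeneousSubmodule (Fin (n + 1)) ℂ 3) = (n + 3).choose 3 := by
  have hset : {d : Fin (n + 1) →₀ ℕ | d.degree = 3} =
      ((Finset.univ : Finset (Fin (n + 1))).finsuppAntidiag 3 : Set (Fin (n + 1) →₀ ℕ)) := by
    ext d
    simp [Finsupp.degree_eq_sum]
  rw [homogeneousSubmodule_eq_finsupp_supported, hset,
    (AddMonoidAlgebra.supportedEquivFinsupp _).finrank_eq, Module.finrank_finsupp_self,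
    ← Nat.card_eq_fintype_card, Nat.card_coe_set_eq, Set.ncard_coe_finset,
    Finset.card_finsuppAntidiag_nat_eq_choose]
  simp

instance (n : ℕ) : FiniteDimensional ℂ (homogeneousSubmodule (Fin (n + 1)) ℂ 3) :=
  Module.Finite.iff_fg.2 (homogeneousSubmodule_fg _ _ _)

/-- If the points are independent, the map sending a cubic to all its partial derivatives at all
the points is surjective, since a functional vanishing on its range is a relation as in `Indep`
when tested on the monomials `x_a x_b x_c`. -/
theorem finrank_singSpace {n s : ℕ} {p : Fin s → Fin (n + 1) → ℂ} (hp : Indep p) :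
    Module.finrank ℂ (SingSpace n 3 (Set.range p) ∅) + s * (n + 1) = (n + 3).choose 3 := by
  classical
  let H := homogeneousSubmodule (Fin (n + 1)) ℂ 3
  let E : MvPolynomial (Fin (n + 1)) ℂ →ₗ[ℂ] Fin s × Fin (n + 1) → ℂ :=
    LinearMap.pi fun k => evalPDeriv (p k.1) k.2
  have hker : SingSpace n 3 (Set.range p) ∅ = H ⊓ LinearMap.ker E := by
    ext f
    simp only [SingSpace, Submodule.mem_inf, Submodule.mem_iInf, Set.forall_mem_range,
      LinearMap.mem_ker, Set.mem_empty_iff_false, IsEmpty.forall_iff, implies_true, and_true]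
    simp [H, E, funext_iff]
  have hker' : Module.finrank ℂ (SingSpace n 3 (Set.range p) ∅) =
      Module.finrank ℂ (LinearMap.ker (E.domRestrict H)) := by
    rw [hker, LinearMap.ker_domRestrict, ← Submodule.finrank_map_subtype_eq,
      Submodule.map_comap_subtype]
  have hsurj : LinearMap.range (E.domRestrict H) = ⊤ := by
    by_contra hne
    obtain ⟨φ, hφ, hle⟩ := Submodule.exists_le_ker_of_lt_top _ (lt_top_iff_ne_top.2 hne)
    let m : Fin s → Fin (n + 1) → ℂ := fun q i => φ fun k => if (q, i) = k then 1 else 0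
    have hφm : ∀ x, φ x = ∑ q, ∑ i, x (q, i) * m q i := by
      intro x
      rw [LinearMap.pi_apply_eq_sum_univ φ, Fintype.sum_prod_type]
      simp [m]
    have hm : m = 0 := by
      refine hp m fun a b c => ?_
      have hmem : (X a * X b * X c : MvPolynomial (Fin (n + 1)) ℂ) ∈ H :=
        ((isHomogeneous_X ℂ a).mul (isHomogeneous_X ℂ b)).mul (isHomogeneous_X ℂ c)
      have h0 : φ (E (X a * X b * X c)) = 0 := hle ⟨⟨_, hmem⟩, rfl⟩
      rw [hφm] at h0
      rw [← h0]
      refine Finset.sum_congr rfl fun q _ => ?_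
      simp [E, evalPDeriv, evalAt, pderiv_X, Pi.single_apply, add_mul, mul_add,
        Finset.sum_add_distrib, apply_ite (eval (p q)), ite_mul]
      ring
    exact hφ (LinearMap.ext fun x => by simp [hφm, hm])
  have := (E.domRestrict H).finrank_range_add_finrank_ker
  rw [hsurj, finrank_top, ← hker', finrank_cubics] at this
  simp at this
  omega

/-! ### The block configuration -/

/-- Nondegeneracy of the system coming from the component of a relation in `A₁ ⊗ A₂ ⊗ A₃`, for
blocks of sizes `d₁, d₂, d₃`. The points of the pair `(i, j)` are `u_ij k + v_ij k`, with `u_ij k`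
in `A_i`, `v_ij k` in `A_j` and `k < d_j`; the unknowns `x`, `y`, `z` are the components in the
third block of the multipliers of the points of the pairs `(1, 2)`, `(1, 3)`, `(2, 3)`. -/
def TripleNondeg {d₁ d₂ d₃ : ℕ} (u₁₂ : Fin d₂ → Fin d₁ → ℂ) (v₁₂ : Fin d₂ → Fin d₂ → ℂ)
    (u₁₃ : Fin d₃ → Fin d₁ → ℂ) (v₁₃ : Fin d₃ → Fin d₃ → ℂ)
    (u₂₃ : Fin d₃ → Fin d₂ → ℂ) (v₂₃ : Fin d₃ → Fin d₃ → ℂ) : Prop :=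
  ∀ (x : Fin d₂ → Fin d₃ → ℂ) (y : Fin d₃ → Fin d₂ → ℂ) (z : Fin d₃ → Fin d₁ → ℂ),
    (∀ a b c, ∑ k, u₁₂ k a * v₁₂ k b * x k c + ∑ k, u₁₃ k a * v₁₃ k c * y k b +
      ∑ k, u₂₃ k b * v₂₃ k c * z k a = 0) → x = 0 ∧ y = 0 ∧ z = 0

/-- The `b`-th coordinate vector of a block of size `e` is not a point of the configuration: one of
the two coordinate vectors of a block of size `2` is left out. -/
def Missing {e : ℕ} (b : Fin e) : Prop := e = 2 ∧ b.val ≠ 0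

instance {e : ℕ} : DecidablePred (Missing (e := e)) := fun _ => inferInstanceAs (Decidable (_ ∧ _))

/-- Nondegeneracy of the system coming from the components of a relation in `A₁² ⊗ A₂` and
`A₁ ⊗ A₂²`, for blocks of sizes `d`, `e` and points `u k + v k`. The unknowns `x k`, `y k` are the
components in `A₁` and `A₂` of the multiplier of `u k + v k`. Only the coefficients to which the
coordinate points of the two blocks do not contribute are used. -/
def PairNondeg {d e : ℕ} (u : Fin e → Fin d → ℂ) (v : Fin e → Fin e → ℂ) : Prop :=
  ∀ (x : Fin e → Fin d → ℂ) (y : Fin e → Fin e → ℂ),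
    (∀ a a' b, a ≠ a' ∨ Missing a → ∑ k, (x k a * u k a' * v k b + u k a * x k a' * v k b +
      u k a * u k a' * y k b) = 0) →
    (∀ a b b', b ≠ b' ∨ Missing b → ∑ k, (x k a * v k b * v k b' + u k a * y k b * v k b' +
      u k a * v k b * y k b') = 0) → x = 0 ∧ y = 0

section Configuration

variable {I : Type} [LinearOrder I] (d : I → ℕ)

/-- The coordinates of the direct sum of the blocks, block `i` having size `d i`. -/
abbrev Coord : Type := Σ i, Fin (d i)

/-- Indices of the points attached to pairs of blocks: `d j` of them for each `i < j`. -/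
abbrev PairPt : Type := Σ q : {q : I × I // q.1 < q.2}, Fin (d q.1.2)

/-- Indices of the coordinate vectors that belong to the configuration. -/
abbrev CoordPt : Type := {s : Coord d // ¬ Missing s.2}

/-- Indices of all points of the configuration. -/
abbrev Pt : Type := PairPt d ⊕ CoordPt d

variable {d}

/-- The index of the `k`-th point of the pair `(i, j)`. -/
def pairPt {i j : I} (h : i < j) (k : Fin (d j)) : PairPt d := ⟨⟨(i, j), h⟩, k⟩

/-- The points of the configuration. The parameter `w` prescribes the coordinates of a pair point
on its two blocks; its values at coordinates of other blocks play no role. -/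
def pt (w : PairPt d × Coord d → ℂ) : Pt d → Coord d → ℂ
  | .inl q, s => if s.1 = q.1.1.1 ∨ s.1 = q.1.1.2 then w (q, s) else 0
  | .inr s₀, s => if s = s₀ then 1 else 0

theorem pt_coord_mul (w : PairPt d × Coord d → ℂ) {i : I} {a a' : Fin (d i)}
    (h : a ≠ a' ∨ Missing a) (s : CoordPt d) :
    pt w (.inr s) ⟨i, a⟩ * pt w (.inr s) ⟨i, a'⟩ = 0 := by
  obtain ⟨s, hs⟩ := s
  by_cases h1 : (⟨i, a⟩ : Coord d) = s
  · subst h1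
    have : a' ≠ a := (h.resolve_right hs).symm
    simp [pt, this]
  · simp [pt, h1]

variable [Fintype I]

/-- Only the points of the pair `(i, j)` have nonzero coordinates in both block `i` and
block `j`. -/
theorem sum_pt (w : PairPt d × Coord d → ℂ) {i j : I} (h : i < j) (a : Fin (d i)) (b : Fin (d j))
    (g : Pt d → ℂ) : ∑ q, pt w q ⟨i, a⟩ * pt w q ⟨j, b⟩ * g q =
      ∑ k, w (pairPt h k, ⟨i, a⟩) * w (pairPt h k, ⟨j, b⟩) * g (.inl (pairPt h k)) := by
  rw [Fintype.sum_sum_type, Fintype.sum_sigma, Fintype.sum_eq_single ⟨(i, j), h⟩,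
    Finset.sum_eq_zero (s := (Finset.univ : Finset (CoordPt d))), add_zero]
  · exact Finset.sum_congr rfl fun k _ => by simp [pt, pairPt]
  · rintro ⟨s, hs⟩ -
    by_cases h1 : (⟨i, a⟩ : Coord d) = s
    · have h2 : (⟨j, b⟩ : Coord d) ≠ s := by
        rintro rfl
        exact h.ne (congrArg Sigma.fst h1)
      simp [pt, h2]
    · simp [pt, h1]
  · rintro ⟨⟨i', j'⟩, h'⟩ hne
    refine Finset.sum_eq_zero fun k _ => ?_
    have : ¬ ((i = i' ∨ i = j') ∧ (j = i' ∨ j = j')) := by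
      rintro ⟨rfl | rfl, rfl | rfl⟩
      · exact h.false
      · exact hne rfl
      · exact h.asymm h'
      · exact h.false
    by_cases h1 : i = i' ∨ i = j'
    · have h2 : ¬ (j = i' ∨ j = j') := fun h2 => this ⟨h1, h2⟩
      simp [pt, h2]
    · simp [pt, h1]

/-- If the triple and pair systems are nondegenerate, the configuration is independent. The
components of the multipliers are shown to vanish in the order: pair points outside their two
blocks, pair points inside them, coordinate points. -/
theorem indep_pt (w : PairPt d × Coord d → ℂ)
    (hT : ∀ (i j l : I) (hij : i < j) (hjl : j < l), TripleNondeg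
      (fun k a => w (pairPt hij k, ⟨i, a⟩)) (fun k b => w (pairPt hij k, ⟨j, b⟩))
      (fun k a => w (pairPt (hij.trans hjl) k, ⟨i, a⟩))
      (fun k c => w (pairPt (hij.trans hjl) k, ⟨l, c⟩))
      (fun k b => w (pairPt hjl k, ⟨j, b⟩)) (fun k c => w (pairPt hjl k, ⟨l, c⟩)))
    (hP : ∀ (i j : I) (h : i < j), PairNondeg
      (fun k a => w (pairPt h k, ⟨i, a⟩)) (fun k b => w (pairPt h k, ⟨j, b⟩))) :
    Indep (pt w) := by
  intro m hm
  have hm' : ∀ a b c, ∑ q, pt w q b * pt w q c * m q a + ∑ q, pt w q a * pt w q c * m q b +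
      ∑ q, pt w q a * pt w q b * m q c = 0 := by
    intro a b c
    rw [← hm a b c, ← Finset.sum_add_distrib, ← Finset.sum_add_distrib]
    exact Finset.sum_congr rfl fun q _ => by ring
  -- The triple systems kill the components of `m` outside the two blocks of a pair point.
  have hout : ∀ (q : PairPt d) (s : Coord d), s.1 ≠ q.1.1.1 → s.1 ≠ q.1.1.2 →
      m (.inl q) s = 0 := by
    have key : ∀ (i j l : I) (hij : i < j) (hjl : j < l),
        (∀ k c, m (.inl (pairPt hij k)) ⟨l, c⟩ = 0) ∧
        (∀ k b, m (.inl (pairPt (hij.trans hjl) k)) ⟨j, b⟩ = 0) ∧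
        (∀ k a, m (.inl (pairPt hjl k)) ⟨i, a⟩ = 0) := by
      intro i j l hij hjl
      obtain ⟨hx, hy, hz⟩ := hT i j l hij hjl
        (fun k c => m (.inl (pairPt hij k)) ⟨l, c⟩)
        (fun k b => m (.inl (pairPt (hij.trans hjl) k)) ⟨j, b⟩)
        (fun k a => m (.inl (pairPt hjl k)) ⟨i, a⟩) fun a b c => by
          have := hm' ⟨i, a⟩ ⟨j, b⟩ ⟨l, c⟩
          rw [sum_pt w hjl, sum_pt w (hij.trans hjl), sum_pt w hij] at this
          linear_combination this
      exact ⟨fun k c => congrFun (congrFun hx k) c, fun k b => congrFun (congrFun hy k) b,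
        fun k a => congrFun (congrFun hz k) a⟩
    rintro ⟨⟨⟨i, j⟩, hij⟩, k⟩ ⟨l, c⟩ hi hj
    simp only at hi hj hij
    rcases lt_or_gt_of_ne hi with h | h
    · exact (key l i j h hij).2.2 k c
    rcases lt_or_gt_of_ne hj with hl | hl
    · exact (key i l j h hl).2.1 k c
    · exact (key i j l hij hl).1 k c
  -- With these components gone, two coordinates of one block and one of another again single out
  -- the points of one pair, provided no coordinate point contributes.
  have hsame : ∀ (i j : I) (h : i < j) (l o : I) (hlo : l = i ∧ o = j ∨ l = j ∧ o = i)
      (a a' : Fin (d l)) (b : Fin (d o)), a ≠ a' ∨ Missing a →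
      ∑ q, pt w q ⟨l, a⟩ * pt w q ⟨l, a'⟩ * m q ⟨o, b⟩ =
      ∑ k, w (pairPt h k, ⟨l, a⟩) * w (pairPt h k, ⟨l, a'⟩) * m (.inl (pairPt h k)) ⟨o, b⟩ := by
    intro i j h l o hlo a a' b haa
    have hl : l = i ∨ l = j := hlo.imp And.left And.left
    rw [Fintype.sum_sum_type, Fintype.sum_sigma, Fintype.sum_eq_single ⟨(i, j), h⟩,
      Finset.sum_eq_zero (s := (Finset.univ : Finset (CoordPt d))), add_zero]
    · exact Finset.sum_congr rfl fun k _ => by simp [pt, pairPt, hl]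
    · intro s _
      rw [pt_coord_mul w haa, zero_mul]
    · rintro ⟨⟨i', j'⟩, h'⟩ hne
      refine Finset.sum_eq_zero fun k _ => ?_
      by_cases h1 : l = i' ∨ l = j'
      · rw [hout, mul_zero]
        all_goals
          simp only at h' ⊢
          rintro rfl
          rcases hlo with ⟨rfl, rfl⟩ | ⟨rfl, rfl⟩ <;> rcases h1 with rfl | rfl <;>
            first
            | exact hne rfl
            | exact lt_irrefl _ h
            | exact lt_irrefl _ h'
            | exact lt_asymm h h'
      · simp [pt, h1]
  -- The pair systems kill the components inside the two blocks.
  have hin : ∀ (i j : I) (h : i < j), (∀ k a, m (.inl (pairPt h k)) ⟨i, a⟩ = 0) ∧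
      ∀ k b, m (.inl (pairPt h k)) ⟨j, b⟩ = 0 := by
    intro i j h
    obtain ⟨hx, hy⟩ := hP i j h (fun k a => m (.inl (pairPt h k)) ⟨i, a⟩)
      (fun k b => m (.inl (pairPt h k)) ⟨j, b⟩)
      (fun a a' b haa => by
        have := hm' ⟨i, a⟩ ⟨i, a'⟩ ⟨j, b⟩
        rw [sum_pt w h, sum_pt w h, hsame i j h i j (.inl ⟨rfl, rfl⟩) a a' b haa,
          ← Finset.sum_add_distrib, ← Finset.sum_add_distrib] at this
        rw [← this]
        exact Finset.sum_congr rfl fun k _ => by ring)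
      (fun a b b' hbb => by
        have := hm' ⟨i, a⟩ ⟨j, b⟩ ⟨j, b'⟩
        rw [sum_pt w h, sum_pt w h, hsame i j h j i (.inr ⟨rfl, rfl⟩) b b' a hbb,
          ← Finset.sum_add_distrib, ← Finset.sum_add_distrib] at this
        rw [← this]
        exact Finset.sum_congr rfl fun k _ => by ring)
    exact ⟨fun k a => congrFun (congrFun hx k) a, fun k b => congrFun (congrFun hy k) b⟩
  have hpair : ∀ q : PairPt d, m (.inl q) = 0 := by
    rintro q
    funext s
    by_cases h1 : s.1 = q.1.1.1
    · obtain ⟨⟨⟨i, j⟩, hij⟩, k⟩ := q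
      obtain ⟨l, a⟩ := s
      obtain rfl : l = i := h1
      exact (hin l j hij).1 k a
    by_cases h2 : s.1 = q.1.1.2
    · obtain ⟨⟨⟨i, j⟩, hij⟩, k⟩ := q
      obtain ⟨l, a⟩ := s
      obtain rfl : l = j := h2
      exact (hin i l hij).2 k a
    · exact hout q s h1 h2
  funext q s
  rcases q with q | s₀
  · rw [hpair]
    rfl
  -- What is left is a relation between squares of distinct coordinate vectors.
  have hcoord : ∀ (s₀ : CoordPt d) (a b c : Coord d), a = s₀ →
    ∑ q, pt w q a * pt w q b * m q c = if b = s₀ then m (.inr s₀) c else 0 := by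
    rintro s₀ a b c rfl
    rw [Fintype.sum_sum_type, Fintype.sum_eq_single s₀, Finset.sum_eq_zero, zero_add]
    · simp [pt]
    · intro q _
      simp [hpair]
    · intro s₁ hne
      have : ¬ s₀.1 = s₁.1 := fun h => hne (Subtype.ext h.symm)
      simp [pt, this]
  have := hm' s₀ s₀ s
  rw [hcoord s₀ s₀ s s₀ rfl, hcoord s₀ s₀ s₀ s rfl] at this
  by_cases hs : s = s₀
  · subst hs
    simp at this
    simpa [two_mul] using (by linear_combination this / 3 : m (.inr s₀) s₀ = 0)
  · simpa [hs] using this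

end Configuration
/-! ### Nondegenerate examples of the local systems -/

/-- The examples are chosen sparse enough for the system to be solved by successively finding
equations with a single remaining unknown. -/
theorem exists_tripleNondeg {d₁ d₂ d₃ : ℕ} (h₁ : d₁ = 3) (h₂ : d₂ = 3)
    (h₃ : d₃ = 2 ∨ d₃ = 3 ∨ d₃ = 4) :
    ∃ u₁₂ v₁₂ u₁₃ v₁₃ u₂₃ v₂₃, TripleNondeg (d₁ := d₁) (d₂ := d₂) (d₃ := d₃)
      u₁₂ v₁₂ u₁₃ v₁₃ u₂₃ v₂₃ := by
  subst h₁ h₂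
  rcases h₃ with rfl | rfl | rfl
  · refine ⟨!![0, 1, -1; 0, 0, 1; -1, 0, 1], !![0, 1, 0; 1, -1, 0; 0, 0, 1],
      !![0, 1, 0; 1, 0, 0], !![0, 1; 0, 1], !![0, 1, 1; 1, 0, 0], !![1, 0; 1, 0],
      fun x y z h => ?_⟩
    simp [Fin.forall_fin_succ, Fin.sum_univ_succ, funext_iff] at h ⊢
    grind
  · refine ⟨!![0, 1, 1; 0, 0, 1; 1, 0, 0], !![0, 1, 0; 1, 1, 0; 1, 0, 0],
      !![0, 1, 0; 1, 1, 0; 1, 0, 1], !![-1, 1, 0; 0, 1, -1; -1, 0, 0],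
      !![0, 0, 1; -1, 0, 1; 0, 1, 1], !![1, 0, 1; 0, 0, 1; 0, 1, 0], fun x y z h => ?_⟩
    simp [Fin.forall_fin_succ, Fin.sum_univ_succ, funext_iff] at h ⊢
    grind
  · refine ⟨!![0, 0, 1; 1, 0, 0; 1, 1, 0], !![1, 1, 0; -1, 0, 1; 1, 0, 0],
      !![1, 0, 1; 1, 0, 1; 0, 1, 0; 0, 1, 0],
      !![0, 1, 0, 0; 1, 0, 0, 0; 0, 1, 0, 0; 1, 0, 0, 0],
      !![0, 1, 0; 0, 0, 1; 0, 0, 1; 0, 1, 0],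
      !![0, 0, 0, 1; 0, 0, 1, 0; 0, 0, 0, -1; 0, 0, -1, 0], fun x y z h => ?_⟩
    simp [Fin.forall_fin_succ, Fin.sum_univ_succ, funext_iff] at h ⊢
    grind

theorem exists_pairNondeg {d e : ℕ} (h : d = 3) (h' : e = 2 ∨ e = 3 ∨ e = 4) :
    ∃ u v, PairNondeg (d := d) (e := e) u v := by
  subst h
  rcases h' with rfl | rfl | rfl
  · refine ⟨!![1, 1, 0; 0, 1, 1], !![1, 1; 0, 1], fun x y h h' => ?_⟩
    simp [Missing, Fin.forall_fin_succ, Fin.sum_univ_succ, funext_iff] at h h' ⊢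
    grind
  · refine ⟨!![1, 0, -1; 1, 1, 0; 0, -1, 1], !![1, 0, -1; 0, 1, 1; 1, 1, 0], fun x y h h' => ?_⟩
    simp [Missing, Fin.forall_fin_succ, Fin.sum_univ_succ, funext_iff] at h h' ⊢
    grind
  · refine ⟨!![0, 1, -1; -1, 0, -1; 0, 1, 1; 1, 0, -1],
      !![1, 0, 1, 0; 0, 0, 1, -1; 0, -1, 0, 1; 1, -1, 0, 0], fun x y h₁ h₂ => ?_⟩
    -- Both families are symmetric in the two coordinates of one block, so half of them suffice.
    replace h₁ := fun a a' b (hlt : a < a') => h₁ a a' b (.inl hlt.ne)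
    replace h₂ := fun a b b' (hlt : b < b') => h₂ a b b' (.inl hlt.ne)
    simp [Fin.forall_fin_succ, Fin.sum_univ_succ, funext_iff] at h₁ h₂ ⊢
    grind

/-! ### Existence of an independent configuration -/

theorem generic_tripleNondeg {τ : Type} [Fintype τ] {d₁ d₂ d₃ : ℕ}
    (p₁₂ : Fin d₂ → Fin d₁ → τ) (q₁₂ : Fin d₂ → Fin d₂ → τ)
    (p₁₃ : Fin d₃ → Fin d₁ → τ) (q₁₃ : Fin d₃ → Fin d₃ → τ)
    (p₂₃ : Fin d₃ → Fin d₂ → τ) (q₂₃ : Fin d₃ → Fin d₃ → τ)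
    (h : ∃ t : τ → ℂ, TripleNondeg (fun k a => t (p₁₂ k a)) (fun k a => t (q₁₂ k a))
      (fun k a => t (p₁₃ k a)) (fun k a => t (q₁₃ k a))
      (fun k a => t (p₂₃ k a)) (fun k a => t (q₂₃ k a))) :
    Generic fun t : τ → ℂ => TripleNondeg (fun k a => t (p₁₂ k a)) (fun k a => t (q₁₂ k a))
      (fun k a => t (p₁₃ k a)) (fun k a => t (q₁₃ k a))
      (fun k a => t (p₂₃ k a)) (fun k a => t (q₂₃ k a)) := by
  obtain ⟨t₀, h₀⟩ := h
  refine Generic.mono (generic_injective (τ := τ)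
    (V := (Fin d₂ → Fin d₃ → ℂ) × (Fin d₃ → Fin d₂ → ℂ) × (Fin d₃ → Fin d₁ → ℂ))
    (κ := Fin d₁ × Fin d₂ × Fin d₃)
    (fun t m i => ∑ k, t (p₁₂ k i.1) * t (q₁₂ k i.2.1) * m.1 k i.2.2 +
      ∑ k, t (p₁₃ k i.1) * t (q₁₃ k i.2.2) * m.2.1 k i.2.1 +
      ∑ k, t (p₂₃ k i.2.1) * t (q₂₃ k i.2.2) * m.2.2 k i.1)
    (fun t => ⟨fun x y => ?_, fun c x => ?_⟩) (fun x i => ?_) ⟨t₀, fun m hm => ?_⟩) ?_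
  · funext i
    simp only [Pi.add_apply, Prod.fst_add, Prod.snd_add, mul_add, Finset.sum_add_distrib]
    ring
  · funext i
    simp only [Pi.smul_apply, Prod.smul_fst, Prod.smul_snd, smul_eq_mul, mul_add, Finset.mul_sum,
      mul_left_comm]
  · exact ((IsPoly.sum fun k => ((IsPoly.coord _).mul (.coord _)).mul (.const _)).add
      (IsPoly.sum fun k => ((IsPoly.coord _).mul (.coord _)).mul (.const _))).add
      (IsPoly.sum fun k => ((IsPoly.coord _).mul (.coord _)).mul (.const _))
  · obtain ⟨hx, hy, hz⟩ := h₀ m.1 m.2.1 m.2.2 fun a b c => congrFun hm (a, b, c)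
    exact Prod.ext hx (Prod.ext hy hz)
  · intro t ht x y z hxyz
    have := ht (x, y, z) (funext fun i => hxyz i.1 i.2.1 i.2.2)
    simpa using this

theorem generic_pairNondeg {τ : Type} [Fintype τ] {d e : ℕ}
    (p : Fin e → Fin d → τ) (q : Fin e → Fin e → τ)
    (h : ∃ t : τ → ℂ, PairNondeg (fun k a => t (p k a)) (fun k a => t (q k a))) :
    Generic fun t : τ → ℂ => PairNondeg (fun k a => t (p k a)) (fun k a => t (q k a)) := by
  obtain ⟨t₀, h₀⟩ := h
  refine Generic.mono (generic_injective (τ := τ)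
    (V := (Fin e → Fin d → ℂ) × (Fin e → Fin e → ℂ))
    (κ := {i : Fin d × Fin d // i.1 ≠ i.2 ∨ Missing i.1} × Fin e ⊕
      Fin d × {i : Fin e × Fin e // i.1 ≠ i.2 ∨ Missing i.1})
    (fun t m i => match i with
      | .inl (⟨(a, a'), _⟩, b) => ∑ k, (m.1 k a * t (p k a') * t (q k b) +
          t (p k a) * m.1 k a' * t (q k b) + t (p k a) * t (p k a') * m.2 k b)
      | .inr (a, ⟨(b, b'), _⟩) => ∑ k, (m.1 k a * t (q k b) * t (q k b') +
          t (p k a) * m.2 k b * t (q k b') + t (p k a) * t (q k b) * m.2 k b'))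
    (fun t => ⟨fun x y => ?_, fun c x => ?_⟩) (fun x i => ?_) ⟨t₀, fun m hm => ?_⟩) ?_
  · funext i
    rcases i with ⟨⟨⟨a, a'⟩, _⟩, b⟩ | ⟨a, ⟨⟨b, b'⟩, _⟩⟩ <;>
    · simp only [Pi.add_apply, Prod.fst_add, Prod.snd_add, ← Finset.sum_add_distrib]
      exact Finset.sum_congr rfl fun k _ => by ring
  · funext i
    rcases i with ⟨⟨⟨a, a'⟩, _⟩, b⟩ | ⟨a, ⟨⟨b, b'⟩, _⟩⟩ <;>
    · simp only [Pi.smul_apply, Prod.smul_fst, Prod.smul_snd, smul_eq_mul, Finset.mul_sum]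
      exact Finset.sum_congr rfl fun k _ => by ring
  · rcases i with ⟨⟨⟨a, a'⟩, _⟩, b⟩ | ⟨a, ⟨⟨b, b'⟩, _⟩⟩ <;>
    exact IsPoly.sum fun k => ((((IsPoly.const _).mul (.coord _)).mul (.coord _)).add
      (((IsPoly.coord _).mul (.const _)).mul (.coord _))).add
      (((IsPoly.coord _).mul (.coord _)).mul (.const _))
  · obtain ⟨hx, hy⟩ := h₀ m.1 m.2
      (fun a a' b haa => congrFun hm (.inl (⟨(a, a'), haa⟩, b)))
      (fun a b b' hbb => congrFun hm (.inr (a, ⟨(b, b'), hbb⟩)))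
    exact Prod.ext hx hy
  · intro t ht x y h1 h2
    have := ht (x, y) (funext fun i => by
      rcases i with ⟨⟨⟨a, a'⟩, h⟩, b⟩ | ⟨a, ⟨⟨b, b'⟩, h⟩⟩
      · exact h1 a a' b h
      · exact h2 a b b' h)
    simpa using this

section Configuration

variable {I : Type} [LinearOrder I] {d : I → ℕ}

/-- Extension by zero of a family indexed by `Fin r × Fin s` to `ℕ × ℕ`, which avoids transporting
indices along equalities of block sizes. -/
def extendZero {r s : ℕ} (u : Fin r → Fin s → ℂ) (k a : ℕ) : ℂ :=
  if h : k < r ∧ a < s then u ⟨k, h.1⟩ ⟨a, h.2⟩ else 0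

@[simp]
theorem extendZero_val {r s : ℕ} (u : Fin r → Fin s → ℂ) (k : Fin r) (a : Fin s) :
    extendZero u k a = u k a := by simp [extendZero]

/-- The parameter whose points of the pair `(i, j)` are given by `u` on block `i` and `v` on
block `j`, and which is zero on every other pair. -/
def onPair (i j : I) (u v : ℕ → ℕ → ℂ) (z : PairPt d × Coord d) : ℂ :=
  if z.1.1.1 = (i, j) then
    if z.2.1 = i then u z.1.2 z.2.2 else if z.2.1 = j then v z.1.2 z.2.2 else 0
  else 0

variable [Fintype I]

theorem exists_indep (hd : ∀ i j, i < j → d i = 3) (hd' : ∀ i, d i = 2 ∨ d i = 3 ∨ d i = 4) :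
    ∃ p : Pt d → Coord d → ℂ, Indep p := by
  have hT : Generic fun w : PairPt d × Coord d → ℂ =>
      ∀ (i j l : I) (hij : i < j) (hjl : j < l), TripleNondeg
      (fun k a => w (pairPt hij k, ⟨i, a⟩)) (fun k b => w (pairPt hij k, ⟨j, b⟩))
      (fun k a => w (pairPt (hij.trans hjl) k, ⟨i, a⟩))
      (fun k c => w (pairPt (hij.trans hjl) k, ⟨l, c⟩))
      (fun k b => w (pairPt hjl k, ⟨j, b⟩)) (fun k c => w (pairPt hjl k, ⟨l, c⟩)) := by
    refine Generic.all fun i => Generic.all fun j => Generic.all fun l => Generic.all fun hij =>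
      Generic.all fun hjl => generic_tripleNondeg _ _ _ _ _ _ ?_
    obtain ⟨u₁₂, v₁₂, u₁₃, v₁₃, u₂₃, v₂₃, h⟩ :=
      exists_tripleNondeg (hd i j hij) (hd j l hjl) (hd' l)
    refine ⟨fun z => onPair i j (extendZero u₁₂) (extendZero v₁₂) z +
      onPair i l (extendZero u₁₃) (extendZero v₁₃) z +
      onPair j l (extendZero u₂₃) (extendZero v₂₃) z, ?_⟩
    simpa [onPair, pairPt, hij.ne, hij.ne', hjl.ne, hjl.ne', (hij.trans hjl).ne,
      (hij.trans hjl).ne'] using h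
  have hP : Generic fun w : PairPt d × Coord d → ℂ => ∀ (i j : I) (h : i < j), PairNondeg
      (fun k a => w (pairPt h k, ⟨i, a⟩)) (fun k b => w (pairPt h k, ⟨j, b⟩)) := by
    refine Generic.all fun i => Generic.all fun j => Generic.all fun hij =>
      generic_pairNondeg _ _ ?_
    obtain ⟨u, v, h⟩ := exists_pairNondeg (hd i j hij) (hd' j)
    refine ⟨onPair i j (extendZero u) (extendZero v), ?_⟩
    simpa [onPair, pairPt, hij.ne'] using h
  obtain ⟨w, hw⟩ := Generic.exists (Generic.and hT hP)
  exact ⟨pt w, indep_pt w hw.1 hw.2⟩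

end Configuration

/-! ### Counting -/

/-- The block sizes: `M` blocks of size `3`, followed by one of size `r`. -/
def size (M r : ℕ) (i : Fin (M + 1)) : ℕ := if i = Fin.last M then r else 3

theorem card_coord (M r : ℕ) : Fintype.card (Coord (size M r)) = 3 * M + r := by
  rw [Fintype.card_sigma]
  simp only [Fintype.card_fin]
  simp [size, Fin.sum_univ_castSucc, Fin.castSucc_ne_last, mul_comm]

/-- The number of pair points is `3 M (M - 1) / 2 + M r`, written without division and
subtraction. -/
theorem card_pairPt (M r : ℕ) :
    2 * Fintype.card (PairPt (size M r)) + 3 * M = 3 * M * M + 2 * (M * r) := by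
  have h1 : Fintype.card (PairPt (size M r)) =
      ∑ j : Fin (M + 1), (j : ℕ) * size M r j := by
    rw [Fintype.card_sigma]
    simp only [Fintype.card_fin]
    rw [← Finset.sum_subtype (Finset.univ.filter fun q : Fin (M + 1) × Fin (M + 1) => q.1 < q.2)
      (by simp) (fun q => size M r q.2), Finset.sum_filter, Fintype.sum_prod_type_right]
    refine Finset.sum_congr rfl fun j _ => ?_
    rw [← Finset.sum_filter]
    dsimp only
    rw [Finset.sum_const, smul_eq_mul, Finset.filter_gt_eq_Iio, Fin.card_Iio]
  rw [h1, Fin.sum_univ_castSucc]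
  simp only [size, Fin.castSucc_ne_last, if_false, if_true, Fin.val_last, Fin.val_castSucc]
  rw [← Finset.sum_mul, Fin.sum_univ_eq_sum_range (fun i => i)]
  have := Finset.sum_range_id_mul_two M
  rcases M with _ | M
  · simp
  · simp at this
    nlinarith

theorem card_coordPt (M r : ℕ) :
    Fintype.card (CoordPt (size M r)) = 3 * M + if r = 2 then 1 else r := by
  have h : ∀ e : ℕ, Fintype.card {b : Fin e // ¬ Missing b} = if e = 2 then 1 else e := by
    intro e
    split_ifs with he
    · subst he
      decide
    · simp [Missing, he]
  have e : CoordPt (size M r) ≃ Σ i, {b : Fin (size M r i) // ¬ Missing b} :=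
    { toFun := fun s => ⟨s.1.1, s.1.2, s.2⟩
      invFun := fun s => ⟨⟨s.1, s.2.1⟩, s.2.2⟩
      left_inv := fun _ => rfl
      right_inv := fun _ => rfl }
  rw [Fintype.card_congr e, Fintype.card_sigma]
  simp only [h]
  simp [Fin.sum_univ_castSucc, size, Fin.castSucc_ne_last, mul_comm]

/-- The block configuration has `kₙ - 1` points. For `n ≡ 0 (mod 3)` the last block has size `4` rather than
`1`: with a block of size `1`, spanned by `c`, the points `u + c` and `v + c` of the pairs it forms
with two other blocks would both contribute `u ⊗ v ⊗ c`, and the triple systems would be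
degenerate. -/
theorem exists_indep_fin (n : ℕ) (hn : 1 ≤ n) :
    ∃ s : ℕ, (∃ p : Fin s → Fin (n + 1) → ℂ, Indep p) ∧
      s * (n + 1) + (if n % 3 = 2 then (n + 1) / 3 else n + 1) = (n + 3).choose 3 ∧
      s = ⌈((n + 3).choose 3 : ℚ) / (n + 1)⌉₊ - 1 := by
  obtain ⟨M, r, hr, hM⟩ : ∃ M r, (r = 2 ∨ r = 3 ∨ r = 4) ∧ n + 1 = 3 * M + r := by
    rcases (by omega : n % 3 = 0 ∨ n % 3 = 1 ∨ n % 3 = 2) with h | h | h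
    · exact ⟨n / 3 - 1, 4, by omega, by omega⟩
    · exact ⟨n / 3, 2, by omega, by omega⟩
    · exact ⟨n / 3, 3, by omega, by omega⟩
  have hcp := card_pairPt M r
  have hcc := card_coordPt M r
  set s := Fintype.card (Pt (size M r)) with hs
  have hs' : 2 * s = 3 * M * M + 2 * (M * r) + 3 * M + 2 * if r = 2 then 1 else r := by
    rw [hs, Fintype.card_sum]
    omega
  obtain ⟨p, hp⟩ := exists_indep (d := size M r)
    (fun i j h => if_neg ((h.trans_le (Fin.le_last j)).ne))
    (fun i => by
      unfold size
      split_ifs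
      · exact hr
      · simp)
  have hchoose : 6 * (n + 3).choose 3 = (n + 3) * (n + 2) * (n + 1) := by
    have := Nat.choose_mul_factorial_mul_factorial (show 3 ≤ n + 3 by omega)
    have h2 := Nat.add_one_mul_choose_eq (n + 2) 2
    have h3 := Nat.add_one_mul_choose_eq (n + 1) 1
    simp at h2 h3
    nlinarith
  have hmain : s * (n + 1) + (if n % 3 = 2 then (n + 1) / 3 else n + 1) = (n + 3).choose 3 := by
    rcases hr with rfl | rfl | rfl
    · obtain rfl : n = 3 * M + 1 := by omega
      rw [if_neg (by omega)]
      simp at hs'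
      nlinarith
    · obtain rfl : n = 3 * M + 2 := by omega
      rw [if_pos (by omega), show (3 * M + 2 + 1) / 3 = M + 1 by omega]
      simp at hs'
      nlinarith
    · obtain rfl : n = 3 * M + 3 := by omega
      rw [if_neg (by omega)]
      simp at hs'
      nlinarith
  refine ⟨s, ⟨_, hp.reindex (Fintype.equivFin _).symm
    (Fintype.equivFinOfCardEq ((card_coord M r).trans hM.symm)).symm⟩, hmain, ?_⟩
  have hceil : ⌈((n + 3).choose 3 : ℚ) / (n + 1)⌉₊ = s + 1 := by
    have hpos : (0 : ℚ) < n + 1 := by positivity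
    rw [Nat.ceil_eq_iff (by omega), Nat.add_sub_cancel, lt_div_iff₀ hpos, div_le_iff₀ hpos,
      ← hmain]
    constructor
    · exact_mod_cast (by split_ifs <;> omega)
    · have : s * (n + 1) + (if n % 3 = 2 then (n + 1) / 3 else n + 1) ≤ (s + 1) * (n + 1) := by
        rw [add_one_mul]
        split_ifs <;> omega
      exact_mod_cast this
  omega

end CubicAH

theorem cubics_dimension_at_kn_minus_one (n : ℕ) (hn : 1 ≤ n) :
    Generic (ι := Fin (⌈(Nat.choose (n + 3) 3 : ℚ) / (n + 1)⌉₊ - 1) × Fin (n + 1)) fun t =>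
      let p : Fin (⌈(Nat.choose (n + 3) 3 : ℚ) / (n + 1)⌉₊ - 1) → Fin (n + 1) → ℂ :=
        fun i j => t (i, j)
      Module.finrank ℂ (SingSpace n 3 (Set.range p) ∅) =
        if n % 3 = 2 then (n + 1) / 3 else n + 1 := by
  obtain ⟨s, hp, hdim, rfl⟩ := CubicAH.exists_indep_fin n hn
  refine CubicAH.Generic.mono (CubicAH.generic_indep hp) fun t ht => ?_
  have := CubicAH.finrank_singSpace ht
  dsimp only
  omega
end
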